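/- Let F be an infinite field with char(F) ≠ 2, 3 and let d ≥ 1. Then the maximal degree D_max of elements of a minimal homogeneous system of generators of the algebra of O(3)-invariants of d generic 3×3 matrices equals 6. -/

import Mathlib

open Matrix MvPolynomial

/-- The polynomial ring `R = F[x_{ij}(k)]`, `1 ≤ i,j ≤ 3`, `1 ≤ k ≤ d`. -/
abbrev Rpoly (F : Type) [Field F] (d : ℕ) := MvPolynomial (Fin 3 × Fin 3 × Fin d) F

variable (F : Type) [Field F] (d : ℕ)

/-- The `k`-th generic 3×3 matrix `X_k`. -/
noncomputable def genMat (k : Fin d) : Matrix (Fin 3) (Fin 3) (Rpoly F d) :=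
  Matrix.of fun i j => MvPolynomial.X (i, j, k)

/-- The action of `g` on `R` by simultaneous conjugation: entries of `X_k` are replaced
by the entries of `gᵀ X_k g`. -/
noncomputable def actHom (g : Matrix (Fin 3) (Fin 3) F) : Rpoly F d →ₐ[F] Rpoly F d :=
  MvPolynomial.aeval fun p : Fin 3 × Fin 3 × Fin d =>
    ((g.map (algebraMap F (Rpoly F d)))ᵀ * genMat F d p.2.2 *
      g.map (algebraMap F (Rpoly F d))) p.1 p.2.1

/-- The algebra `R^{O(3)}` of invariants of the orthogonal group. -/
noncomputable def invAlg : Subalgebra F (Rpoly F d) where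
  carrier := {f | ∀ g : Matrix (Fin 3) (Fin 3) F, gᵀ * g = 1 → actHom F d g f = f}
  mul_mem' := by
    intro a b ha hb g hg
    rw [_root_.map_mul, ha g hg, hb g hg]
  add_mem' := by
    intro a b ha hb g hg
    rw [_root_.map_add, ha g hg, hb g hg]
  one_mem' := by
    intro g hg
    exact map_one _
  algebraMap_mem' := by
    intro r g hg
    exact (actHom F d g).commutes r

/-- The ideal of `R^{O(3)}` generated by all homogeneous invariants of positive degree. -/
noncomputable def plusIdeal : Ideal (invAlg F d) :=
  Ideal.span {f | ∃ n : ℕ, 0 < n ∧ MvPolynomial.IsHomogeneous (f : Rpoly F d) n}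

/-- The set of decomposable invariants: elements of `R^{O(3)}` lying in the square of the
ideal generated by all homogeneous invariants of positive degree. -/
noncomputable def decompSet : Set (Rpoly F d) :=
  Subtype.val '' ((plusIdeal F d ^ 2 : Ideal (invAlg F d)) : Set (invAlg F d))

set_option linter.all false
set_option linter.unusedSectionVars false
set_option linter.unusedSimpArgs false
set_option linter.unusedVariables false

namespace P1
section
variable {K : Type*} [Field K] {σ τ M N : Type*} [AddCommMonoid M] [AddCommMonoid N]

lemma whom_aeval (w : σ → M) (w' : τ → N) (T : M →+ N) (y : σ → MvPolynomial τ K)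
    (hy : ∀ s, IsWeightedHomogeneous w' (y s) (T (w s))) {f : MvPolynomial σ K} {e : M}
    (hf : IsWeightedHomogeneous w f e) : IsWeightedHomogeneous w' (aeval y f) (T e) := by
  rw [f.as_sum, map_sum]
  apply IsWeightedHomogeneous.sum
  intro d hd
  rw [aeval_monomial]
  have he : Finsupp.weight w d = e := hf (by simpa using hd)
  have h1 : IsWeightedHomogeneous w' (d.prod fun i k => y i ^ k) (T e) := by
    rw [← he, Finsupp.weight_apply, Finsupp.sum, map_sum]
    apply IsWeightedHomogeneous.prod
    intro s _
    rw [map_nsmul]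
    exact (hy s).pow _
  exact h1.C_mul _

lemma comp_aeval [DecidableEq M] (w : σ → M) (w' : τ → M) (y : σ → MvPolynomial τ K)
    (hy : ∀ s, IsWeightedHomogeneous w' (y s) (w s)) (f : MvPolynomial σ K) (e : M) :
    weightedHomogeneousComponent w' e (aeval y f) = aeval y (weightedHomogeneousComponent w e f) := by
  induction f using MvPolynomial.induction_on' with
  | monomial d a =>
    have h1 : IsWeightedHomogeneous w (monomial d a) (Finsupp.weight w d) :=
      isWeightedHomogeneous_monomial _ _ _ rfl
    have h2 := whom_aeval w w' (AddMonoidHom.id M) y hy h1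
    rw [weightedHomogeneousComponent_of_mem h1, weightedHomogeneousComponent_of_mem h2]
    simp only [AddMonoidHom.id_apply]
    split_ifs <;> simp
  | add p q hp hq => rw [map_add, map_add, map_add, map_add, hp, hq]

lemma comp_mul [DecidableEq M] [IsCancelAdd M] (w : σ → M) {p q : MvPolynomial σ K} {a m : M}
    (hp : IsWeightedHomogeneous w p a) :
    weightedHomogeneousComponent w (a + m) (p * q) = p * weightedHomogeneousComponent w m q := by
  induction q using MvPolynomial.induction_on' with
  | monomial d c =>
    have h1 : IsWeightedHomogeneous w (monomial d c) (Finsupp.weight w d) :=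
      isWeightedHomogeneous_monomial _ _ _ rfl
    rw [weightedHomogeneousComponent_of_mem h1, weightedHomogeneousComponent_of_mem (hp.mul h1)]
    simp only [add_right_inj]
    split_ifs <;> simp
  | add p q hp hq => simp [hp, hq, mul_add]

end

section
variable {K : Type*} [Field K] {ι : Type*} [Fintype ι] [DecidableEq ι]

noncomputable def act (g : Matrix (Fin 2) (Fin 2) K) :
    MvPolynomial (ι × Fin 2) K →ₐ[K] MvPolynomial (ι × Fin 2) K :=
  aeval fun s => ∑ c, C (g s.2 c) * X (s.1, c)

noncomputable def br (i j : ι) : MvPolynomial (ι × Fin 2) K :=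
  X (i, 0) * X (j, 1) - X (i, 1) * X (j, 0)

variable (K ι) in
noncomputable def B : Subalgebra K (MvPolynomial (ι × Fin 2) K) :=
  Algebra.adjoin K (Set.range fun p : ι × ι => br p.1 p.2)

def w (s : ι × Fin 2) : ι → ℕ := Pi.single s.1 1

lemma br_mem (i j : ι) : br i j ∈ B K ι := Algebra.subset_adjoin ⟨(i, j), rfl⟩

lemma act_br (g : Matrix (Fin 2) (Fin 2) K) (i j : ι) : act g (br i j) = C g.det * br i j := by
  simp only [act, br, map_sub, map_mul, aeval_X, Fin.sum_univ_two, det_fin_two]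
  ring

lemma w_br (i j : ι) : IsWeightedHomogeneous w (br (K := K) i j) (Pi.single i 1 + Pi.single j 1) := by
  apply IsWeightedHomogeneous.sub
  · exact (isWeightedHomogeneous_X K w (i, 0)).mul (isWeightedHomogeneous_X K w (j, 1))
  · exact (isWeightedHomogeneous_X K w (i, 1)).mul (isWeightedHomogeneous_X K w (j, 0))

lemma w_act (g : Matrix (Fin 2) (Fin 2) K) (s : ι × Fin 2) :
    IsWeightedHomogeneous w (∑ c, C (g s.2 c) * X (s.1, c) : MvPolynomial (ι × Fin 2) K) (w s) := by
  apply IsWeightedHomogeneous.sum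
  intro c _
  exact (isWeightedHomogeneous_X K w (s.1, c)).C_mul _

lemma scaling {A : Type*} [CommRing A] [Algebra K A] {f : MvPolynomial (ι × Fin 2) K} {e : ι → ℕ}
    (hf : IsWeightedHomogeneous w f e) (c : ι → A) (y : ι × Fin 2 → A) :
    aeval (fun s => c s.1 * y s) f = (∏ i, c i ^ e i) * aeval y f := by
  rw [f.as_sum, map_sum, map_sum, Finset.mul_sum]
  apply Finset.sum_congr rfl
  intro d hd
  have he : Finsupp.weight w d = e := hf (by simpa using hd)
  have he' : ∀ i, d (i, 0) + d (i, 1) = e i := by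
    intro i
    rw [← he, Finsupp.weight_apply, Finsupp.sum_fintype _ _ (by simp), Finset.sum_apply,
      Fintype.sum_prod_type, Finset.sum_eq_single i]
    · simp [w]
    · intro b _ hb
      simp [w, Ne.symm hb]
    · simp
  rw [aeval_monomial, aeval_monomial, Finsupp.prod_fintype _ _ (by simp),
    Finsupp.prod_fintype _ _ (by simp)]
  simp only [mul_pow, Finset.prod_mul_distrib]
  have : ∏ x : ι × Fin 2, c x.1 ^ d x = ∏ i, c i ^ e i := by
    rw [Fintype.prod_prod_type]
    apply Finset.prod_congr rfl
    intro i _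
    simp [← he', pow_add]
  rw [this]; ring

/-- merge variable j into i -/
noncomputable def psi (i j : ι) : MvPolynomial (ι × Fin 2) K →ₐ[K] MvPolynomial (ι × Fin 2) K :=
  aeval fun s => if s.1 = j then X (i, s.2) else X s

def TT (i j : ι) : (ι → ℕ) →+ (ι → ℕ) where
  toFun e k := if k = j then 0 else if k = i then e i + e j else e k
  map_zero' := by ext k; simp
  map_add' a b := by ext k; simp only [Pi.add_apply]; split_ifs <;> omega

lemma w_psi {i j : ι} (hij : i ≠ j) (s : ι × Fin 2) :
    IsWeightedHomogeneous w (if s.1 = j then X (i, s.2) else X s : MvPolynomial (ι × Fin 2) K)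
      (TT i j (w s)) := by
  split_ifs with h
  · convert isWeightedHomogeneous_X K w (i, s.2) using 1
    obtain ⟨k0, c⟩ := s
    simp only at h
    subst h
    ext k
    simp only [TT, w, AddMonoidHom.coe_mk, ZeroHom.coe_mk, Pi.single_apply, if_true, hij, if_false]
    by_cases h1 : k = k0
    · simp [h1, hij.symm]
    · by_cases h2 : k = i <;> simp [h1, h2, hij]
  · convert isWeightedHomogeneous_X K w s using 1
    obtain ⟨k0, c⟩ := s
    simp only at h
    ext k
    simp only [TT, w, AddMonoidHom.coe_mk, ZeroHom.coe_mk, Pi.single_apply]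
    by_cases h1 : k = j
    · simp [h1, Ne.symm h]
    · by_cases h2 : k = i <;> simp [h1, h2, hij, Ne.symm h]

lemma psi_act (g : Matrix (Fin 2) (Fin 2) K) (i j : ι) (f : MvPolynomial (ι × Fin 2) K) :
    psi i j (act g f) = act g (psi i j f) := by
  have : (psi i j).comp (act g) = (act g).comp (psi (K := K) i j) := by
    apply MvPolynomial.algHom_ext
    intro s
    simp only [psi, act, AlgHom.comp_apply, aeval_X, map_sum, map_mul, algHom_C, algebraMap_eq]
    by_cases h : s.1 = j <;> simp [h]
  exact congrArg (fun q => q f) this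

lemma lift_closure {i j : ι} (hij : i ≠ j) (m : MvPolynomial (ι × Fin 2) K)
    (hm : m ∈ Submonoid.closure (Set.range fun p : ι × ι => br (K := K) p.1 p.2)) :
    ∃ e', IsWeightedHomogeneous w m e' ∧ ∀ e : ι → ℕ, TT i j e = e' →
      ∃ P ∈ B K ι, IsWeightedHomogeneous w P e ∧ psi i j P = m := by
  induction hm using Submonoid.closure_induction with
  | mem x hx =>
    obtain ⟨⟨k, l⟩, rfl⟩ := hx
    refine ⟨_, w_br k l, ?_⟩
    intro e he
    have hkj : k ≠ j := by
      rintro rfl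
      have := congrFun he k
      simp [TT] at this
      omega
    have hlj : l ≠ j := by
      rintro rfl
      have := congrFun he l
      simp [TT] at this
    -- candidates
    have key : ∀ k' l' : ι, (k' = k ∨ (k = i ∧ k' = j)) → (l' = l ∨ (l = i ∧ l' = j)) →
        psi i j (br (K := K) k' l') = br k l := by
      intro k' l' hk hl
      simp only [psi, br, map_sub, map_mul, aeval_X]
      rcases hk with rfl | ⟨rfl, rfl⟩ <;> rcases hl with rfl | ⟨rfl, rfl⟩ <;> simp [hkj, hlj]
    have fin : ∀ k' l' : ι, (k' = k ∨ (k = i ∧ k' = j)) → (l' = l ∨ (l = i ∧ l' = j)) →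
        e = Pi.single k' 1 + Pi.single l' 1 → ∃ P ∈ B K ι, IsWeightedHomogeneous w P e ∧ psi i j P = br k l := by
      intro k' l' hk hl h
      exact ⟨br k' l', br_mem _ _, h ▸ w_br _ _, key k' l' hk hl⟩
    have hi := congrFun he i
    have ho : ∀ n, n ≠ i → n ≠ j → e n = (Pi.single k 1 + Pi.single l 1 : ι → ℕ) n := by
      intro n h1 h2
      have := congrFun he n
      simpa [TT, h1, h2] using this
    simp only [TT, AddMonoidHom.coe_mk, ZeroHom.coe_mk, hij, if_false, if_true, Pi.add_apply,
      Pi.single_apply] at hi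
    by_cases hk : k = i <;> by_cases hl : l = i
    · subst hk; subst hl
      simp only [if_true] at hi
      have h3 : e j = 0 ∨ e j = 1 ∨ e j = 2 := by omega
      rcases h3 with h3 | h3 | h3
      · refine fin l l (Or.inl rfl) (Or.inl rfl) ?_
        ext n
        by_cases h1 : n = l
        · subst h1; simp; omega
        · by_cases h2 : n = j
          · subst h2; simp [h1, h3]
          · simp [ho n h1 h2]
      · refine fin l j (Or.inl rfl) (Or.inr ⟨rfl, rfl⟩) ?_
        ext n
        by_cases h1 : n = l
        · subst h1; simp [hij]; omega
        · by_cases h2 : n = j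
          · subst h2; simp [h1, h3]
          · simp [ho n h1 h2, h1, h2]
      · refine fin j j (Or.inr ⟨rfl, rfl⟩) (Or.inr ⟨rfl, rfl⟩) ?_
        ext n
        by_cases h1 : n = l
        · subst h1; simp [hij]; omega
        · by_cases h2 : n = j
          · subst h2; simp [h3]
          · simp [ho n h1 h2, h1, h2]
    · subst hk
      simp only [if_true, Ne.symm hl, if_false] at hi
      have h3 : e j = 0 ∨ e j = 1 := by omega
      rcases h3 with h3 | h3
      · refine fin k l (Or.inl rfl) (Or.inl rfl) ?_
        ext n
        by_cases h1 : n = k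
        · subst h1; simp [Ne.symm hl]; omega
        · by_cases h2 : n = j
          · subst h2; simp [h1, h3, hlj.symm]
          · simp [ho n h1 h2]
      · refine fin j l (Or.inr ⟨rfl, rfl⟩) (Or.inl rfl) ?_
        ext n
        by_cases h1 : n = k
        · subst h1; simp [Ne.symm hl, hij]; omega
        · by_cases h2 : n = j
          · subst h2; simp [h3, hlj.symm]
          · simp [ho n h1 h2, h1, h2]
    · subst hl
      simp only [if_true, Ne.symm hk, if_false] at hi
      have h3 : e j = 0 ∨ e j = 1 := by omega
      rcases h3 with h3 | h3
      · refine fin k l (Or.inl rfl) (Or.inl rfl) ?_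
        ext n
        by_cases h1 : n = l
        · subst h1; simp [Ne.symm hk]; omega
        · by_cases h2 : n = j
          · subst h2; simp [h1, h3, hkj.symm]
          · simp [ho n h1 h2]
      · refine fin k j (Or.inl rfl) (Or.inr ⟨rfl, rfl⟩) ?_
        ext n
        by_cases h1 : n = l
        · subst h1; simp [Ne.symm hk, hij]; omega
        · by_cases h2 : n = j
          · subst h2; simp [h3, hkj.symm]
          · simp [ho n h1 h2, h1, h2]
    · simp only [Ne.symm hk, Ne.symm hl, if_false] at hi
      refine fin k l (Or.inl rfl) (Or.inl rfl) ?_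
      ext n
      by_cases h1 : n = i
      · subst h1; simp [Ne.symm hk, Ne.symm hl]; omega
      · by_cases h2 : n = j
        · subst h2; simp [hkj.symm, hlj.symm]; omega
        · simp [ho n h1 h2]
  | one =>
    refine ⟨0, isWeightedHomogeneous_one K w, ?_⟩
    intro e he
    refine ⟨1, one_mem _, ?_, map_one _⟩
    have : e = 0 := by
      ext n
      have hi := congrFun he i
      have hn := congrFun he n
      simp only [TT, AddMonoidHom.coe_mk, ZeroHom.coe_mk, hij, if_false, if_true, Pi.zero_apply] at hi hn
      by_cases h1 : n = i
      · subst h1; simp; omega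
      · by_cases h2 : n = j
        · subst h2; simp; omega
        · simpa [h1, h2] using hn
    rw [this]; exact isWeightedHomogeneous_one K w
  | mul x y _ _ hx hy =>
    obtain ⟨e1, h1, hx⟩ := hx
    obtain ⟨e2, h2, hy⟩ := hy
    refine ⟨_, h1.mul h2, ?_⟩
    intro e he
    have hi := congrFun he i
    have hj := congrFun he j
    simp only [TT, AddMonoidHom.coe_mk, ZeroHom.coe_mk, hij, if_false, if_true, Pi.add_apply] at hi hj
    have ho : ∀ n, n ≠ i → n ≠ j → e n = e1 n + e2 n := by
      intro n h1 h2
      have := congrFun he n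
      simpa [TT, h1, h2] using this
    let a1 := min (e i) (e1 i)
    obtain ⟨P, hP, wP, pP⟩ := hx (fun n => if n = i then a1 else if n = j then e1 i - a1 else e1 n) (by
      ext n
      simp only [TT, AddMonoidHom.coe_mk, ZeroHom.coe_mk, if_true, hij.symm, if_false]
      split_ifs with g1 g2
      · subst g1; omega
      · subst g2; omega
      · rfl)
    obtain ⟨Q, hQ, wQ, pQ⟩ := hy (fun n => if n = i then e i - a1 else if n = j then e2 i - (e i - a1) else e2 n) (by
      ext n
      simp only [TT, AddMonoidHom.coe_mk, ZeroHom.coe_mk, if_true, hij.symm, if_false]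
      split_ifs with g1 g2
      · subst g1; omega
      · subst g2; omega
      · rfl)
    refine ⟨P * Q, mul_mem hP hQ, ?_, by rw [map_mul, pP, pQ]⟩
    convert wP.mul wQ using 1
    ext n
    simp only [Pi.add_apply]
    split_ifs with g1 g2
    · subst g1; omega
    · subst g2; omega
    · exact ho n g1 g2

lemma lift_B {i j : ι} (hij : i ≠ j) (e : ι → ℕ) (p : MvPolynomial (ι × Fin 2) K) (hp : p ∈ B K ι) :
    ∃ P ∈ B K ι, IsWeightedHomogeneous w P e ∧
      psi i j P = weightedHomogeneousComponent w (TT i j e) p := by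
  have hp' : p ∈ Submodule.span K
      (Submonoid.closure (Set.range fun p : ι × ι => br (K := K) p.1 p.2) : Set _) := by
    rw [← Algebra.adjoin_eq_span]; exact hp
  induction hp' using Submodule.span_induction with
  | mem x hx =>
    obtain ⟨e', h1, h2⟩ := lift_closure hij x hx
    rw [weightedHomogeneousComponent_of_mem h1]
    split_ifs with h
    · exact h2 e h
    · exact ⟨0, zero_mem _, isWeightedHomogeneous_zero K w e, map_zero _⟩
  | zero => exact ⟨0, zero_mem _, isWeightedHomogeneous_zero K w e, by simp⟩
  | add x y hx0 hy0 hx hy =>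
    have cv : ∀ z ∈ Submodule.span K
      (Submonoid.closure (Set.range fun p : ι × ι => br (K := K) p.1 p.2) : Set _), z ∈ B K ι := by
      intro z hz
      rw [← Algebra.adjoin_eq_span] at hz; exact hz
    obtain ⟨P, hP, wP, pP⟩ := hx (cv _ hx0)
    obtain ⟨Q, hQ, wQ, pQ⟩ := hy (cv _ hy0)
    exact ⟨P + Q, add_mem hP hQ, wP.add wQ, by simp [pP, pQ]⟩
  | smul c x hx0 hx =>
    have cv : ∀ z ∈ Submodule.span K
      (Submonoid.closure (Set.range fun p : ι × ι => br (K := K) p.1 p.2) : Set _), z ∈ B K ι := by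
      intro z hz
      rw [← Algebra.adjoin_eq_span] at hz; exact hz
    obtain ⟨P, hP, wP, pP⟩ := hx (cv _ hx0)
    refine ⟨c • P, Subalgebra.smul_mem _ hP c, ?_, by simp [pP]⟩
    rw [smul_eq_C_mul]; exact wP.C_mul c

lemma div_br {i j : ι} (hij : i ≠ j) {e : ι → ℕ} {f : MvPolynomial (ι × Fin 2) K}
    (hf : IsWeightedHomogeneous w f e) (h0 : psi i j f = 0) : br i j ∣ f := by
  let q := Ideal.Quotient.mkₐ K (Ideal.span {br (K := K) i j})
  -- substitute x_j ↦ p_i x_j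
  have h1 := scaling hf (fun k => if k = j then X (i, 0) else 1) (fun s => (X s : MvPolynomial (ι × Fin 2) K))
  have h2 := scaling hf (fun k => if k = j then X (j, 0) else 1)
    (fun s => if s.1 = j then (X (i, s.2) : MvPolynomial (ι × Fin 2) K) else X s)
  have h3 : aeval (fun s : ι × Fin 2 => if s.1 = j then (X (i, s.2) : MvPolynomial (ι × Fin 2) K) else X s) f = 0 := h0
  rw [h3, mul_zero] at h2
  have h4 : q (aeval (fun s : ι × Fin 2 => (if s.1 = j then X (i, 0) else 1) * (X s : MvPolynomial (ι × Fin 2) K)) f)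
    = q (aeval (fun s : ι × Fin 2 => (if s.1 = j then X (j, 0) else 1) * (if s.1 = j then (X (i, s.2) : MvPolynomial (ι × Fin 2) K) else X s)) f) := by
    rw [← AlgHom.comp_apply, ← AlgHom.comp_apply]
    congr 1
    ext ⟨k, c⟩
    simp only [AlgHom.comp_apply, aeval_X]
    by_cases hk : k = j
    · subst hk
      simp only [if_true]
      refine Ideal.Quotient.eq.2 (Ideal.mem_span_singleton.2 ?_)
      fin_cases c
      · simp [mul_comm]
      · refine ⟨1, ?_⟩
        simp [br]; ring
    · simp [hk]
  rw [h1, h2] at h4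
  have h5 : br i j ∣ X (i, 0) ^ e j * f := by
    rw [← Ideal.mem_span_singleton]
    have := Ideal.Quotient.eq.1 h4
    simpa [Finset.prod_ite_eq', ite_pow] using this
  obtain ⟨r, hr⟩ := h5
  have hX : Prime (X (i, 0) : MvPolynomial (ι × Fin 2) K) := X_prime
  have h6 : ¬ (X (i, 0) : MvPolynomial (ι × Fin 2) K) ∣ br i j := by
    rintro ⟨c, hc⟩
    have := congrArg (eval (fun s : ι × Fin 2 => if s = (i, 0) then (0 : K) else 1)) hc
    simp [br, hij.symm] at this
  have h7 : X (i, 0) ^ e j ∣ br i j * r := ⟨f, hr.symm⟩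
  obtain ⟨r', hr'⟩ := hX.pow_dvd_of_dvd_mul_left _ h6 h7
  refine ⟨r', ?_⟩
  have : X (i, 0) ^ e j * f = X (i, 0) ^ e j * (br i j * r') := by rw [hr, hr']; ring
  exact mul_left_cancel₀ (pow_ne_zero _ hX.ne_zero) this

lemma eval_act (g : Matrix (Fin 2) (Fin 2) K) (x : ι × Fin 2 → K) (f : MvPolynomial (ι × Fin 2) K) :
    eval x (act g f) = eval (fun s => ∑ c, g s.2 c * x (s.1, c)) f := by
  rw [act, ← coe_aeval_eq_eval, ← coe_aeval_eq_eval]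
  change (aeval x) (aeval _ f) = _
  rw [← AlgHom.comp_apply]
  change _ = aeval _ f
  congr 1
  ext s
  simp

lemma single_supp [Infinite K] {i : ι} {e : ι → ℕ} (he : ∀ k, k ≠ i → e k = 0) (hi : e i ≠ 0)
    {f : MvPolynomial (ι × Fin 2) K} (hf : IsWeightedHomogeneous w f e)
    (hinv : ∀ g : Matrix (Fin 2) (Fin 2) K, g.det = 1 → act g f = f) : f = 0 := by
  obtain ⟨t, ht⟩ : ∃ t : K, t * (t ^ e i - 1) ≠ 0 := by
    by_contra! h
    have : (Polynomial.X * (Polynomial.X ^ e i - 1) : Polynomial K) = 0 := by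
      apply Polynomial.funext
      intro r; simpa using h r
    rcases mul_eq_zero.1 this with h | h
    · exact Polynomial.X_ne_zero h
    · exact Polynomial.X_pow_sub_C_ne_zero (Nat.pos_of_ne_zero hi) (1 : K) (by simpa using h)
  have ht0 : t ≠ 0 := left_ne_zero_of_mul ht
  have ht1 := right_ne_zero_of_mul ht
  have hsc : ∀ (c : ι → K) (y : ι × Fin 2 → K), eval (fun s => c s.1 * y s) f = c i ^ e i * eval y f := by
    intro c y
    have := scaling hf c y
    rw [Finset.prod_eq_single i (by intro k _ hk; rw [he k hk, pow_zero]) (by simp)] at this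
    simpa [coe_aeval_eq_eval] using this
  suffices h : X (i, 0) * f = 0 by
    exact (mul_eq_zero.1 h).resolve_left (X_ne_zero _)
  apply MvPolynomial.funext
  intro x
  rw [map_mul, eval_X, map_zero]
  by_cases hp : x (i, 0) = 0
  · simp [hp]
  rw [mul_eq_zero]; right
  let x' : ι × Fin 2 → K := fun s => (if s.1 = i then 1 else 0) * x s
  have hx' : eval x' f = eval x f := by
    simpa [x'] using hsc (fun k => if k = i then 1 else 0) x
  let g : Matrix (Fin 2) (Fin 2) K := !![t, 0; (t - t⁻¹) * x (i, 1) / x (i, 0), t⁻¹]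
  have hg : g.det = 1 := by simp [g, det_fin_two, ht0]
  have h1 := eval_act g x' f
  rw [hinv g hg] at h1
  have h2 : (fun s : ι × Fin 2 => ∑ c, g s.2 c * x' (s.1, c)) = fun s => t * x' s := by
    funext ⟨k, c⟩
    by_cases hk : k = i
    · subst hk
      fin_cases c <;> simp [g, x', Fin.sum_univ_two]
      field_simp; ring
    · simp [x', hk]
  rw [h2, hsc (fun _ => t) x', hx'] at h1
  have : (t ^ e i - 1) * eval x f = 0 := by rw [sub_mul, one_mul, ← h1, sub_self]
  exact (mul_eq_zero.1 this).resolve_left ht1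

theorem fft_hom [Infinite K] (N n : ℕ) (e : ι → ℕ) (hN : ∑ i, e i = N)
    (hn : (Finset.univ.filter fun i => e i ≠ 0).card = n) (f : MvPolynomial (ι × Fin 2) K)
    (hf : IsWeightedHomogeneous w f e)
    (hinv : ∀ g : Matrix (Fin 2) (Fin 2) K, g.det = 1 → act g f = f) : f ∈ B K ι := by
  induction N using Nat.strong_induction_on generalizing n e f with
  | _ N IHN =>
  induction n using Nat.strong_induction_on generalizing e f with
  | _ n IHn =>
  by_cases hz : ∃ i, e i ≠ 0
  swap
  · push Not at hz
    have : f = C (coeff 0 f) := by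
      have h := scaling hf (fun _ => (0 : MvPolynomial (ι × Fin 2) K)) X
      simp only [hz, pow_zero, Finset.prod_const_one, one_mul, aeval_X_left_apply, zero_mul] at h
      have h' : f = algebraMap K _ (constantCoeff f) := by
        conv_lhs => rw [← h]
        exact aeval_zero' f
      exact h'
    rw [this]
    exact (B K ι).algebraMap_mem _
  obtain ⟨i, hi⟩ := hz
  by_cases hz2 : ∃ j, j ≠ i ∧ e j ≠ 0
  swap
  · push Not at hz2
    rw [single_supp hz2 hi hf hinv]; exact zero_mem _
  obtain ⟨j, hji, hj⟩ := hz2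
  have hij := hji.symm
  have wpsi : IsWeightedHomogeneous w (psi i j f) (TT i j e) := whom_aeval w w (TT i j) _ (w_psi hij) hf
  have hsum : ∑ k, TT i j e k = N := by
    rw [← hN, ← Finset.add_sum_erase _ _ (Finset.mem_univ i), ← Finset.add_sum_erase _ _ (Finset.mem_univ i),
      ← Finset.add_sum_erase _ _ (show j ∈ Finset.univ.erase i by simp [hji]),
      ← Finset.add_sum_erase _ _ (show j ∈ Finset.univ.erase i by simp [hji])]
    have : ∑ k ∈ (Finset.univ.erase i).erase j, TT i j e k = ∑ k ∈ (Finset.univ.erase i).erase j, e k := by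
      apply Finset.sum_congr rfl
      intro k hk
      simp only [Finset.mem_erase, Finset.mem_univ, and_true] at hk
      simp [TT, hk.1, hk.2]
    rw [this]
    simp [TT, hij]; ring
  have h1 : psi i j f ∈ B K ι := by
    refine IHn _ ?_ (TT i j e) hsum rfl (psi i j f) wpsi (fun g hg => by rw [← psi_act, hinv g hg])
    rw [← hn]
    apply Finset.card_lt_card
    refine Finset.ssubset_iff_subset_ne.2 ⟨?_, ?_⟩
    · intro k hk
      simp only [Finset.mem_filter, Finset.mem_univ, true_and, TT, AddMonoidHom.coe_mk, ZeroHom.coe_mk] at hk ⊢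
      by_cases h1 : k = i
      · subst h1; exact hi
      · by_cases h2 : k = j
        · subst h2; exact hj
        · simpa [h1, h2] using hk
    · intro h
      have : j ∈ Finset.univ.filter fun k => e k ≠ 0 := by simp [hj]
      rw [← h] at this
      simp [TT] at this
  obtain ⟨P, hP, wP, pP⟩ := lift_B hij e _ h1
  rw [wpsi.weightedHomogeneousComponent_same] at pP
  have hPinv : ∀ g : Matrix (Fin 2) (Fin 2) K, g.det = 1 → act g P = P := by
    intro g hg
    have : ∀ p ∈ B K ι, act g p = p := by
      intro p hp
      induction hp using Algebra.adjoin_induction with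
      | mem x hx => obtain ⟨⟨k, l⟩, rfl⟩ := hx; simp [act_br, hg]
      | algebraMap r => exact (act g).commutes r
      | add x y _ _ hx hy => rw [map_add, hx, hy]
      | mul x y _ _ hx hy => rw [map_mul, hx, hy]
    exact this P hP
  obtain ⟨r, hr⟩ := div_br hij (hf.sub wP) (by rw [map_sub, pP, sub_self])
  have hbr : br (K := K) i j ≠ 0 := by
    intro h
    have := congrArg (eval (fun s : ι × Fin 2 => if s = (i, 0) then (0 : K) else 1)) h
    simp [br, hij.symm] at this
  have hrinv : ∀ g : Matrix (Fin 2) (Fin 2) K, g.det = 1 → act g r = r := by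
    intro g hg
    apply mul_left_cancel₀ hbr
    rw [← hr]
    have := congrArg (act g) hr
    rw [map_sub, hinv g hg, hPinv g hg, map_mul, act_br, hg, C_1, one_mul] at this
    exact this.symm
  let e2 : ι → ℕ := fun k => e k - (Pi.single i 1 + Pi.single j 1 : ι → ℕ) k
  have he2 : e = (Pi.single i 1 + Pi.single j 1) + e2 := by
    ext k
    simp only [e2, Pi.add_apply, Pi.single_apply]
    split_ifs with a b b
    · exact absurd (a.symm.trans b) hij
    · subst a; omega
    · subst b; omega
    · omega
  have hr2 : f - P = br i j * weightedHomogeneousComponent w e2 r := by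
    rw [← comp_mul w (w_br i j), ← he2, ← hr, (hf.sub wP).weightedHomogeneousComponent_same]
  have hr3 : r = weightedHomogeneousComponent w e2 r := by
    apply mul_left_cancel₀ hbr; rw [← hr, ← hr2]
  have wr : IsWeightedHomogeneous w r e2 := by
    rw [hr3]; exact weightedHomogeneousComponent_isWeightedHomogeneous e2 r
  have : r ∈ B K ι := by
    refine IHN _ ?_ _ e2 rfl rfl r wr hrinv
    rw [← hN, he2]
    simp only [Pi.add_apply, Finset.sum_add_distrib]
    simp
  have hfin : f = P + br i j * r := by rw [← hr]; ring
  rw [hfin]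
  exact add_mem hP (mul_mem (br_mem i j) this)

theorem fft [Infinite K] (f : MvPolynomial (ι × Fin 2) K)
    (hinv : ∀ g : Matrix (Fin 2) (Fin 2) K, g.det = 1 → act g f = f) : f ∈ B K ι := by
  classical
  rw [← finsum_weightedHomogeneousComponent w f]
  rw [finsum_def]
  split_ifs with h
  · apply sum_mem
    intro e _
    refine fft_hom _ _ e rfl rfl _ (weightedHomogeneousComponent_isWeightedHomogeneous e f) ?_
    intro g hg
    have := comp_aeval w w _ (w_act g) f e
    change _ = act g _ at this
    rw [← this]
    exact congrArg _ (hinv g hg)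
  · exact zero_mem _

end
end P1

namespace StepL
section
variable {K : Type*} [Field K] {A : Type*} [CommRing A] [Algebra K A]

theorem symm_lemma (h2 : (2 : K) ≠ 0) (D : Subalgebra K A) (sg : A →ₐ[K] A) (hD : ∀ x ∈ D, sg x = x)
    (Z : Set A) (h1 : ∀ z ∈ Z, z + sg z ∈ D)
    (h3 : ∀ z ∈ Z, ∀ z' ∈ Z, (z - sg z) * (z' - sg z') ∈ D) (f : A)
    (hf : f ∈ Algebra.adjoin K ((D : Set A) ∪ Z)) (hs : sg f = f) : f ∈ D := by
  let N : Submodule D A := Submodule.span D {x | ∃ z ∈ Z, x = z - sg z}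
  have hNN : ∀ x ∈ N, ∀ y ∈ N, x * y ∈ D := by
    intro x hx y hy
    induction hx using Submodule.span_induction with
    | mem x hx =>
      obtain ⟨z, hz, rfl⟩ := hx
      induction hy using Submodule.span_induction with
      | mem y hy => obtain ⟨z', hz', rfl⟩ := hy; exact h3 z hz z' hz'
      | zero => rw [mul_zero]; exact zero_mem _
      | add a b _ _ ha hb => rw [mul_add]; exact add_mem ha hb
      | smul c a _ ha => rw [mul_smul_comm]; exact mul_mem c.2 ha
    | zero => rw [zero_mul]; exact zero_mem _
    | add a b _ _ ha hb => rw [add_mul]; exact add_mem ha hb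
    | smul c a _ ha => rw [smul_mul_assoc]; exact mul_mem c.2 ha
  have hDN : ∀ x ∈ D, ∀ y ∈ N, x * y ∈ N := fun x hx y hy => N.smul_mem ⟨x, hx⟩ hy
  have hKN : ∀ (c : K), ∀ y ∈ N, c • y ∈ N := by
    intro c y hy
    rw [Algebra.smul_def]; exact hDN _ (D.algebraMap_mem c) _ hy
  have key : ∀ g ∈ Algebra.adjoin K ((D : Set A) ∪ Z), g + sg g ∈ D ∧ g - sg g ∈ N := by
    intro g hg
    have two : ∀ x : A, x = (2 : K)⁻¹ • (x + x) := by
      intro x; rw [← two_smul K x, smul_smul, inv_mul_cancel₀ h2, one_smul]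
    have ofD : ∀ x ∈ D, x + sg x ∈ D ∧ x - sg x ∈ N := by
      intro x hx
      rw [hD x hx, sub_self]
      exact ⟨add_mem hx hx, zero_mem _⟩
    induction hg using Algebra.adjoin_induction with
    | mem x hx =>
      rcases hx with hx | hx
      · exact ofD x hx
      · exact ⟨h1 x hx, Submodule.subset_span ⟨x, hx, rfl⟩⟩
    | algebraMap r => exact ofD _ (D.algebraMap_mem r)
    | add x y _ _ hx hy =>
      rw [map_add]
      constructor
      · have := add_mem hx.1 hy.1
        convert this using 1; ring
      · have := add_mem hx.2 hy.2
        convert this using 1; ring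
    | mul x y _ _ hx hy =>
      rw [map_mul]
      constructor
      · have := D.smul_mem (add_mem (mul_mem hx.1 hy.1) (hNN _ hx.2 _ hy.2)) (2 : K)⁻¹
        convert this using 1
        rw [two (x * y + sg x * sg y)]; congr 1; ring
      · have := hKN (2 : K)⁻¹ _ (add_mem (hDN _ hx.1 _ hy.2) (hDN _ hy.1 _ hx.2))
        convert this using 1
        rw [two (x * y - sg x * sg y)]; congr 1; ring
  have h4 := (key f hf).1
  rw [hs] at h4
  have h5 := D.smul_mem h4 (2 : K)⁻¹
  rwa [← two_smul K f, smul_smul, inv_mul_cancel₀ h2, one_smul] at h5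

lemma exists_t [Infinite K] (s : Finset ℤ) : ∃ t : Kˣ, ∀ k ∈ s, k ≠ 0 → ((t ^ k : Kˣ) : K) ≠ 1 := by
  let P : Polynomial K := Polynomial.X * ∏ k ∈ s, (if k = 0 then 1 else (Polynomial.X ^ k.natAbs - 1))
  have hP : P ≠ 0 := by
    refine mul_ne_zero Polynomial.X_ne_zero (Finset.prod_ne_zero_iff.2 ?_)
    intro k _
    split_ifs with h
    · exact one_ne_zero
    · exact Polynomial.X_pow_sub_C_ne_zero (Int.natAbs_pos.2 h) (1 : K)
  obtain ⟨t, ht⟩ : ∃ t, P.eval t ≠ 0 := by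
    by_contra! h
    exact hP (Polynomial.funext (by simpa using h))
  simp only [P, Polynomial.eval_mul, Polynomial.eval_X, Polynomial.eval_prod] at ht
  have ht0 := left_ne_zero_of_mul ht
  refine ⟨Units.mk0 t ht0, ?_⟩
  intro k hk hk0 h
  have := Finset.prod_ne_zero_iff.1 (right_ne_zero_of_mul ht) k hk
  rw [if_neg hk0] at this
  apply this
  have h' : t ^ k = 1 := by simpa using h
  have : t ^ k.natAbs = 1 := by
    rcases Int.natAbs_eq k with h1 | h1
    · rw [h1, zpow_natCast] at h'; exact h'
    · rw [h1, _root_.zpow_neg, zpow_natCast, inv_eq_one] at h'; exact h'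
  simp [this]

theorem torus_lemma [Infinite K] (T : Kˣ → A →ₐ[K] A) (E : Set A) (f : A) (s : Finset ℤ) (ph : ℤ → A)
    (hf : f = ∑ k ∈ s, ph k) (hph : ∀ t k, T t (ph k) = ((t ^ k : Kˣ) : K) • ph k)
    (hinv : ∀ t, T t f = f) : f = if 0 ∈ s then ph 0 else 0 := by
  obtain ⟨t, ht⟩ := exists_t (K := K) s
  let L : Module.End K A := (T t).toLinearMap
  have hi := Module.End.eigenspaces_iSupIndep L
  have h0 := hi 1
  let g := ∑ k ∈ s.erase 0, ph k
  have hfg : f = (if 0 ∈ s then ph 0 else 0) + g := by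
    split_ifs with h
    · rw [hf, ← Finset.add_sum_erase _ _ h]
    · rw [hf, zero_add]; simp only [g]; rw [Finset.erase_eq_of_notMem h]
  have hz : T t (if 0 ∈ s then ph 0 else 0) = if 0 ∈ s then ph 0 else 0 := by
    split_ifs
    · rw [hph]; simp
    · simp
  have hg : T t g = g := by
    have := hinv t
    rw [hfg, map_add, hz] at this
    exact add_left_cancel this
  have h1 : g ∈ L.eigenspace 1 := by
    rw [Module.End.mem_eigenspace_iff, one_smul]; exact hg
  have h2 : g ∈ ⨆ (j : K) (_ : j ≠ 1), L.eigenspace j := by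
    apply Submodule.sum_mem
    intro k hk
    rw [Finset.mem_erase] at hk
    refine Submodule.mem_iSup_of_mem ((t ^ k : Kˣ) : K) (Submodule.mem_iSup_of_mem (ht k hk.2 hk.1) ?_)
    rw [Module.End.mem_eigenspace_iff]; exact hph t k
  have h3 : g = 0 := by
    have := Submodule.disjoint_def.1 h0 g h1 h2
    exact this
  rw [hfg, h3, add_zero]

variable {n : Type*} [Fintype n] [DecidableEq n]

/-- u w v -/
def bil (x : n → A) (w : Matrix n n A) (y : n → A) : A := x ⬝ᵥ (w *ᵥ y)

def BB (u v : n → A) : Matrix n n A := vecMulVec u v + vecMulVec v u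

lemma vmv_mulVec (u v p : n → A) : vecMulVec u v *ᵥ p = (v ⬝ᵥ p) • u := by
  ext i; simp only [mulVec, vecMulVec_apply, dotProduct, Pi.smul_apply, smul_eq_mul, Finset.sum_mul]
  apply Finset.sum_congr rfl; intros; ring

lemma BB_mulVec (u v p : n → A) : BB u v *ᵥ p = (v ⬝ᵥ p) • u + (u ⬝ᵥ p) • v := by
  rw [BB, add_mulVec, vmv_mulVec, vmv_mulVec]

lemma bil_mulB (x u v p : n → A) (w : Matrix n n A) :
    x ⬝ᵥ ((w * BB u v) *ᵥ p) = bil x w u * (v ⬝ᵥ p) + bil x w v * (u ⬝ᵥ p) := by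
  rw [← mulVec_mulVec, BB_mulVec]
  simp only [mulVec_add, mulVec_smul, dotProduct_add, dotProduct_smul, smul_eq_mul, bil]
  ring

lemma bil_BB (x u v y : n → A) (w w' : Matrix n n A) :
    bil x (w * BB u v * w') y = bil x w u * bil v w' y + bil x w v * bil u w' y := by
  rw [bil, ← mulVec_mulVec, bil_mulB]; rfl

lemma dot_BB (p u v q : n → A) : p ⬝ᵥ (BB u v *ᵥ q) = (u ⬝ᵥ p) * (v ⬝ᵥ q) + (v ⬝ᵥ p) * (u ⬝ᵥ q) := by
  rw [BB_mulVec]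
  simp only [dotProduct_add, dotProduct_smul, smul_eq_mul]
  rw [dotProduct_comm p u, dotProduct_comm p v]
  ring

lemma bil_tr (x y : n → A) (w : Matrix n n A) : bil x wᵀ y = bil y w x := by
  rw [bil, bil, dotProduct_mulVec, vecMul_transpose, dotProduct_comm]

lemma tr_vmv (w : Matrix n n A) (u v : n → A) : (w * vecMulVec u v).trace = bil v w u := by
  simp only [trace, diag_apply, mul_apply, vecMulVec_apply, bil, dotProduct, mulVec, Finset.mul_sum]
  apply Finset.sum_congr rfl; intro i _; apply Finset.sum_congr rfl; intros; ring

lemma tr_BB (w : Matrix n n A) (u v : n → A) : (w * BB u v).trace = bil u w v + bil v w u := by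
  rw [BB, mul_add, trace_add, tr_vmv, tr_vmv, add_comm]

section step
variable (u v : n → A) (W : Set (Matrix n n A)) (P : Set (n → A)) (D : Subalgebra K A)

def GG (k : ℤ) (a : A) : Prop :=
  (k = 1 ∧ ∃ p ∈ P, a = u ⬝ᵥ p) ∨ (k = 2 ∧ ∃ w ∈ W, a = bil u w u) ∨
  (k = -1 ∧ ∃ p ∈ P, a = v ⬝ᵥ p) ∨ (k = -2 ∧ ∃ w ∈ W, a = bil v w v)

def ZZ : Set A := {a | ∃ w ∈ W, a = bil u w v} ∪ {a | ∃ p ∈ P, ∃ q ∈ P, a = (u ⬝ᵥ p) * (v ⬝ᵥ q)}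

lemma list_mem (hWt : ∀ w ∈ W, wᵀ ∈ W) (hWB : ∀ w ∈ W, ∀ w' ∈ W, w * BB u v * w' ∈ W)
    (hWP : ∀ w ∈ W, ∀ p ∈ P, (w * BB u v) *ᵥ p ∈ P) (N : ℕ) (L : List (ℤ × A)) (hN : L.length = N)
    (hL : ∀ x ∈ L, GG u v W P x.1 x.2) (h0 : (L.map Prod.fst).sum = 0) :
    (L.map Prod.snd).prod ∈ Algebra.adjoin K ((D : Set A) ∪ ZZ u v W P) := by
  classical
  induction N using Nat.strong_induction_on generalizing L with
  | _ N IH =>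
  have hne : ∀ x ∈ L, x.1 ≠ 0 := by
    intro x hx
    rcases hL x hx with ⟨h, _⟩ | ⟨h, _⟩ | ⟨h, _⟩ | ⟨h, _⟩ <;> omega
  by_cases hnil : L = []
  · subst hnil; simp [one_mem]
  have hpos : ∃ a ∈ L, 0 < a.1 := by
    by_contra! h
    have : (L.map Prod.fst).sum < 0 := by
      have := List.sum_pos (L.map (fun x => - x.1)) (by
        intro x hx
        obtain ⟨y, hy, rfl⟩ := List.mem_map.1 hx
        have := h y hy; have := hne y hy; omega) (by simpa using hnil)
      have h2 : (L.map (fun x => - x.1)).sum = - (L.map Prod.fst).sum := by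
        clear * -
        induction L with
        | nil => simp
        | cons a L ih => simp only [List.map_cons, List.sum_cons, ih]; ring
      omega
    omega
  have hneg : ∃ a ∈ L, a.1 < 0 := by
    by_contra! h
    have : 0 < (L.map Prod.fst).sum := by
      exact List.sum_pos (L.map Prod.fst) (by
        intro x hx
        obtain ⟨y, hy, rfl⟩ := List.mem_map.1 hx
        have := h y hy; have := hne y hy; omega) (by simpa using hnil)
    omega
  obtain ⟨a, ha, ha0⟩ := hpos
  obtain ⟨b, hb, hb0⟩ := hneg
  have hab : b ≠ a := by rintro rfl; omega
  have p1 := List.perm_cons_erase ha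
  have hb' : b ∈ L.erase a := (List.mem_erase_of_ne hab).2 hb
  have p2 := p1.trans ((List.perm_cons_erase hb').cons a)
  set L' := (L.erase a).erase b with hL'
  have hlen : L.length = L'.length + 2 := by rw [p2.length_eq]; simp
  have hL2 : ∀ x ∈ L', GG u v W P x.1 x.2 := fun x hx => hL x (List.mem_of_mem_erase (List.mem_of_mem_erase hx))
  have hsum : a.1 + b.1 + (L'.map Prod.fst).sum = 0 := by
    rw [← h0, (p2.map Prod.fst).sum_eq]; simp [add_assoc]
  have hprod : (L.map Prod.snd).prod = a.2 * b.2 * (L'.map Prod.snd).prod := by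
    rw [(p2.map Prod.snd).prod_eq]; simp [mul_assoc]
  rw [hprod]
  have one : ∀ c : ℤ × A, GG u v W P c.1 c.2 → c.1 + (L'.map Prod.fst).sum = 0 →
      c.2 * (L'.map Prod.snd).prod ∈ Algebra.adjoin K ((D : Set A) ∪ ZZ u v W P) := by
    intro c hc hs
    have := IH (L'.length + 1) (by omega) (c :: L') (by simp) (by
      intro x hx
      rcases List.mem_cons.1 hx with rfl | hx
      · exact hc
      · exact hL2 x hx) (by simpa using hs)
    simpa using this
  have zero : (L'.map Prod.fst).sum = 0 →
      (L'.map Prod.snd).prod ∈ Algebra.adjoin K ((D : Set A) ∪ ZZ u v W P) := by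
    intro hs
    exact IH L'.length (by omega) L' rfl hL2 hs
  have zW : ∀ w ∈ W, bil u w v ∈ Algebra.adjoin K ((D : Set A) ∪ ZZ u v W P) := fun w hw =>
    Algebra.subset_adjoin (Or.inr (Or.inl ⟨w, hw, rfl⟩))
  have zP : ∀ p ∈ P, ∀ q ∈ P, (u ⬝ᵥ p) * (v ⬝ᵥ q) ∈ Algebra.adjoin K ((D : Set A) ∪ ZZ u v W P) :=
    fun p hp q hq => Algebra.subset_adjoin (Or.inr (Or.inr ⟨p, hp, q, hq, rfl⟩))
  rcases hL a ha with ⟨ha1, p, hp, ha2⟩ | ⟨ha1, w, hw, ha2⟩ | ⟨ha1, p, hp, ha2⟩ | ⟨ha1, w, hw, ha2⟩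
  · rcases hL b hb with ⟨hb1, q, hq, hb2⟩ | ⟨hb1, w', hw', hb2⟩ | ⟨hb1, q, hq, hb2⟩ | ⟨hb1, w', hw', hb2⟩
    · omega
    · omega
    · rw [ha2, hb2]
      exact mul_mem (zP p hp q hq) (zero (by omega))
    · -- (u·p)(v w' v) = v·w'Bp - (v w' u)(v·p)
      have e1 : a.2 * b.2 = v ⬝ᵥ ((w' * BB u v) *ᵥ p) - bil u w'ᵀ v * (v ⬝ᵥ p) := by
        rw [ha2, hb2, bil_mulB, bil_tr]; ring
      rw [e1, sub_mul, mul_assoc]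
      refine sub_mem (one (-1, _) (Or.inr (Or.inr (Or.inl ⟨rfl, _, hWP w' hw' p hp, rfl⟩))) (by simp; omega))
        (mul_mem (zW _ (hWt _ hw')) (one (-1, _) (Or.inr (Or.inr (Or.inl ⟨rfl, p, hp, rfl⟩))) (by simp; omega)))
  · rcases hL b hb with ⟨hb1, q, hq, hb2⟩ | ⟨hb1, w', hw', hb2⟩ | ⟨hb1, q, hq, hb2⟩ | ⟨hb1, w', hw', hb2⟩
    · omega
    · omega
    · have e1 : a.2 * b.2 = u ⬝ᵥ ((w * BB u v) *ᵥ q) - bil u w v * (u ⬝ᵥ q) := by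
        rw [ha2, hb2, bil_mulB]; ring
      rw [e1, sub_mul, mul_assoc]
      refine sub_mem (one (1, _) (Or.inl ⟨rfl, _, hWP w hw q hq, rfl⟩) (by simp; omega))
        (mul_mem (zW _ hw) (one (1, _) (Or.inl ⟨rfl, q, hq, rfl⟩) (by simp; omega)))
    · have e1 : a.2 * b.2 = bil u (w * BB u v * w') v - bil u w v * bil u w' v := by
        rw [ha2, hb2, bil_BB]; ring
      rw [e1]
      exact mul_mem (sub_mem (zW _ (hWB w hw w' hw')) (mul_mem (zW _ hw) (zW _ hw'))) (zero (by omega))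
  · omega
  · omega

theorem step [Infinite K] (h2 : (2 : K) ≠ 0)
    (hWt : ∀ w ∈ W, wᵀ ∈ W) (hWB : ∀ w ∈ W, ∀ w' ∈ W, w * BB u v * w' ∈ W)
    (hWP : ∀ w ∈ W, ∀ p ∈ P, (w * BB u v) *ᵥ p ∈ P)
    (hD1 : ∀ w ∈ W, (w * BB u v).trace ∈ D) (hD2 : ∀ p ∈ P, ∀ q ∈ P, p ⬝ᵥ (BB u v *ᵥ q) ∈ D)
    (T : Kˣ → A →ₐ[K] A) (hTD : ∀ t, ∀ x ∈ D, T t x = x)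
    (hTu : ∀ t i, T t (u i) = (t : K) • u i) (hTv : ∀ t i, T t (v i) = ((t⁻¹ : Kˣ) : K) • v i)
    (hTW : ∀ t, ∀ w ∈ W, ∀ i j, T t (w i j) = w i j) (hTP : ∀ t, ∀ p ∈ P, ∀ i, T t (p i) = p i)
    (sg : A →ₐ[K] A) (hsD : ∀ x ∈ D, sg x = x)
    (hsu : ∀ i, sg (u i) = v i) (hsv : ∀ i, sg (v i) = u i)
    (hsW : ∀ w ∈ W, ∀ i j, sg (w i j) = w i j) (hsP : ∀ p ∈ P, ∀ i, sg (p i) = p i)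
    (f : A) (hf : f ∈ Algebra.adjoin K ((D : Set A) ∪ {a | ∃ w ∈ W, a = bil u w u ∨ a = bil u w v ∨
      a = bil v w u ∨ a = bil v w v} ∪ {a | ∃ p ∈ P, a = u ⬝ᵥ p ∨ a = v ⬝ᵥ p}))
    (hT : ∀ t, T t f = f) (hs : sg f = f) : f ∈ D := by
  classical
  -- action on the basic elements
  have gW : ∀ (S : A →ₐ[K] A) (hSW : ∀ w ∈ W, ∀ i j, S (w i j) = w i j) (x y : n → A), ∀ w ∈ W,
      S (bil x w y) = bil (fun i => S (x i)) w (fun i => S (y i)) := by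
    intro S hSW x y w hw
    simp only [bil, dotProduct, mulVec, map_sum, map_mul, hSW w hw]
  have gP : ∀ (S : A →ₐ[K] A) (hSP : ∀ p ∈ P, ∀ i, S (p i) = p i) (x : n → A), ∀ p ∈ P,
      S (x ⬝ᵥ p) = (fun i => S (x i)) ⬝ᵥ p := by
    intro S hSP x p hp
    simp only [dotProduct, map_sum, map_mul, hSP p hp]
  have Tu : ∀ t, (fun i => T t (u i)) = (t : K) • u := fun t => funext (hTu t)
  have Tv : ∀ t, (fun i => T t (v i)) = ((t⁻¹ : Kˣ) : K) • v := fun t => funext (hTv t)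
  have su : (fun i => sg (u i)) = v := funext hsu
  have sv : (fun i => sg (v i)) = u := funext hsv
  have bs : ∀ (c c' : K) (x y : n → A) (w : Matrix n n A), bil (c • x) w (c' • y) = (c * c') • bil x w y := by
    intro c c' x y w
    simp only [bil, mulVec_smul, dotProduct_smul, smul_dotProduct, smul_smul, mul_comm]
  let E := Algebra.adjoin K ((D : Set A) ∪ ZZ u v W P)
  have TE : ∀ t, ∀ x ∈ E, T t x = x := by
    intro t x hx
    induction hx using Algebra.adjoin_induction with
    | mem x hx =>
      rcases hx with hx | ⟨w, hw, rfl⟩ | ⟨p, hp, q, hq, rfl⟩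
      · exact hTD t x hx
      · rw [gW (T t) (hTW t) _ _ w hw, Tu, Tv, bs]; simp
      · rw [map_mul, gP _ (hTP t) _ p hp, gP _ (hTP t) _ q hq, Tu, Tv, smul_dotProduct, smul_dotProduct,
          smul_mul_smul_comm]; simp
    | algebraMap r => exact (T t).commutes r
    | add x y _ _ hx hy => rw [map_add, hx, hy]
    | mul x y _ _ hx hy => rw [map_mul, hx, hy]
  have TG : ∀ t k a, GG u v W P k a → T t a = ((t ^ k : Kˣ) : K) • a := by
    intro t k a h
    rcases h with ⟨rfl, p, hp, rfl⟩ | ⟨rfl, w, hw, rfl⟩ | ⟨rfl, p, hp, rfl⟩ | ⟨rfl, w, hw, rfl⟩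
    · rw [gP _ (hTP t) _ p hp, Tu, smul_dotProduct]; simp
    · rw [gW (T t) (hTW t) _ _ w hw, Tu, bs]; congr 1; rw [zpow_two]; simp
    · rw [gP _ (hTP t) _ p hp, Tv, smul_dotProduct]; simp
    · rw [gW (T t) (hTW t) _ _ w hw, Tv, bs]; congr 1; rw [_root_.zpow_neg, zpow_two]; simp
  have TL : ∀ t (L : List (ℤ × A)), (∀ x ∈ L, GG u v W P x.1 x.2) →
      T t (L.map Prod.snd).prod = ((t ^ (L.map Prod.fst).sum : Kˣ) : K) • (L.map Prod.snd).prod := by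
    intro t L
    induction L with
    | nil => intro _; simp
    | cons a L ih =>
      intro h
      simp only [List.map_cons, List.prod_cons, List.sum_cons, map_mul]
      rw [ih (fun x hx => h x (List.mem_cons_of_mem _ hx)), TG t _ _ (h a List.mem_cons_self),
        _root_.zpow_add, smul_mul_smul_comm]
      simp
  have hfE : f ∈ E := by
    have h1 : ∃ (s : Finset ℤ) (ph : ℤ → A), f = ∑ k ∈ s, ph k ∧
        (∀ t k, T t (ph k) = ((t ^ k : Kˣ) : K) • ph k) ∧ ph 0 ∈ E := by
      rw [← Subalgebra.mem_toSubmodule, Algebra.adjoin_eq_span] at hf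
      have hf' : f ∈ Submodule.span K _ := hf
      clear hf hT hs
      induction hf' using Submodule.span_induction with
      | mem x hx =>
        have h3 : ∃ e ∈ E, ∃ L : List (ℤ × A), (∀ x ∈ L, GG u v W P x.1 x.2) ∧ x = e * (L.map Prod.snd).prod := by
          induction hx using Submonoid.closure_induction with
          | mem x hx =>
            have g1 : ∀ k, GG u v W P k x → ∃ e ∈ E, ∃ L : List (ℤ × A), (∀ x ∈ L, GG u v W P x.1 x.2) ∧ x = e * (L.map Prod.snd).prod :=
              fun k hk => ⟨1, one_mem _, [(k, x)], by simpa using hk, by simp⟩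
            have g2 : x ∈ E → ∃ e ∈ E, ∃ L : List (ℤ × A), (∀ x ∈ L, GG u v W P x.1 x.2) ∧ x = e * (L.map Prod.snd).prod :=
              fun hx => ⟨x, hx, [], by simp, by simp⟩
            rcases hx with (hx | ⟨w, hw, h | h | h | h⟩) | ⟨p, hp, h | h⟩
            · exact g2 (Algebra.subset_adjoin (Or.inl hx))
            · exact g1 2 (Or.inr (Or.inl ⟨rfl, w, hw, h⟩))
            · exact g2 (Algebra.subset_adjoin (Or.inr (Or.inl ⟨w, hw, h⟩)))
            · exact g2 (Algebra.subset_adjoin (Or.inr (Or.inl ⟨wᵀ, hWt w hw, by rw [h, bil_tr]⟩)))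
            · exact g1 (-2) (Or.inr (Or.inr (Or.inr ⟨rfl, w, hw, h⟩)))
            · exact g1 1 (Or.inl ⟨rfl, p, hp, h⟩)
            · exact g1 (-1) (Or.inr (Or.inr (Or.inl ⟨rfl, p, hp, h⟩)))
          | one => exact ⟨1, one_mem _, [], by simp, by simp⟩
          | mul x y _ _ hx hy =>
            obtain ⟨e, he, L, hL, rfl⟩ := hx
            obtain ⟨e', he', L', hL', rfl⟩ := hy
            refine ⟨e * e', mul_mem he he', L ++ L', ?_, ?_⟩
            · intro x hx
              rcases List.mem_append.1 hx with hx | hx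
              · exact hL x hx
              · exact hL' x hx
            · rw [List.map_append, List.prod_append]; ring
        obtain ⟨e, he, L, hL, rfl⟩ := h3
        refine ⟨{(L.map Prod.fst).sum}, fun k => if k = (L.map Prod.fst).sum then e * (L.map Prod.snd).prod else 0,
          by simp, ?_, ?_⟩
        · intro t k
          beta_reduce
          split_ifs with h
          · rw [map_mul, TE t e he, TL t L hL, h, mul_smul_comm]
          · simp
        · beta_reduce
          split_ifs with h
          · exact mul_mem he (list_mem u v W P D hWt hWB hWP _ L rfl hL h.symm)
          · exact zero_mem _
      | zero => exact ⟨∅, 0, by simp, by simp, zero_mem _⟩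
      | add x y _ _ hx hy =>
        obtain ⟨s, ph, h1, h3, h4⟩ := hx
        obtain ⟨s', ph', h1', h3', h4'⟩ := hy
        refine ⟨s ∪ s', fun k => (if k ∈ s then ph k else 0) + (if k ∈ s' then ph' k else 0), ?_, ?_, ?_⟩
        · rw [Finset.sum_add_distrib, h1, h1']
          congr 1 <;> rw [Finset.sum_ite_mem] <;> simp
        · intro t k
          beta_reduce
          rw [map_add, smul_add]
          congr 1 <;> split_ifs <;> simp [h3, h3']
        · beta_reduce
          refine add_mem ?_ ?_ <;> split_ifs <;> first | assumption | exact zero_mem _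
      | smul c x _ hx =>
        obtain ⟨s, ph, h1, h3, h4⟩ := hx
        refine ⟨s, fun k => c • ph k, by rw [h1, Finset.smul_sum], ?_, E.smul_mem h4 c⟩
        intro t k
        rw [map_smul, h3, smul_comm]
    obtain ⟨s, ph, h1, h3, h4⟩ := h1
    have := torus_lemma T (E : Set A) f s ph h1 h3 hT
    rw [this]
    split_ifs
    · exact h4
    · exact zero_mem _
  refine symm_lemma h2 D sg hsD (ZZ u v W P) ?_ ?_ f hfE hs
  · rintro z (⟨w, hw, rfl⟩ | ⟨p, hp, q, hq, rfl⟩)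
    · rw [gW sg hsW _ _ w hw, su, sv, ← tr_BB]; exact hD1 w hw
    · rw [map_mul, gP _ hsP _ p hp, gP _ hsP _ q hq, su, sv, ← dot_BB]; exact hD2 p hp q hq
  · have aux : ∀ w ∈ W, ∀ p ∈ P, ∀ q ∈ P, (bil u w v - bil v w u) *
        ((u ⬝ᵥ p) * (v ⬝ᵥ q) - (v ⬝ᵥ p) * (u ⬝ᵥ q)) ∈ D := by
      intro w hw p hp q hq
      have := sub_mem (hD2 q hq _ (hWP w hw p hp)) (hD2 p hp _ (hWP w hw q hq))
      convert this using 1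
      rw [dot_BB, dot_BB, bil_mulB, bil_mulB, bil_mulB, bil_mulB]; ring
    rintro z (⟨w, hw, rfl⟩ | ⟨p, hp, q, hq, rfl⟩) z' (⟨w', hw', rfl⟩ | ⟨p', hp', q', hq', rfl⟩)
    · rw [gW sg hsW _ _ w hw, gW sg hsW _ _ w' hw', su, sv]
      have := sub_mem (hD1 _ (hWB w hw w' hw')) (hD1 _ (hWB w hw _ (hWt _ hw')))
      convert this using 1
      rw [tr_BB, tr_BB, bil_BB, bil_BB, bil_BB, bil_BB]
      simp only [bil_tr]; ring
    · rw [map_mul, gP _ hsP _ p' hp', gP _ hsP _ q' hq', gW sg hsW _ _ w hw, su, sv]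
      exact aux w hw p' hp' q' hq'
    · rw [map_mul, gP _ hsP _ p hp, gP _ hsP _ q hq, gW sg hsW _ _ w' hw', su, sv, mul_comm]
      exact aux w' hw' p hp q hq
    · rw [map_mul, gP _ hsP _ p hp, gP _ hsP _ q hq, map_mul, gP _ hsP _ p' hp', gP _ hsP _ q' hq', su, sv]
      have := sub_mem (mul_mem (hD2 p hp q' hq') (hD2 q hq p' hp')) (mul_mem (hD2 p hp p' hp') (hD2 q hq q' hq'))
      convert this using 1
      simp only [dot_BB]; ring
end step
end
end StepL

namespace Fr
open StepL
section
variable {K : Type} [Field K]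

/-- pullback of functions -/
def pb {V V' : Type} (g : V' → V) : (V → K) →ₐ[K] (V' → K) where
  toFun f := f ∘ g
  map_one' := rfl
  map_mul' _ _ := rfl
  map_zero' := rfl
  map_add' _ _ := rfl
  commutes' _ := rfl

lemma pb_apply {V V' : Type} (g : V' → V) (f : V → K) (q : V') : pb g f q = f (g q) := rfl

/-- polynomial functions -/
def PF (V : Type) [AddCommGroup V] [Module K V] : Subalgebra K (V → K) :=
  Algebra.adjoin K {f | ∃ φ : V →ₗ[K] K, f = φ}

lemma PF_lin {V : Type} [AddCommGroup V] [Module K V] (φ : V →ₗ[K] K) : (φ : V → K) ∈ PF (K := K) V :=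
  Algebra.subset_adjoin ⟨φ, rfl⟩

lemma PF_comp {V V' : Type} [AddCommGroup V] [Module K V] [AddCommGroup V'] [Module K V']
    (g : V' → V) (hg : ∀ φ : V →ₗ[K] K, (fun q => φ (g q)) ∈ PF (K := K) V') (f : V → K)
    (hf : f ∈ PF (K := K) V) : (fun q => f (g q)) ∈ PF (K := K) V' := by
  have : PF (K := K) V ≤ (PF (K := K) V').comap (pb g) := by
    apply Algebra.adjoin_le
    rintro _ ⟨φ, rfl⟩
    exact hg φ
  exact this hf

variable {n Y Z C G κ : Type} [Fintype n] [DecidableEq n] [AddCommGroup Y] [Module K Y] [AddCommGroup Z]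
  [Module K Z]

variable (K n Y Z C G) in
structure Dat where
  J : Matrix n n K
  mat : Y → Matrix n n K
  bb : (n → K) →ₗ[K] (n → K) →ₗ[K] Y
  ex : C → Z → Matrix n n K
  gY : G → Y → Y
  gZ : G → Z → Z
  gV : G → (n → K) → (n → K)
  mat_bb : ∀ u v, mat (bb u v) = vecMulVec u v + vecMulVec v u
  bb_symm : ∀ u v, bb u v = bb v u
  gY_bb : ∀ g u v, gY g (bb u v) = bb (gV g u) (gV g v)
  hJ : Jᵀ = J ∨ Jᵀ = -J
  mat_symm : ∀ y, (mat y)ᵀ = mat y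
  ex_tr : ∀ c, (∀ z, (ex c z)ᵀ * J = J * ex c z) ∨ (∀ z, (ex c z)ᵀ * J = -(J * ex c z))

variable (dt : Dat K n Y Z C G)

abbrev Om (K n Y Z κ ι : Type) := (κ → Y) × Z × (ι → n → K)

variable (κ) in
def letters : Set ((κ → Y) × Z → Matrix n n K) :=
  {l | ∃ k, l = fun p => dt.mat (p.1 k) * dt.J} ∪ {l | ∃ c, l = fun p => dt.ex c p.2}

variable (κ) in
def words : Submonoid ((κ → Y) × Z → Matrix n n K) := Submonoid.closure (letters κ dt)

def Chain (κ ι : Type) : Subalgebra K (Om K n Y Z κ ι → K) :=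
  Algebra.adjoin K ({f | ∃ w ∈ words κ dt, f = fun q => (w (q.1, q.2.1)).trace} ∪
    {f | ∃ w ∈ words κ dt, ∃ a b, f = fun q => q.2.2 a ⬝ᵥ ((dt.J * w (q.1, q.2.1)) *ᵥ q.2.2 b)})

def gact {ι : Type} (g : G) (q : Om K n Y Z κ ι) : Om K n Y Z κ ι :=
  (fun k => dt.gY g (q.1 k), dt.gZ g q.2.1, fun a => dt.gV g (q.2.2 a))

def Inv {ι : Type} (f : Om K n Y Z κ ι → K) : Prop := ∀ g q, f (gact dt g q) = f q

lemma word_tr (w : (κ → Y) × Z → Matrix n n K) (hw : w ∈ words κ dt) :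
    ∃ w' ∈ words κ dt, (∀ p, (w p)ᵀ * dt.J = dt.J * w' p) ∨ (∀ p, (w p)ᵀ * dt.J = -(dt.J * w' p)) := by
  induction hw using Submonoid.closure_induction with
  | mem x hx =>
    refine ⟨x, Submonoid.subset_closure hx, ?_⟩
    rcases hx with ⟨k, rfl⟩ | ⟨c, rfl⟩
    · rcases dt.hJ with h | h
      · left; intro p; simp only [transpose_mul, dt.mat_symm, h, mul_assoc]
      · right; intro p; simp only [transpose_mul, dt.mat_symm, h, mul_assoc, neg_mul]
    · rcases dt.ex_tr c with h | h
      · left; intro p; exact h _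
      · right; intro p; exact h _
  | one => exact ⟨1, one_mem _, Or.inl fun p => by simp⟩
  | mul x y _ _ hx hy =>
    obtain ⟨x', hx', h1⟩ := hx
    obtain ⟨y', hy', h2⟩ := hy
    refine ⟨y' * x', mul_mem hy' hx', ?_⟩
    rcases h1 with h1 | h1 <;> rcases h2 with h2 | h2
    · left; intro p; simp only [Pi.mul_apply, transpose_mul]
      rw [mul_assoc, h1, ← mul_assoc, h2, mul_assoc]
    · right; intro p; simp only [Pi.mul_apply, transpose_mul]
      rw [mul_assoc, h1, ← mul_assoc, h2, neg_mul, mul_assoc]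
    · right; intro p; simp only [Pi.mul_apply, transpose_mul]
      rw [mul_assoc, h1, mul_neg, ← mul_assoc, h2, mul_assoc]
    · left; intro p; simp only [Pi.mul_apply, transpose_mul]
      rw [mul_assoc, h1, mul_neg, ← mul_assoc, h2, neg_mul, neg_neg, mul_assoc]

lemma Jword_tr (w : (κ → Y) × Z → Matrix n n K) (hw : w ∈ words κ dt) :
    ∃ w' ∈ words κ dt, (∀ p, (dt.J * w p)ᵀ = dt.J * w' p) ∨ (∀ p, (dt.J * w p)ᵀ = -(dt.J * w' p)) := by
  obtain ⟨w', hw', h⟩ := word_tr dt w hw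
  refine ⟨w', hw', ?_⟩
  rcases h with h | h <;> rcases dt.hJ with hJ | hJ
  · left; intro p; rw [transpose_mul, hJ, h]
  · right; intro p; rw [transpose_mul, hJ, mul_neg, h]
  · right; intro p; rw [transpose_mul, hJ, h]
  · left; intro p; rw [transpose_mul, hJ, mul_neg, h, neg_neg]

def fm {Q : Type} (W : Q → Matrix n n K) : Matrix n n (Q → K) := Matrix.of fun i j q => W q i j
def fv {Q : Type} (x : Q → n → K) : n → (Q → K) := fun i q => x q i

lemma fm_mul {Q : Type} (W W' : Q → Matrix n n K) : fm W * fm W' = fm (fun q => W q * W' q) := by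
  ext i j q; simp [fm, mul_apply]
lemma fm_mulVec {Q : Type} (W : Q → Matrix n n K) (x : Q → n → K) : fm W *ᵥ fv x = fv (fun q => W q *ᵥ x q) := by
  ext i q; simp [fm, fv, mulVec, dotProduct]
lemma fv_dot {Q : Type} (x y : Q → n → K) : fv x ⬝ᵥ fv y = fun q => x q ⬝ᵥ y q := by
  ext q; simp [fv, dotProduct]
lemma fm_bil {Q : Type} (W : Q → Matrix n n K) (x y : Q → n → K) :
    bil (fv x) (fm W) (fv y) = fun q => x q ⬝ᵥ (W q *ᵥ y q) := by
  rw [bil, fm_mulVec, fv_dot]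
lemma fm_trace {Q : Type} (W : Q → Matrix n n K) : (fm W).trace = fun q => (W q).trace := by
  ext q; simp [fm, trace]
lemma fm_BB {Q : Type} (x y : Q → n → K) :
    BB (fv x) (fv y) = fm (fun q => vecMulVec (x q) (y q) + vecMulVec (y q) (x q)) := by
  ext i j q; simp [fm, fv, BB, vecMulVec_apply]

variable [DecidableEq κ]

/-- the substitution S_k := bb u v -/
def sub {ι : Type} (k : κ) (q : Om K n Y Z κ ι × (n → K) × (n → K)) : Om K n Y Z κ ι :=
  (Function.update q.1.1 k (dt.bb q.2.1 q.2.2), q.1.2.1, q.1.2.2)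

theorem stepC [Infinite K] (h2 : (2 : K) ≠ 0) {ι : Type} (k : κ) (f : Om K n Y Z κ ι → K)
    (f' : Om K n Y Z κ (ι ⊕ Fin 2) → K) (hf' : f' ∈ Chain dt κ (ι ⊕ Fin 2))
    (hff' : ∀ q : Om K n Y Z κ ι × (n → K) × (n → K),
      f' ((sub dt k q).1, (sub dt k q).2.1, Sum.elim q.1.2.2 ![q.2.1, q.2.2]) = f (sub dt k q)) :
    ∃ h ∈ Chain dt κ ι, ∀ q, f (sub dt k q) = h (sub dt k q) := by
  let Q := Om K n Y Z κ ι × (n → K) × (n → K)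
  let π : Q → Om K n Y Z κ ι := sub dt k
  let pm : Q → (κ → Y) × Z := fun q => ((π q).1, (π q).2.1)
  let u : n → (Q → K) := fv fun q => q.2.1
  let v : n → (Q → K) := fv fun q => q.2.2
  let D : Subalgebra K (Q → K) := (Chain dt κ ι).map (pb π)
  let W : Set (Matrix n n (Q → K)) := {m | ∃ w ∈ words κ dt,
    m = fm (fun q => dt.J * w (pm q)) ∨ m = - fm (fun q => dt.J * w (pm q))}
  let P : Set (n → Q → K) := {p | ∃ w ∈ words κ dt, ∃ a,
    p = fv (fun q => (dt.J * w (pm q)) *ᵥ q.1.2.2 a) ∨ p = - fv (fun q => (dt.J * w (pm q)) *ᵥ q.1.2.2 a)}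
  let ℓ : (κ → Y) × Z → Matrix n n K := fun p => dt.mat (p.1 k) * dt.J
  have hℓ : ℓ ∈ words κ dt := Submonoid.subset_closure (Or.inl ⟨k, rfl⟩)
  have hB : BB u v = fm (fun q => dt.mat ((pm q).1 k)) := by
    rw [fm_BB]; congr 1; funext q
    simp [pm, π, sub, dt.mat_bb]
  have fm_neg_mul : ∀ (M M' : Matrix n n (Q → K)), -M * M' = -(M * M') := fun M M' => neg_mul M M'
  have hWB0 : ∀ w w', fm (fun q => dt.J * w (pm q)) * BB u v * fm (fun q => dt.J * w' (pm q))
      = fm (fun q => dt.J * (w * ℓ * w') (pm q)) := by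
    intro w w'
    rw [hB, fm_mul, fm_mul]; congr 1; funext q
    simp only [ℓ, Pi.mul_apply, mul_assoc]
  have hWP0 : ∀ w w' a, (fm (fun q => dt.J * w (pm q)) * BB u v) *ᵥ fv (fun q : Q => (dt.J * w' (pm q)) *ᵥ q.1.2.2 a)
      = fv (fun q => (dt.J * (w * ℓ * w') (pm q)) *ᵥ q.1.2.2 a) := by
    intro w w' a
    rw [hB, fm_mul, fm_mulVec]; congr 1; funext q
    simp only [ℓ, Pi.mul_apply, mul_assoc, mulVec_mulVec]
  have hWt : ∀ w ∈ W, wᵀ ∈ W := by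
    have h1 : ∀ w ∈ words κ dt, (fm (fun q => dt.J * w (pm q)))ᵀ ∈ W ∧ -(fm (fun q => dt.J * w (pm q)))ᵀ ∈ W := by
      intro w hw
      obtain ⟨w', hw', h⟩ := Jword_tr dt w hw
      have e : (fm (fun q => dt.J * w (pm q)))ᵀ = fm (fun q => (dt.J * w (pm q))ᵀ) := rfl
      rw [e]
      rcases h with h | h
      · simp only [h]
        exact ⟨⟨w', hw', Or.inl rfl⟩, ⟨w', hw', Or.inr rfl⟩⟩
      · simp only [h]
        refine ⟨⟨w', hw', Or.inr rfl⟩, ⟨w', hw', Or.inl ?_⟩⟩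
        ext i j q; simp [fm]
    rintro _ ⟨w, hw, rfl | rfl⟩
    · exact (h1 w hw).1
    · rw [transpose_neg]; exact (h1 w hw).2
  have hD1 : ∀ w ∈ words κ dt, (fun q : Q => (w (pm q)).trace) ∈ D := by
    intro w hw
    exact ⟨fun q => (w (q.1, q.2.1)).trace, Algebra.subset_adjoin (Or.inl ⟨w, hw, rfl⟩), rfl⟩
  have hD2 : ∀ w ∈ words κ dt, ∀ a b, (fun q : Q => q.1.2.2 a ⬝ᵥ ((dt.J * w (pm q)) *ᵥ q.1.2.2 b)) ∈ D := by
    intro w hw a b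
    exact ⟨fun q => q.2.2 a ⬝ᵥ ((dt.J * w (q.1, q.2.1)) *ᵥ q.2.2 b),
      Algebra.subset_adjoin (Or.inr ⟨w, hw, a, b, rfl⟩), rfl⟩
  have hfix : ∀ (τ : Q → Q), (∀ q, π (τ q) = π q) → (∀ q, (τ q).1 = q.1) →
      (∀ x ∈ D, pb (K := K) τ x = x) ∧ (∀ w ∈ W, ∀ i j, pb (K := K) τ (w i j) = w i j) ∧
      (∀ p ∈ P, ∀ i, pb (K := K) τ (p i) = p i) := by
    intro τ h1 h3
    have hp : ∀ q, pm (τ q) = pm q := fun q => by simp only [pm, h1]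
    refine ⟨?_, ?_, ?_⟩
    · rintro _ ⟨c, hc, rfl⟩
      funext q; change c (π (τ q)) = c (π q); rw [h1]
    · rintro _ ⟨w, hw, rfl | rfl⟩ i j
      · funext q; simp only [pb_apply, fm, of_apply, hp]
      · funext q; simp only [pb_apply, fm, of_apply, hp, Matrix.neg_apply, Pi.neg_apply]
    · rintro _ ⟨w, hw, a, rfl | rfl⟩ i
      · funext q; simp only [pb_apply, fv, hp, h3]
      · funext q; simp only [pb_apply, fv, hp, h3, Pi.neg_apply]
  let τ : Kˣ → Q → Q := fun t q => (q.1, (t : K) • q.2.1, ((t⁻¹ : Kˣ) : K) • q.2.2)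
  have hτ := fun t => hfix (τ t) (by
    intro q
    simp only [π, sub, τ, map_smul, LinearMap.smul_apply, smul_smul]
    simp) (fun q => rfl)
  let sw : Q → Q := fun q => (q.1, q.2.2, q.2.1)
  have hsw := hfix sw (by
    intro q
    simp only [π, sub, sw]; rw [dt.bb_symm]) (fun q => rfl)
  have main := step u v W P D h2 hWt
    (by
      rintro _ ⟨w, hw, rfl | rfl⟩ _ ⟨w', hw', rfl | rfl⟩
      · rw [hWB0]; exact ⟨_, mul_mem (mul_mem hw hℓ) hw', Or.inl rfl⟩
      · rw [mul_neg, hWB0]; exact ⟨_, mul_mem (mul_mem hw hℓ) hw', Or.inr rfl⟩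
      · rw [neg_mul, neg_mul, hWB0]; exact ⟨_, mul_mem (mul_mem hw hℓ) hw', Or.inr rfl⟩
      · rw [mul_neg, neg_mul, neg_mul, neg_neg, hWB0]; exact ⟨_, mul_mem (mul_mem hw hℓ) hw', Or.inl rfl⟩)
    (by
      rintro _ ⟨w, hw, rfl | rfl⟩ _ ⟨w', hw', a, rfl | rfl⟩
      · rw [hWP0]; exact ⟨_, mul_mem (mul_mem hw hℓ) hw', a, Or.inl rfl⟩
      · rw [mulVec_neg, hWP0]; exact ⟨_, mul_mem (mul_mem hw hℓ) hw', a, Or.inr rfl⟩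
      · rw [neg_mul, neg_mulVec, hWP0]; exact ⟨_, mul_mem (mul_mem hw hℓ) hw', a, Or.inr rfl⟩
      · rw [mulVec_neg, neg_mul, neg_mulVec, neg_neg, hWP0]; exact ⟨_, mul_mem (mul_mem hw hℓ) hw', a, Or.inl rfl⟩)
    (by
      have h1 : ∀ w ∈ words κ dt, (fm (fun q => dt.J * w (pm q)) * BB u v).trace ∈ D := by
        intro w hw
        rw [hB, fm_mul, fm_trace]
        convert hD1 _ (mul_mem hw hℓ) using 2 with q
        simp only [Pi.mul_apply, ℓ]
        rw [mul_assoc, trace_mul_comm, mul_assoc]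
      rintro _ ⟨w, hw, rfl | rfl⟩
      · exact h1 w hw
      · rw [neg_mul, trace_neg]; exact neg_mem (h1 w hw))
    (by
      have h1 : ∀ w ∈ words κ dt, ∀ a, ∀ w' ∈ words κ dt, ∀ b, fv (fun q : Q => (dt.J * w (pm q)) *ᵥ q.1.2.2 a) ⬝ᵥ
          (BB u v *ᵥ fv (fun q : Q => (dt.J * w' (pm q)) *ᵥ q.1.2.2 b)) ∈ D := by
        intro w hw a w' hw' b
        obtain ⟨w'', hw'', h⟩ := Jword_tr dt w hw
        rw [hB, fm_mulVec, fv_dot]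
        have e : ∀ q : Q, ((dt.J * w (pm q)) *ᵥ q.1.2.2 a) ⬝ᵥ (dt.mat ((pm q).1 k) *ᵥ ((dt.J * w' (pm q)) *ᵥ q.1.2.2 b))
            = q.1.2.2 a ⬝ᵥ (((dt.J * w (pm q))ᵀ * (ℓ (pm q) * w' (pm q))) *ᵥ q.1.2.2 b) := by
          intro q
          rw [← vecMul_transpose, ← dotProduct_mulVec]
          simp only [mulVec_mulVec, ℓ, mul_assoc]
        simp only [e]
        have := hD2 _ (mul_mem (mul_mem hw'' hℓ) hw') a b
        rcases h with h | h
        · simp only [h]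
          convert this using 1
          funext q
          simp only [Pi.mul_apply, mul_assoc]
        · simp only [h]
          convert neg_mem this using 1
          funext q
          simp only [Pi.mul_apply, mul_assoc, neg_mul, neg_mulVec, dotProduct_neg, Pi.neg_apply]
      rintro _ ⟨w, hw, a, rfl | rfl⟩ _ ⟨w', hw', b, rfl | rfl⟩
      · exact h1 w hw a w' hw' b
      · rw [mulVec_neg, dotProduct_neg]; exact neg_mem (h1 w hw a w' hw' b)
      · rw [neg_dotProduct]; exact neg_mem (h1 w hw a w' hw' b)
      · rw [mulVec_neg, dotProduct_neg, neg_dotProduct, neg_neg]; exact h1 w hw a w' hw' b)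
    (fun t => pb (τ t)) (fun t => (hτ t).1) (fun t i => rfl) (fun t i => rfl) (fun t => (hτ t).2.1) (fun t => (hτ t).2.2)
    (pb sw) hsw.1 (fun i => rfl) (fun i => rfl) hsw.2.1 hsw.2.2
    (pb π f)
    (by
      let π' : Q → Om K n Y Z κ (ι ⊕ Fin 2) := fun q => ((π q).1, (π q).2.1, Sum.elim q.1.2.2 ![q.2.1, q.2.2])
      have e : pb π f = pb π' f' := by funext q; exact (hff' q).symm
      rw [e]
      set TT := Algebra.adjoin K ((D : Set (Q → K)) ∪ {a | ∃ w ∈ W, a = bil u w u ∨ a = bil u w v ∨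
        a = bil v w u ∨ a = bil v w v} ∪ {a | ∃ p ∈ P, a = u ⬝ᵥ p ∨ a = v ⬝ᵥ p}) with hTT
      have : Chain dt κ (ι ⊕ Fin 2) ≤ TT.comap (pb π') := by
        apply Algebra.adjoin_le
        have hw1 : ∀ w ∈ words κ dt, ∀ x ∈ ({u, v} : Set (n → Q → K)), ∀ y ∈ ({u, v} : Set (n → Q → K)),
            bil x (fm (fun q => dt.J * w (pm q))) y ∈ TT := by
          intro w hw x hx y hy
          apply Algebra.subset_adjoin
          refine Or.inl (Or.inr ⟨_, ⟨w, hw, Or.inl rfl⟩, ?_⟩)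
          rcases hx with rfl | rfl <;> rcases hy with rfl | rfl <;> simp
        have hw2 : ∀ w ∈ words κ dt, ∀ x ∈ ({u, v} : Set (n → Q → K)), ∀ b,
            x ⬝ᵥ (fv (fun q : Q => (dt.J * w (pm q)) *ᵥ q.1.2.2 b)) ∈ TT := by
          intro w hw x hx b
          apply Algebra.subset_adjoin
          refine Or.inr ⟨_, ⟨w, hw, b, Or.inl rfl⟩, ?_⟩
          rcases hx with rfl | rfl <;> simp
        have hw3 : ∀ w ∈ words κ dt, ∀ x : Q → n → K, fv x ∈ ({u, v} : Set (n → Q → K)) → ∀ b,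
            (fun q : Q => q.1.2.2 b ⬝ᵥ ((dt.J * w (pm q)) *ᵥ x q)) ∈ TT := by
          intro w hw x hx b
          obtain ⟨w'', hw'', h⟩ := Jword_tr dt w hw
          have := hw2 w'' hw'' _ hx b
          rw [fv_dot] at this
          have e : ∀ q : Q, q.1.2.2 b ⬝ᵥ ((dt.J * w (pm q)) *ᵥ x q) = x q ⬝ᵥ ((dt.J * w (pm q))ᵀ *ᵥ q.1.2.2 b) := by
            intro q
            rw [dotProduct_mulVec, mulVec_transpose, dotProduct_comm]
          simp only [e]
          rcases h with h | h
          · simp only [h]; exact this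
          · simp only [h, neg_mulVec, dotProduct_neg]; exact neg_mem this
        have DT : ∀ x ∈ D, x ∈ TT := fun x hx => Algebra.subset_adjoin (Or.inl (Or.inl hx))
        rintro _ (⟨w, hw, rfl⟩ | ⟨w, hw, a, b, rfl⟩)
        · exact DT _ (hD1 w hw)
        · change (fun q : Q => (Sum.elim q.1.2.2 ![q.2.1, q.2.2] a) ⬝ᵥ ((dt.J * w (pm q)) *ᵥ (Sum.elim q.1.2.2 ![q.2.1, q.2.2] b))) ∈ TT
          rcases a with a | a <;> rcases b with b | b
          · exact DT _ (hD2 w hw a b)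
          · fin_cases b
            · exact hw3 w hw (fun q => q.2.1) (Or.inl rfl) a
            · exact hw3 w hw (fun q => q.2.2) (Or.inr rfl) a
          · fin_cases a
            · have := hw2 w hw u (Or.inl rfl) b
              rw [fv_dot] at this; exact this
            · have := hw2 w hw v (Or.inr rfl) b
              rw [fv_dot] at this; exact this
          · fin_cases a <;> fin_cases b
            · have := hw1 w hw u (Or.inl rfl) u (Or.inl rfl)
              rw [fm_bil] at this; exact this
            · have := hw1 w hw u (Or.inl rfl) v (Or.inr rfl)
              rw [fm_bil] at this; exact this
            · have := hw1 w hw v (Or.inr rfl) u (Or.inl rfl)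
              rw [fm_bil] at this; exact this
            · have := hw1 w hw v (Or.inr rfl) v (Or.inr rfl)
              rw [fm_bil] at this; exact this
      exact this hf')
    (fun t => by
      funext q
      change f (π (τ t q)) = f (π q)
      congr 1
      simp only [π, sub, τ, map_smul, LinearMap.smul_apply, smul_smul]
      simp)
    (by
      funext q
      change f (π (sw q)) = f (π q)
      congr 1
      simp only [π, sub, sw]; rw [dt.bb_symm])
  obtain ⟨h, hh, e⟩ := main
  exact ⟨h, hh, fun q => (congrFun e q).symm⟩

/-- the function f' -/
def fp {ι : Type} (k : κ) (f : Om K n Y Z κ ι → K) : Om K n Y Z κ (ι ⊕ Fin 2) → K :=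
  fun q => f (sub dt k ((q.1, q.2.1, fun a => q.2.2 (Sum.inl a)), q.2.2 (Sum.inr 0), q.2.2 (Sum.inr 1)))

lemma fp_inv {ι : Type} (k : κ) (f : Om K n Y Z κ ι → K) (hf : Inv dt f) : Inv dt (fp dt k f) := by
  intro g q
  rw [fp, fp]
  conv_rhs => rw [← hf g]
  congr 1
  simp only [sub, gact, Prod.mk.injEq, and_true]
  funext j
  by_cases h : j = k
  · subst h; simp [dt.gY_bb]
  · simp [h]

lemma fp_PF {ι : Type} (k : κ) (f : Om K n Y Z κ ι → K) (hf : f ∈ PF (K := K) (Om K n Y Z κ ι)) :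
    fp dt k f ∈ PF (K := K) (Om K n Y Z κ (ι ⊕ Fin 2)) := by
  refine PF_comp _ ?_ f hf
  intro φ
  let L : Om K n Y Z κ (ι ⊕ Fin 2) →ₗ[K] Om K n Y Z κ ι :=
    { toFun := fun q => (Function.update q.1 k 0, q.2.1, fun a => q.2.2 (Sum.inl a))
      map_add' := by
        intro q q'
        simp only [Prod.mk_add_mk, Prod.mk.injEq, Prod.fst_add, Prod.snd_add]
        refine ⟨?_, trivial, rfl⟩
        rw [← Function.update_add, add_zero]
      map_smul' := by
        intro c q
        simp only [Prod.smul_mk, Prod.mk.injEq, Prod.smul_fst, Prod.smul_snd, RingHom.id_apply]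
        refine ⟨?_, trivial, rfl⟩
        rw [← Function.update_smul, smul_zero] }
  let M : Y →ₗ[K] K :=
    { toFun := fun y => φ (Function.update 0 k y, 0, 0)
      map_add' := by
        intro y y'
        rw [← map_add]; congr 1
        simp only [Prod.mk_add_mk, add_zero, ← Function.update_add]
      map_smul' := by
        intro c y
        rw [← map_smul]; congr 1
        simp only [Prod.smul_mk, smul_zero, ← Function.update_smul, RingHom.id_apply] }
  have e : (fun q : Om K n Y Z κ (ι ⊕ Fin 2) => φ (sub dt k ((q.1, q.2.1, fun a => q.2.2 (Sum.inl a)), q.2.2 (Sum.inr 0), q.2.2 (Sum.inr 1))))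
      = (fun q => φ (L q)) + fun q => ∑ i, ∑ j, q.2.2 (Sum.inr 0) i * (q.2.2 (Sum.inr 1) j * M (dt.bb (Pi.single i 1) (Pi.single j 1))) := by
    funext q
    have e1 : ∀ x y : n → K, ∑ i, ∑ j, x i * (y j * M (dt.bb (Pi.single i 1) (Pi.single j 1))) = M (dt.bb x y) := by
      intro x y
      conv_rhs => rw [pi_eq_sum_univ' x, pi_eq_sum_univ' y]
      simp only [map_sum, LinearMap.sum_apply, map_smul, LinearMap.smul_apply, smul_eq_mul]
      rw [Finset.sum_comm]
      apply Finset.sum_congr rfl; intro i _; rw [Finset.mul_sum]; apply Finset.sum_congr rfl; intro j _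
      ring
    rw [Pi.add_apply, e1]
    simp only [L, M, LinearMap.coe_mk, AddHom.coe_mk]
    rw [← map_add]
    congr 1
    simp only [sub, Prod.mk_add_mk, add_zero, ← Function.update_add, zero_add]
  rw [e]
  refine add_mem (PF_lin (φ.comp L)) ?_
  have e2 : (fun q : Om K n Y Z κ (ι ⊕ Fin 2) => ∑ i, ∑ j, q.2.2 (Sum.inr 0) i * (q.2.2 (Sum.inr 1) j * M (dt.bb (Pi.single i 1) (Pi.single j 1))))
     = ∑ i, ∑ j, (fun q : Om K n Y Z κ (ι ⊕ Fin 2) => q.2.2 (Sum.inr 0) i) * ((fun q => q.2.2 (Sum.inr 1) j) * algebraMap K _ (M (dt.bb (Pi.single i 1) (Pi.single j 1)))) := by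
    funext q; simp [Finset.sum_apply]
  rw [e2]
  have crd : ∀ b i, (fun q : Om K n Y Z κ (ι ⊕ Fin 2) => q.2.2 (Sum.inr b) i) ∈ PF (K := K) (Om K n Y Z κ (ι ⊕ Fin 2)) := by
    intro b i
    exact PF_lin (V := Om K n Y Z κ (ι ⊕ Fin 2)) (K := K)
      { toFun := fun q => q.2.2 (Sum.inr b) i, map_add' := fun _ _ => rfl, map_smul' := fun _ _ => rfl }
  exact sum_mem fun i _ => sum_mem fun j _ => mul_mem (crd 0 i) (mul_mem (crd 1 j) (Subalgebra.algebraMap_mem _ _))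

def Dep {ι : Type} (s : Finset κ) (f : Om K n Y Z κ ι → K) : Prop :=
  ∀ S S' z x, (∀ k ∈ s, S k = S' k) → f (S, z, x) = f (S', z, x)

lemma fp_dep {ι : Type} (s : Finset κ) (k : κ) (f : Om K n Y Z κ ι → K) (hf : Dep (insert k s) f) :
    Dep s (fp dt k f) := by
  intro S S' z x h
  refine hf _ _ _ _ ?_
  intro j hj
  by_cases hjk : j = k
  · subst hjk; simp
  · simp only [Function.update_of_ne hjk]
    exact h j ((Finset.mem_insert.1 hj).resolve_left hjk)

/-- one induction step -/
theorem ind_step [Infinite K] (h2 : (2 : K) ≠ 0) (s : Finset κ) (k : κ)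
    (IH : ∀ (ι : Type) [Finite ι] (f : Om K n Y Z κ ι → K), f ∈ PF (K := K) (Om K n Y Z κ ι) → Inv dt f → Dep s f →
      f ∈ Chain dt κ ι) (ι : Type) [Finite ι] (f : Om K n Y Z κ ι → K)
    (hf : f ∈ PF (K := K) (Om K n Y Z κ ι)) (hi : Inv dt f) (hd : Dep (insert k s) f) :
    ∃ h ∈ Chain dt κ ι, ∀ q, f (sub dt k q) = h (sub dt k q) := by
  refine stepC dt h2 k f (fp dt k f) (IH (ι ⊕ Fin 2) _ (fp_PF dt k f hf) (fp_inv dt k f hi) (fp_dep dt s k f hd)) ?_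
  intro q
  simp [fp, sub]
end
end Fr

namespace Fr
open StepL

/-- Euler-Rodrigues matrix -/
def rot {R : Type} [CommRing R] (q : Fin 4 → R) : Matrix (Fin 3) (Fin 3) R :=
  !![q 0^2 + q 1^2 - q 2^2 - q 3^2, 2*q 1*q 2+2*q 0*q 3, 2*q 1*q 3-2*q 0*q 2;
     2*q 1*q 2-2*q 0*q 3, q 0^2 - q 1^2 + q 2^2 - q 3^2, 2*q 2*q 3+2*q 0*q 1;
     2*q 1*q 3+2*q 0*q 2, 2*q 2*q 3-2*q 0*q 1, q 0^2 - q 1^2 - q 2^2 + q 3^2]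

def nrm {R : Type} [CommRing R] (q : Fin 4 → R) : R := q 0^2 + q 1^2 + q 2^2 + q 3^2

def hat {R : Type} [CommRing R] (a : Fin 3 → R) : Matrix (Fin 3) (Fin 3) R :=
  !![0, -a 2, a 1; a 2, 0, -a 0; -a 1, a 0, 0]

section
variable {K : Type} [Field K]

def hq (I : K) (q : Fin 4 → K) : Matrix (Fin 2) (Fin 2) K :=
  !![q 0 + I * q 3, I * q 1 + q 2; I * q 1 - q 2, q 0 - I * q 3]

def mat2 (I : K) (y : Fin 3 → K) : Matrix (Fin 2) (Fin 2) K :=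
  !![y 0 - I * y 1, - y 2; - y 2, -(y 0 + I * y 1)]

def JJ : Matrix (Fin 2) (Fin 2) K := !![0, 1; -1, 0]

def bb2 (I : K) : (Fin 2 → K) →ₗ[K] (Fin 2 → K) →ₗ[K] (Fin 3 → K) :=
  LinearMap.mk₂ K (fun u v => ![u 0 * v 0 - u 1 * v 1, I * (u 0 * v 0 + u 1 * v 1), -(u 0 * v 1 + u 1 * v 0)])
    (by intro u u' v; ext i; fin_cases i <;> simp <;> ring)
    (by intro c u v; ext i; fin_cases i <;> simp <;> ring)
    (by intro u u' v; ext i; fin_cases i <;> simp <;> ring)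
    (by intro c u v; ext i; fin_cases i <;> simp <;> ring)

lemma bb2_apply (I : K) (u v : Fin 2 → K) : bb2 I u v =
  ![u 0 * v 0 - u 1 * v 1, I * (u 0 * v 0 + u 1 * v 1), -(u 0 * v 1 + u 1 * v 0)] := rfl

def dat2 (I : K) (hI : I * I = -1) : Dat K (Fin 2) (Fin 3 → K) Unit Empty {q : Fin 4 → K // nrm q = 1} where
  J := JJ
  mat := mat2 I
  bb := bb2 I
  ex := fun c => c.elim
  gY := fun q y => rot q.1 *ᵥ y
  gZ := fun _ z => z
  gV := fun q x => hq I q.1 *ᵥ x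
  mat_bb := by
    intro u v
    ext i j
    fin_cases i <;> fin_cases j <;> simp [mat2, bb2_apply, vecMulVec_apply] <;>
      first | ring1 | (linear_combination (u 0 * v 0 + u 1 * v 1) * hI) | (linear_combination -(u 0 * v 0 + u 1 * v 1) * hI)
  bb_symm := by
    intro u v
    ext i; fin_cases i <;> simp only [bb2_apply] <;> simp only [Fin.zero_eta, Fin.mk_one, Fin.reduceFinMk, cons_val] <;> ring
  gY_bb := by
    intro q u v
    ext i
    have hI2 : I ^ 2 = -1 := by rw [pow_two, hI]
    have hI3 : I ^ 3 = -I := by rw [pow_succ, hI2]; ring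
    fin_cases i <;> simp [bb2_apply, rot, hq, mulVec, dotProduct, Fin.sum_univ_three, Fin.sum_univ_two] <;>
      ring_nf <;> simp only [hI2, hI3] <;> ring
  hJ := by right; ext i j; fin_cases i <;> fin_cases j <;> simp [JJ]
  mat_symm := by intro y; ext i j; fin_cases i <;> fin_cases j <;> simp [mat2]
  ex_tr := fun c => c.elim
end
end Fr

namespace Fr
open StepL
section
variable {K : Type} [Field K]

lemma PF_poly {ι n : Type} [Finite ι] [Finite n] (f : (ι → n → K) → K) (hf : f ∈ PF (K := K) (ι → n → K)) :
    ∃ p : MvPolynomial (ι × n) K, ∀ x, f x = eval (fun s => x s.1 s.2) p := by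
  classical
  have := Fintype.ofFinite ι
  have := Fintype.ofFinite n
  let Ψ : MvPolynomial (ι × n) K →ₐ[K] ((ι → n → K) → K) := aeval (fun s x => x s.1 s.2)
  have hΨ : ∀ p x, Ψ p x = eval (fun s => x s.1 s.2) p := by
    intro p x
    have : (Pi.evalAlgHom K (fun _ : (ι → n → K) => K) x).comp Ψ = aeval (fun s : ι × n => x s.1 s.2) := by
      ext s; simp [Ψ]
    have h2 := DFunLike.congr_fun this p
    simpa [aeval_eq_eval] using h2
  have : PF (K := K) (ι → n → K) ≤ Ψ.range := by
    apply Algebra.adjoin_le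
    rintro _ ⟨φ, rfl⟩
    refine ⟨∑ i, ∑ j, C (φ (Pi.single i (Pi.single j 1))) * X (i, j), ?_⟩
    funext x
    change Ψ _ x = _
    rw [hΨ]
    simp only [map_sum, map_mul, eval_C, eval_X]
    have e : x = ∑ i, ∑ j, x i j • (Pi.single i (Pi.single j (1:K)) : ι → n → K) := by
      funext a b
      simp [Finset.sum_apply, Pi.single_apply, ite_apply]
      
    conv_rhs => rw [e]
    simp only [map_sum, map_smul, smul_eq_mul]
    simp only [mul_comm]
  obtain ⟨p, hp⟩ := this hf
  exact ⟨p, fun x => by rw [← hΨ, ← hp]; rfl⟩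

lemma hq_surj (h2 : (2:K) ≠ 0) (I : K) (hI : I * I = -1) (h : Matrix (Fin 2) (Fin 2) K) (hd : h.det = 1) :
    ∃ q : {q : Fin 4 → K // nrm q = 1}, hq I q.1 = h := by
  have hI0 : I ≠ 0 := by rintro rfl; simp at hI
  have hI2 : I ^ 2 = -1 := by rw [pow_two, hI]
  let q : Fin 4 → K := ![(h 0 0 + h 1 1)/2, -I*(h 0 1 + h 1 0)/2, (h 0 1 - h 1 0)/2, -I * (h 0 0 - h 1 1)/2]
  have e : hq I q = h := by
    ext i j
    fin_cases i <;> fin_cases j <;> simp [hq, q] <;> field_simp <;> ring_nf <;> (try rw [hI2]) <;> ring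
  refine ⟨⟨q, ?_⟩, e⟩
  have : nrm q = (hq I q).det := by
    rw [det_fin_two]; simp [nrm, hq]; ring_nf; rw [hI2]; ring
  rw [this, e, hd]

variable {κ : Type} [DecidableEq κ]

theorem base2 [Infinite K] (h2 : (2:K) ≠ 0) (I : K) (hI : I * I = -1) (ι : Type) [Finite ι]
    (f : Om K (Fin 2) (Fin 3 → K) Unit κ ι → K) (hf : f ∈ PF (K := K) (Om K (Fin 2) (Fin 3 → K) Unit κ ι))
    (hi : Inv (dat2 I hI) f) (hd : Dep ∅ f) : f ∈ Chain (dat2 I hI) κ ι := by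
  classical
  have := Fintype.ofFinite ι
  let g : (ι → Fin 2 → K) →ₗ[K] Om K (Fin 2) (Fin 3 → K) Unit κ ι :=
    LinearMap.inr K _ _ ∘ₗ LinearMap.inr K _ _
  have hF : (fun x => f (g x)) ∈ PF (K := K) (ι → Fin 2 → K) :=
    PF_comp g (fun φ => PF_lin (φ.comp g)) f hf
  obtain ⟨p, hp⟩ := PF_poly _ hF
  have hfp : ∀ q, f q = eval (fun s => q.2.2 s.1 s.2) p := by
    rintro ⟨S, z, x⟩
    rw [← hp]
    exact hd _ _ _ _ (by simp)
  have hB : p ∈ P1.B K ι := by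
    apply P1.fft
    intro h hdet
    obtain ⟨q, hq'⟩ := hq_surj h2 I hI h hdet
    apply MvPolynomial.funext
    intro x
    rw [P1.eval_act]
    have := hi q (0, (), fun i c => x (i, c))
    rw [hfp, hfp] at this
    convert this using 3
    funext s
    obtain ⟨i, c⟩ := s
    fin_cases c <;> simp [gact, dat2, hq', mulVec, dotProduct]
  let Ψ : MvPolynomial (ι × Fin 2) K →ₐ[K] (Om K (Fin 2) (Fin 3 → K) Unit κ ι → K) := aeval (fun s q => q.2.2 s.1 s.2)
  have hΨ : Ψ p = f := by
    funext q
    have : (Pi.evalAlgHom K (fun _ : Om K (Fin 2) (Fin 3 → K) Unit κ ι => K) q).comp Ψ = aeval (fun s : ι × Fin 2 => q.2.2 s.1 s.2) := by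
      ext s; simp [Ψ]
    have h2 := DFunLike.congr_fun this p
    rw [hfp]
    simpa [aeval_eq_eval] using h2
  rw [← hΨ]
  have : P1.B K ι ≤ (Chain (dat2 I hI) κ ι).comap Ψ := by
    apply Algebra.adjoin_le
    rintro _ ⟨⟨i, j⟩, rfl⟩
    apply Algebra.subset_adjoin
    right
    refine ⟨1, one_mem _, i, j, ?_⟩
    funext q
    simp [P1.br, Ψ, dat2, JJ, mulVec, dotProduct, Fin.sum_univ_two]
    ring
  exact this hB

lemma bb2_surj [IsAlgClosed K] (h2 : (2:K) ≠ 0) (I : K) (hI : I * I = -1) (y : Fin 3 → K) : ∃ u v, bb2 I u v = y := by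
  have key : ∀ α β γ : K, ∃ u v : Fin 2 → K, u 0 * v 0 = α ∧ u 1 * v 1 = β ∧ u 0 * v 1 + u 1 * v 0 = γ := by
    intro α β γ
    by_cases hα : α = 0
    · exact ⟨![0,1], ![γ, β], by simp [hα]⟩
    · obtain ⟨s, hs⟩ := IsAlgClosed.exists_pow_nat_eq (γ^2 - 4*α*β) (n := 2) (by norm_num)
      let ρ := (γ + s)/(2*α)
      have hρ : α * ρ^2 - γ * ρ + β = 0 := by
        simp only [ρ]; field_simp; linear_combination hs
      refine ⟨![1, ρ], ![α, γ - α * ρ], by simp, ?_, ?_⟩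
      · simp; linear_combination -hρ
      · simp; ring
  obtain ⟨u, v, h0, h1, h3⟩ := key ((y 0 - I * y 1)/2) (-(y 0 + I * y 1)/2) (-y 2)
  refine ⟨u, v, ?_⟩
  rw [bb2_apply, h0, h1, h3]
  ext i; fin_cases i <;> simp <;> field_simp <;> ring_nf
  have hI2 : I ^ 2 = -1 := by rw [pow_two, hI]
  rw [hI2]; ring

theorem ind2 [IsAlgClosed K] (h2 : (2:K) ≠ 0) (I : K) (hI : I * I = -1) (s : Finset κ) : ∀ (ι : Type) [Finite ι]
    (f : Om K (Fin 2) (Fin 3 → K) Unit κ ι → K), f ∈ PF (K := K) (Om K (Fin 2) (Fin 3 → K) Unit κ ι) →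
    Inv (dat2 I hI) f → Dep s f → f ∈ Chain (dat2 I hI) κ ι := by
  have := IsAlgClosed.instInfinite (K := K)
  induction s using Finset.induction_on with
  | empty => intro ι _ f hf hi hd; exact base2 h2 I hI ι f hf hi hd
  | insert k s hk IH =>
    intro ι _ f hf hi hd
    obtain ⟨h, hh, e⟩ := ind_step (dat2 I hI) h2 s k (fun ι _ f => IH ι f) ι f hf hi hd
    have : f = h := by
      funext q
      obtain ⟨u, v, huv⟩ := bb2_surj h2 I hI (q.1 k)
      have := e (q, u, v)
      have e2 : sub (dat2 I hI) k (q, u, v) = q := by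
        rw [sub]
        change (Function.update q.1 k (bb2 I u v), _, _) = _
        rw [huv]; simp
      rwa [e2] at this
    rw [this]; exact hh
end
end Fr

namespace Fr
open StepL
section
variable {K : Type} [Field K] {κ : Type}

def yv (K : Type) [Field K] {κ : Type} (k : κ) : Fin 3 → ((κ → Fin 3 → K) → K) := fun i y => y k i

def DD (K : Type) [Field K] (κ : Type) : Subalgebra K ((κ → Fin 3 → K) → K) :=
  Algebra.adjoin K ({f | ∃ a b : κ, f = yv K a ⬝ᵥ yv K b} ∪ {f | ∃ a b c : κ, f = (crossProduct (yv K a) (yv K b)) ⬝ᵥ (yv K c)})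

lemma DD_dot (a b : κ) : yv K a ⬝ᵥ yv K b ∈ DD K κ := Algebra.subset_adjoin (Or.inl ⟨a, b, rfl⟩)
lemma DD_det (a b c : κ) : (crossProduct (yv K a) (yv K b)) ⬝ᵥ (yv K c) ∈ DD K κ :=
  Algebra.subset_adjoin (Or.inr ⟨a, b, c, rfl⟩)

def MM (K : Type) [Field K] (κ : Type) : Submodule (DD K κ) (Fin 3 → ((κ → Fin 3 → K) → K)) :=
  Submodule.span _ ({f | ∃ a, f = yv K a} ∪ {f | ∃ a b : κ, f = crossProduct (yv K a) (yv K b)})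

lemma ccy {R : Type} [CommRing R] (a b c : Fin 3 → R) :
    crossProduct (crossProduct a b) c = (a ⬝ᵥ c) • b - (b ⬝ᵥ c) • a := by
  ext i
  fin_cases i <;> simp [cross_apply, dotProduct, Fin.sum_univ_three] <;> ring

lemma MM_step (β : Fin 3 → ((κ → Fin 3 → K) → K)) (hβ : β ∈ MM K κ) (k : κ) :
    β ⬝ᵥ yv K k ∈ DD K κ ∧ crossProduct β (yv K k) ∈ MM K κ := by
  have sm : ∀ (r : (κ → Fin 3 → K) → K) (hr : r ∈ DD K κ) v, v ∈ MM K κ → r • v ∈ MM K κ := by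
    intro r hr v hv
    exact (MM K κ).smul_mem ⟨r, hr⟩ hv
  induction hβ using Submodule.span_induction with
  | mem x hx =>
    rcases hx with ⟨a, rfl⟩ | ⟨a, b, rfl⟩
    · exact ⟨DD_dot a k, Submodule.subset_span (Or.inr ⟨a, k, rfl⟩)⟩
    · refine ⟨DD_det a b k, ?_⟩
      rw [ccy]
      exact sub_mem (sm _ (DD_dot _ _) _ (Submodule.subset_span (Or.inl ⟨b, rfl⟩)))
        (sm _ (DD_dot _ _) _ (Submodule.subset_span (Or.inl ⟨a, rfl⟩)))
  | zero => simp
  | add x y _ _ hx hy =>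
    rw [add_dotProduct, map_add, LinearMap.add_apply]
    exact ⟨add_mem hx.1 hy.1, add_mem hx.2 hy.2⟩
  | smul a x _ hx =>
    have e : a • x = (a : (κ → Fin 3 → K) → K) • x := rfl
    rw [e, smul_dotProduct, map_smul, LinearMap.smul_apply]
    exact ⟨mul_mem a.2 hx.1, sm _ a.2 _ hx.2⟩

lemma phi_mul (I : K) (hI : I * I = -1) (y z : Fin 3 → K) : (mat2 I y * JJ) * (mat2 I z * JJ) =
    (y ⬝ᵥ z) • (1 : Matrix (Fin 2) (Fin 2) K) + I • (mat2 I (crossProduct y z) * JJ) := by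
  have hI2 : I ^ 2 = -1 := by rw [pow_two, hI]
  ext i j
  fin_cases i <;> fin_cases j <;>
   simp [mat2, JJ, cross_apply, dotProduct, Fin.sum_univ_three, mul_apply, Fin.sum_univ_two] <;> ring_nf <;>
   (try rw [hI2]) <;> ring

lemma word2 (I : K) (hI : I * I = -1) (w : (κ → Fin 3 → K) × Unit → Matrix (Fin 2) (Fin 2) K)
    (hw : w ∈ words κ (dat2 I hI)) : ∃ α ∈ DD K κ, ∃ β ∈ MM K κ, ∀ y,
      w (y, ()) = α y • (1 : Matrix (Fin 2) (Fin 2) K) + mat2 I (fun i => β i y) * JJ := by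
  induction hw using Submonoid.closure_induction_right with
  | one =>
    refine ⟨1, one_mem _, 0, zero_mem _, ?_⟩
    intro y
    ext i j
    fin_cases i <;> fin_cases j <;> simp [mat2, JJ]
  | mul_right w hw l hl ih =>
    obtain ⟨α, hα, β, hβ, h⟩ := ih
    rcases hl with ⟨k, rfl⟩ | ⟨c, _⟩
    swap
    · exact c.elim
    obtain ⟨h1, h3⟩ := MM_step β hβ k
    refine ⟨_, h1, α • yv K k + algebraMap K ((κ → Fin 3 → K) → K) I • crossProduct β (yv K k), ?_, ?_⟩
    · exact add_mem ((MM K κ).smul_mem ⟨α, hα⟩ (Submodule.subset_span (Or.inl ⟨k, rfl⟩)))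
        ((MM K κ).smul_mem ⟨_, Subalgebra.algebraMap_mem _ I⟩ h3)
    · intro y
      rw [Pi.mul_apply, h]
      change _ * (mat2 I (y k) * JJ) = _
      rw [add_mul, phi_mul I hI]
      ext i j
      fin_cases i <;> fin_cases j <;>
        simp [mat2, JJ, cross_apply, dotProduct, Fin.sum_univ_three, mul_apply, Fin.sum_univ_two, yv] <;> ring

theorem so3 [IsAlgClosed K] (h2 : (2:K) ≠ 0) [Finite κ] (f : (κ → Fin 3 → K) → K)
    (hf : f ∈ PF (K := K) (κ → Fin 3 → K)) (hi : ∀ q : Fin 4 → K, nrm q = 1 → ∀ y, f (fun k => rot q *ᵥ y k) = f y) :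
    f ∈ DD K κ := by
  classical
  have := Fintype.ofFinite κ
  obtain ⟨I, hI⟩ := IsAlgClosed.exists_pow_nat_eq (-1 : K) (n := 2) (by norm_num)
  replace hI : I * I = -1 := by rw [← pow_two, hI]
  have h := ind2 h2 I hI (Finset.univ : Finset κ) Empty (fun q => f q.1)
    (PF_comp (V' := Om K (Fin 2) (Fin 3 → K) Unit κ Empty) (fun q => q.1) (fun φ => PF_lin (V := Om K (Fin 2) (Fin 3 → K) Unit κ Empty) (φ.comp (LinearMap.fst K (κ → Fin 3 → K) (Unit × (Empty → Fin 2 → K))))) f hf)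
    (fun g q => hi g.1 g.2 q.1) (fun S S' z x h => by
      have : S = S' := funext fun k => h k (Finset.mem_univ _)
      rw [this])
  have h3 : Chain (dat2 I hI) κ Empty ≤ (DD K κ).comap (pb (fun y : κ → Fin 3 → K => ((y, (), fun e => e.elim) : Om K (Fin 2) (Fin 3 → K) Unit κ Empty))) := by
    apply Algebra.adjoin_le
    rintro _ (⟨w, hw, rfl⟩ | ⟨w, hw, a, b, rfl⟩)
    · obtain ⟨α, hα, β, hβ, h⟩ := word2 I hI w hw
      have : (pb (fun y : κ → Fin 3 → K => ((y, (), fun e => e.elim) : Om K (Fin 2) (Fin 3 → K) Unit κ Empty)))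
        (fun q : Om K (Fin 2) (Fin 3 → K) Unit κ Empty => (w (q.1, q.2.1)).trace) = (2:K) • α := by
        funext y
        rw [pb_apply]
        simp only [h]
        simp [mat2, JJ, trace_fin_two]
        ring
      have h5 : (2:K) • α ∈ DD K κ := Subalgebra.smul_mem _ hα _
      rw [← this] at h5
      exact h5
    · exact a.elim
  exact h3 h
end
end Fr

namespace Fr
open StepL
section
variable {K : Type} [Field K]

variable (K) in
def SymM : Submodule K (Matrix (Fin 3) (Fin 3) K) where
  carrier := {S | Sᵀ = S}
  add_mem' := by intro a b ha hb; simp only [Set.mem_setOf_eq] at *; rw [transpose_add, ha, hb]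
  zero_mem' := by simp
  smul_mem' := by intro c a ha; simp only [Set.mem_setOf_eq] at *; rw [transpose_smul, ha]

def bb4 : (Fin 3 → K) →ₗ[K] (Fin 3 → K) →ₗ[K] SymM K :=
  LinearMap.mk₂ K (fun u v => ⟨vecMulVec u v + vecMulVec v u, by
      change _ᵀ = _; rw [transpose_add, transpose_vecMulVec, transpose_vecMulVec, add_comm]⟩)
    (by intro u u' v; ext i j; simp [vecMulVec_apply]; try ring)
    (by intro c u v; ext i j; simp [vecMulVec_apply]; try ring)
    (by intro u u' v; ext i j; simp [vecMulVec_apply]; try ring)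
    (by intro c u v; ext i j; simp [vecMulVec_apply]; try ring)

lemma bb4_apply (u v : Fin 3 → K) : (bb4 u v : Matrix (Fin 3) (Fin 3) K) = vecMulVec u v + vecMulVec v u := rfl

variable (K) in
abbrev GG := {p : (Fin 4 → K) × K // nrm p.1 = 1 ∧ p.2 * p.2 = 1}

def dat4 (C : Type) : Dat K (Fin 3) (SymM K) (C → Fin 3 → K) C (GG K) where
  J := 1
  mat := fun S => S.1
  bb := bb4
  ex := fun c z => hat (z c)
  gY := fun g S => ⟨rot g.1.1 * S.1 * (rot g.1.1)ᵀ, by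
    have : S.1ᵀ = S.1 := S.2
    change _ᵀ = _; simp only [transpose_mul, transpose_transpose, this, mul_assoc]⟩
  gZ := fun g z c => rot g.1.1 *ᵥ z c
  gV := fun g x => g.1.2 • (rot g.1.1 *ᵥ x)
  mat_bb := fun u v => rfl
  bb_symm := by intro u v; ext i j; simp [bb4_apply, add_comm]
  gY_bb := by
    intro g u v
    apply Subtype.ext
    simp only [bb4_apply, mul_add, add_mul, vecMulVec_smul, smul_vecMulVec, smul_smul, g.2.2, one_smul]
    simp only [vecMulVec_eq Unit, replicateCol_mulVec, replicateRow_mulVec, Matrix.mul_assoc, transpose_mul, transpose_transpose, transpose_replicateCol]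
  hJ := Or.inl (by simp)
  mat_symm := fun y => y.2
  ex_tr := by
    intro c; right; intro z
    ext i j; fin_cases i <;> fin_cases j <;> simp [hat]

variable {κ C ι : Type}

abbrev AA (K C ι : Type) := ((C ⊕ ι) → Fin 3 → K) → K

def prj (q : Om K (Fin 3) (SymM K) (C → Fin 3 → K) κ ι) : (C ⊕ ι) → Fin 3 → K := Sum.elim q.2.1 q.2.2

/-- D -/
def D4 (K C ι κ : Type) [Field K] : Subalgebra K (AA K C ι) := (Chain (dat4 (K := K) C) κ ι).comap (pb prj)

def TT (K C ι : Type) [Field K] : Subalgebra K (Matrix (Fin 3) (Fin 3) (AA K C ι)) :=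
  Algebra.adjoin K {M | ∃ a : C, M = hat (yv K (Sum.inl a))}

lemma TTw (M : Matrix (Fin 3) (Fin 3) (AA K C ι)) (hM : M ∈ Submonoid.closure {M | ∃ a : C, M = hat (yv K (Sum.inl a))}) :
    ∃ w ∈ words κ (dat4 (K := K) C), ∀ (q : Om K (Fin 3) (SymM K) (C → Fin 3 → K) κ ι) i j, M i j (prj q) = w (q.1, q.2.1) i j := by
  induction hM using Submonoid.closure_induction with
  | mem x hx =>
    obtain ⟨a, rfl⟩ := hx
    refine ⟨_, Submonoid.subset_closure (Or.inr ⟨a, rfl⟩), ?_⟩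
    intro q i j
    fin_cases i <;> fin_cases j <;> simp [dat4, hat, yv, prj]
  | one =>
    refine ⟨1, one_mem _, ?_⟩
    intro q i j
    simp [one_apply, Pi.one_apply]
    split_ifs <;> simp
  | mul x y _ _ hx hy =>
    obtain ⟨w, hw, h⟩ := hx
    obtain ⟨w', hw', h'⟩ := hy
    refine ⟨w * w', mul_mem hw hw', ?_⟩
    intro q i j
    simp [mul_apply, h, h', Finset.sum_apply]

lemma TT_tr (M : Matrix (Fin 3) (Fin 3) (AA K C ι)) (hM : M ∈ TT K C ι) : M.trace ∈ D4 K C ι κ := by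
  rw [TT, ← Subalgebra.mem_toSubmodule, Algebra.adjoin_eq_span] at hM
  induction hM using Submodule.span_induction with
  | mem x hx =>
    obtain ⟨w, hw, h⟩ := TTw (κ := κ) x hx
    apply Algebra.subset_adjoin
    left
    refine ⟨w, hw, ?_⟩
    funext q
    change x.trace (prj q) = _
    simp [trace, Finset.sum_apply, h]
  | zero => simp
  | add x y _ _ hx hy => rw [trace_add]; exact add_mem hx hy
  | smul a x _ hx => rw [trace_smul]; exact Subalgebra.smul_mem _ hx _

lemma TT_bil (M : Matrix (Fin 3) (Fin 3) (AA K C ι)) (hM : M ∈ TT K C ι) (a b : ι) :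
    yv K (Sum.inr a) ⬝ᵥ (M *ᵥ yv K (Sum.inr b)) ∈ D4 K C ι κ := by
  rw [TT, ← Subalgebra.mem_toSubmodule, Algebra.adjoin_eq_span] at hM
  induction hM using Submodule.span_induction with
  | mem x hx =>
    obtain ⟨w, hw, h⟩ := TTw (κ := κ) x hx
    apply Algebra.subset_adjoin
    right
    refine ⟨w, hw, a, b, ?_⟩
    funext q
    change (yv K (Sum.inr a) ⬝ᵥ (x *ᵥ yv K (Sum.inr b))) (prj q) = _
    simp [dotProduct, mulVec, Finset.sum_apply, yv, dat4]
    simp only [h]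
    simp [prj]
  | zero => simp
  | add x y _ _ hx hy => rw [add_mulVec, dotProduct_add]; exact add_mem hx hy
  | smul c x _ hx => rw [smul_mulVec, dotProduct_smul]; exact Subalgebra.smul_mem _ hx _

/-- axial vectors -/
def Ax (K C ι : Type) [Field K] : Set (Fin 3 → AA K C ι) :=
  {v | ∃ a : C, v = yv K (Sum.inl a)} ∪ {v | ∃ a b : C, v = crossProduct (yv K (Sum.inl a)) (yv K (Sum.inl b))}

lemma Ax_hat (c : Fin 3 → AA K C ι) (hc : c ∈ Ax K C ι) : hat c ∈ TT K C ι := by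
  have h1 : ∀ a : C, hat (yv K (Sum.inl a)) ∈ TT K C ι := fun a => Algebra.subset_adjoin ⟨a, rfl⟩
  rcases hc with ⟨a, rfl⟩ | ⟨a, b, rfl⟩
  · exact h1 a
  · have : ∀ u v : Fin 3 → AA K C ι, hat (crossProduct u v) = hat u * hat v - hat v * hat u := by
      intro u v
      ext i j : 2
      fin_cases i <;> fin_cases j <;> simp [hat, cross_apply, mul_apply, Fin.sum_univ_three] <;> ring
    rw [this]
    exact sub_mem (mul_mem (h1 _) (h1 _)) (mul_mem (h1 _) (h1 _))

section ids
variable {R : Type} [CommRing R]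
lemma id_cc (c c' : Fin 3 → R) : (hat c * hat c').trace = -(2 * (c ⬝ᵥ c')) := by
  simp [trace, hat, mul_apply, Fin.sum_univ_three, dotProduct]; ring
lemma id_cxy (c x y : Fin 3 → R) : (crossProduct x y) ⬝ᵥ c = y ⬝ᵥ (hat c *ᵥ x) := by
  simp [hat, mulVec, Fin.sum_univ_three, dotProduct, cross_apply]; ring
lemma id_cxcy (c c' x y : Fin 3 → R) : (c ⬝ᵥ x) * (c' ⬝ᵥ y) = y ⬝ᵥ ((hat c * hat c') *ᵥ x) + (c ⬝ᵥ c') * (x ⬝ᵥ y) - 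
    0 := by
  simp [hat, mulVec, Fin.sum_univ_three, dotProduct, mul_apply]; ring
lemma id_cdet (c w x y z : Fin 3 → R) : (c ⬝ᵥ w) * (crossProduct x y ⬝ᵥ z) = (x ⬝ᵥ w) * (crossProduct y z ⬝ᵥ c) +
    (y ⬝ᵥ w) * (crossProduct z x ⬝ᵥ c) + (z ⬝ᵥ w) * (crossProduct x y ⬝ᵥ c) := by
  simp [Fin.sum_univ_three, dotProduct, cross_apply]; ring
lemma id_detdet (x y z x' y' z' : Fin 3 → R) : (crossProduct x y ⬝ᵥ z) * (crossProduct x' y' ⬝ᵥ z') = 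
    (x ⬝ᵥ x') * ((y ⬝ᵥ y') * (z ⬝ᵥ z') - (y ⬝ᵥ z') * (z ⬝ᵥ y')) -
    (x ⬝ᵥ y') * ((y ⬝ᵥ x') * (z ⬝ᵥ z') - (y ⬝ᵥ z') * (z ⬝ᵥ x')) +
    (x ⬝ᵥ z') * ((y ⬝ᵥ x') * (z ⬝ᵥ y') - (y ⬝ᵥ y') * (z ⬝ᵥ x')) := by
  simp [Fin.sum_univ_three, dotProduct, cross_apply]; ring
lemma id_cyc (x y z : Fin 3 → R) : crossProduct x y ⬝ᵥ z = crossProduct y z ⬝ᵥ x := by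
  simp [Fin.sum_univ_three, dotProduct, cross_apply]; ring
end ids

lemma D4_cc (h2 : (2:K) ≠ 0) (c c' : Fin 3 → AA K C ι) (hc : c ∈ Ax K C ι) (hc' : c' ∈ Ax K C ι) : c ⬝ᵥ c' ∈ D4 K C ι κ := by
  have h := TT_tr (κ := κ) _ (mul_mem (Ax_hat c hc) (Ax_hat c' hc'))
  rw [id_cc] at h
  have e : c ⬝ᵥ c' = (-(2:K)⁻¹) • (-(2 * (c ⬝ᵥ c'))) := by
    funext q; simp; field_simp
  rw [e]; exact Subalgebra.smul_mem _ h _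

lemma D4_xy (x y : ι) : (yv K (Sum.inr x) : Fin 3 → AA K C ι) ⬝ᵥ yv K (Sum.inr y) ∈ D4 K C ι κ := by
  have := TT_bil (κ := κ) (1 : Matrix (Fin 3) (Fin 3) (AA K C ι)) (one_mem _) x y
  rwa [one_mulVec] at this

lemma D4_xyc (c : Fin 3 → AA K C ι) (hc : c ∈ Ax K C ι) (x y : ι) :
    (crossProduct (yv K (Sum.inr x)) (yv K (Sum.inr y)) : Fin 3 → AA K C ι) ⬝ᵥ c ∈ D4 K C ι κ := by
  rw [id_cxy]; exact TT_bil _ (Ax_hat c hc) _ _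

def ZZ (K C ι : Type) [Field K] : Set (AA K C ι) :=
  {f | ∃ c ∈ Ax K C ι, ∃ x : ι, f = c ⬝ᵥ yv K (Sum.inr x)} ∪
  {f | ∃ x y z : ι, f = crossProduct (yv K (Sum.inr x)) (yv K (Sum.inr y)) ⬝ᵥ yv K (Sum.inr z)}

def flip (y : (C ⊕ ι) → Fin 3 → K) : (C ⊕ ι) → Fin 3 → K := Sum.elim (fun a => y (Sum.inl a)) (fun a => -y (Sum.inr a))

lemma ZZ_flip (f : AA K C ι) (hf : f ∈ ZZ K C ι) : pb flip f = -f := by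
  funext y
  rw [pb_apply]
  rcases hf with ⟨c, (⟨a, rfl⟩ | ⟨a, b, rfl⟩), x, rfl⟩ | ⟨x, y, z, rfl⟩ <;>
  simp [flip, yv, dotProduct, cross_apply, Fin.sum_univ_three] <;> ring

lemma Chain_flip (f : Om K (Fin 3) (SymM K) (C → Fin 3 → K) κ ι → K) (hf : f ∈ Chain (dat4 (K := K) C) κ ι) :
    ∀ q, f (q.1, q.2.1, fun a => - q.2.2 a) = f q := by
  induction hf using Algebra.adjoin_induction with
  | mem f hf =>
    rcases hf with ⟨w, hw, rfl⟩ | ⟨w, hw, a, b, rfl⟩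
    · intro q; rfl
    · intro q; simp [mulVec_neg]
  | algebraMap r => intro q; rfl
  | add x y _ _ hx hy => intro q; simp only [Pi.add_apply, hx, hy]
  | mul x y _ _ hx hy => intro q; simp only [Pi.mul_apply, hx, hy]

lemma D4_flip (f : AA K C ι) (hf : f ∈ D4 K C ι κ) : pb flip f = f := by
  funext y
  have h := Chain_flip _ hf (0, fun a => y (Sum.inl a), fun a => y (Sum.inr a))
  change f (prj _) = f (prj _) at h
  rw [pb_apply]
  convert h using 2 <;>
  (funext s; cases s <;> rfl)

lemma D4_ZZ (h2 : (2:K) ≠ 0) (f g : AA K C ι) (hf : f ∈ ZZ K C ι) (hg : g ∈ ZZ K C ι) : f * g ∈ D4 K C ι κ := by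
  rcases hf with ⟨c, hc, x, rfl⟩ | ⟨x, y, z, rfl⟩ <;> rcases hg with ⟨c', hc', x', rfl⟩ | ⟨x', y', z', rfl⟩
  · rw [id_cxcy, sub_zero]
    exact add_mem (TT_bil _ (mul_mem (Ax_hat c hc) (Ax_hat c' hc')) _ _) (mul_mem (D4_cc h2 c c' hc hc') (D4_xy _ _))
  · rw [id_cdet]
    exact add_mem (add_mem (mul_mem (D4_xy _ _) (D4_xyc _ hc _ _)) (mul_mem (D4_xy _ _) (D4_xyc _ hc _ _)))
     (mul_mem (D4_xy _ _) (D4_xyc _ hc _ _))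
  · rw [mul_comm, id_cdet]
    exact add_mem (add_mem (mul_mem (D4_xy _ _) (D4_xyc _ hc' _ _)) (mul_mem (D4_xy _ _) (D4_xyc _ hc' _ _)))
     (mul_mem (D4_xy _ _) (D4_xyc _ hc' _ _))
  · rw [id_detdet]
    have h := fun a b => D4_xy (K := K) (C := C) (ι := ι) (κ := κ) a b
    have h' : ∀ a b c d e f, _ := fun a b c d e f => mul_mem (h a b) (sub_mem (mul_mem (h c d) (h e f)) (mul_mem (h c f) (h e d)))
    exact add_mem (sub_mem (h' _ _ _ _ _ _) (h' _ _ _ _ _ _)) (h' _ _ _ _ _ _)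

lemma DD_le (h2 : (2:K) ≠ 0) : DD K (C ⊕ ι) ≤ Algebra.adjoin K ((D4 K C ι κ : Set (AA K C ι)) ∪ ZZ K C ι) := by
  have inD : ∀ f : AA K C ι, f ∈ D4 K C ι κ → f ∈ Algebra.adjoin K ((D4 K C ι κ : Set (AA K C ι)) ∪ ZZ K C ι) :=
    fun f hf => Algebra.subset_adjoin (Or.inl hf)
  have inZ : ∀ f : AA K C ι, f ∈ ZZ K C ι → f ∈ Algebra.adjoin K ((D4 K C ι κ : Set (AA K C ι)) ∪ ZZ K C ι) :=
    fun f hf => Algebra.subset_adjoin (Or.inr hf)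
  have a1 : ∀ a : C, yv K (Sum.inl a) ∈ Ax K C ι := fun a => Or.inl ⟨a, rfl⟩
  have a2 : ∀ a b : C, crossProduct (yv K (Sum.inl a)) (yv K (Sum.inl b)) ∈ Ax K C ι := fun a b => Or.inr ⟨a, b, rfl⟩
  apply Algebra.adjoin_le
  rintro _ (⟨a | a, b | b, rfl⟩ | ⟨a | a, b | b, c | c, rfl⟩)
  · exact inD _ (D4_cc h2 _ _ (a1 _) (a1 _))
  · exact inZ _ (Or.inl ⟨_, a1 _, _, rfl⟩)
  · rw [dotProduct_comm]; exact inZ _ (Or.inl ⟨_, a1 _, _, rfl⟩)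
  · exact inD _ (D4_xy _ _)
  · exact inD _ (D4_cc h2 _ _ (a2 _ _) (a1 _))
  · exact inZ _ (Or.inl ⟨_, a2 _ _, _, rfl⟩)
  · rw [← id_cyc]; exact inZ _ (Or.inl ⟨_, a2 _ _, _, rfl⟩)
  · rw [id_cyc]; exact inD _ (D4_xyc _ (a1 _) _ _)
  · rw [id_cyc]; exact inZ _ (Or.inl ⟨_, a2 _ _, _, rfl⟩)
  · rw [← id_cyc]; exact inD _ (D4_xyc _ (a1 _) _ _)
  · exact inD _ (D4_xyc _ (a1 _) _ _)
  · exact inZ _ (Or.inr ⟨_, _, _, rfl⟩)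

variable [DecidableEq κ]

theorem base4 [IsAlgClosed K] (h2 : (2:K) ≠ 0) [Finite C] (ι : Type) [Finite ι]
    (f : Om K (Fin 3) (SymM K) (C → Fin 3 → K) κ ι → K) (hf : f ∈ PF (K := K) (Om K (Fin 3) (SymM K) (C → Fin 3 → K) κ ι))
    (hi : Inv (dat4 C) f) (hd : Dep ∅ f) : f ∈ Chain (dat4 C) κ ι := by
  let L : ((C ⊕ ι) → Fin 3 → K) →ₗ[K] Om K (Fin 3) (SymM K) (C → Fin 3 → K) κ ι :=
    { toFun := fun y => (0, fun a => y (Sum.inl a), fun a => y (Sum.inr a))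
      map_add' := by intro x y; simp only [Prod.mk_add_mk, add_zero]; rfl
      map_smul' := by intro c y; simp only [Prod.smul_mk, smul_zero]; rfl }
  have hd' : ∀ q q' : Om K (Fin 3) (SymM K) (C → Fin 3 → K) κ ι, q.2 = q'.2 → f q = f q' := by
    rintro ⟨S, z, x⟩ ⟨S', z', x'⟩ h
    simp only [Prod.mk.injEq] at h
    obtain ⟨rfl, rfl⟩ := h
    exact hd _ _ _ _ (by simp)
  let f' : AA K C ι := fun y => f (L y)
  have hfe : f = pb prj f' := by
    funext q
    exact hd _ _ _ _ (by simp)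
  have hDD : f' ∈ DD K (C ⊕ ι) := by
    apply so3 h2
    · exact PF_comp L (fun φ => PF_lin (φ.comp L)) f hf
    · intro q hq y
      have h := hi ⟨(q, 1), hq, by simp⟩ (L y)
      change f _ = f _
      rw [← h]
      apply hd'
      simp [gact, dat4, L]
  have : f' ∈ D4 K C ι κ := by
    refine symm_lemma h2 (D4 K C ι κ) (pb flip) D4_flip (ZZ K C ι) ?_ ?_ f' (DD_le h2 hDD) ?_
    · intro z hz
      rw [ZZ_flip z hz, add_neg_cancel]; exact zero_mem _
    · intro z hz z' hz'
      rw [ZZ_flip z hz, ZZ_flip z' hz']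
      have e : (z - -z) * (z' - -z') = (4 : K) • (z * z') := by funext y; simp; ring
      rw [e]
      exact Subalgebra.smul_mem _ (D4_ZZ h2 _ _ hz hz') _
    · funext y
      rw [pb_apply]
      have h := hi ⟨(![1,0,0,0], -1), by simp [nrm], by simp⟩ (L y)
      change f _ = f _
      have hr : rot (![1,0,0,0] : Fin 4 → K) = 1 := by
        ext i j; fin_cases i <;> fin_cases j <;> simp [rot]
      rw [← h]
      apply hd'
      simp [gact, dat4, L, hr, flip]
  rw [hfe]; exact this
end
end Fr

namespace Fr
open StepL

lemma mul3 {R : Type} [CommRing R] (M N : Matrix (Fin 3) (Fin 3) R) (i j) :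
  (M * N) i j = M i 0 * N 0 j + M i 1 * N 1 j + M i 2 * N 2 j := by
  simp [mul_apply, Fin.sum_univ_three]

def E2 {R : Type} [CommRing R] (M : Matrix (Fin 3) (Fin 3) R) : R :=
  M 0 0 * M 1 1 - M 0 1 * M 1 0 + (M 0 0 * M 2 2 - M 0 2 * M 2 0) + (M 1 1 * M 2 2 - M 1 2 * M 2 1)

lemma CH3 {R : Type} [CommRing R] (M : Matrix (Fin 3) (Fin 3) R) :
    M * M * M = M.trace • (M * M) - E2 M • M + M.det • 1 := by
  ext i j
  fin_cases i <;> fin_cases j <;>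
    simp [mul3, trace, E2, det_fin_three, Fin.sum_univ_three] <;> ring

lemma E2_eq {R : Type} [CommRing R] (M : Matrix (Fin 3) (Fin 3) R) : (M * M).trace = M.trace ^ 2 - 2 * E2 M := by
  simp [trace, E2, mul3, Fin.sum_univ_three]; ring

section
variable {K : Type} [Field K]

lemma eigen3 [IsAlgClosed K] (S : Matrix (Fin 3) (Fin 3) K) : ∃ a b c : K, ∀ x, (x • 1 - S).det = (x-a)*(x-b)*(x-c) := by
  have h1 := IsAlgClosed.splits S.charpoly
  have h2 : S.charpoly.roots.card = 3 := by
    have := IsAlgClosed.card_roots_eq_natDegree (p := S.charpoly)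
    rw [this, charpoly_natDegree_eq_dim]; simp
  obtain ⟨a, b, c, habc⟩ := Multiset.card_eq_three.mp h2
  refine ⟨a, b, c, fun x => ?_⟩
  have h3 := h1.eq_prod_roots_of_monic (charpoly_monic S)
  rw [habc] at h3
  have h4 := eval_charpoly S x
  rw [h3] at h4
  simp at h4
  rw [smul_one_eq_diagonal]
  rw [show (x - a) * (x - b) * (x - c) = (x - a) * ((x - b) * (x - c)) by ring, h4]

lemma pow_sum3 (h2 : (2:K) ≠ 0) (S : Matrix (Fin 3) (Fin 3) K) (a b c : K) (h : ∀ x : K, (x • 1 - S).det = (x-a)*(x-b)*(x-c)) (j : ℕ) :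
    (S ^ j).trace = a^j + b^j + c^j := by
  have hx : ∀ x : K, (x • 1 - S).det = x^3 - S.trace * x^2 + E2 S * x - S.det := by
    intro x
    simp [det_fin_three, E2, trace, Fin.sum_univ_three, one_apply]; ring
  have h0 := h 0
  have h1 := h 1
  have hm := h (-1)
  rw [hx] at h0 h1 hm
  have e3 : S.det = a * b * c := by linear_combination -h0
  have e1 : S.trace = a + b + c := by
    have : (2:K) * (S.trace - (a+b+c)) = 0 := by linear_combination -h1 - hm + 2*h0
    rcases mul_eq_zero.mp this with h | h
    · exact absurd h h2
    · linear_combination h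
  have e2 : E2 S = a*b+a*c+b*c := by linear_combination h1 + e1 + e3
  have hrec : ∀ j, (S^(j+3)).trace = S.trace * (S^(j+2)).trace - E2 S * (S^(j+1)).trace + S.det * (S^j).trace := by
    intro j
    have : S^(j+3) = S.trace • S^(j+2) - E2 S • S^(j+1) + S.det • S^j := by
      have h := CH3 S
      calc S^(j+3) = S^j * (S * S * S) := by simp only [pow_succ, mul_assoc]
        _ = _ := by rw [h]; simp only [mul_add, mul_sub, Algebra.mul_smul_comm, pow_succ, mul_assoc, mul_one]
    rw [this]; simp
  induction j using Nat.strong_induction_on with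
  | _ j ih =>
    match j with
    | 0 => simp; norm_num
    | 1 => simp [e1]
    | 2 => rw [pow_two, E2_eq, e1, e2]; ring
    | j+3 => rw [hrec, ih (j+2) (by omega), ih (j+1) (by omega), ih j (by omega), e1, e2, e3]; ring

lemma sym_key [IsAlgClosed K] (h2 : (2:K) ≠ 0) : ∀ α β γ : K, ∃ u0 u1 v0 v1 : K, 2 * (u0 * v0) = α ∧ 2 * (u1 * v1) = β ∧ u0 * v1 + u1 * v0 = γ := by
  intro α β γ
  by_cases hα : α = 0
  · exact ⟨0, 1, γ, β/2, by simp [hα], by field_simp, by simp⟩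
  · obtain ⟨s, hs⟩ := IsAlgClosed.exists_pow_nat_eq (γ^2 - α*β) (n := 2) (by norm_num)
    let ρ := (γ + s)/α
    have hρ : α * ρ^2 - 2 * γ * ρ + β = 0 := by
      simp only [ρ]; field_simp; linear_combination hs
    refine ⟨1, ρ, α/2, γ - α/2 * ρ, by field_simp, ?_, by ring⟩
    field_simp
    linear_combination -hρ

lemma sym_sing [IsAlgClosed K] (h2 : (2:K) ≠ 0) (M : Matrix (Fin 3) (Fin 3) K) (hM : Mᵀ = M) (hd : M.det = 0) :
    ∃ u v, M = vecMulVec u v + vecMulVec v u := by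
  have key : ∀ (M : Matrix (Fin 3) (Fin 3) K) (hM : Mᵀ = M) (w : Fin 3 → K) (hw : w 2 ≠ 0) (h : M *ᵥ w = 0), 
      ∃ u v, M = vecMulVec u v + vecMulVec v u := by
    intro M hM w hw h
    obtain ⟨u0, u1, v0, v1, h00, h11, h01⟩ := sym_key h2 (M 0 0) (M 1 1) (M 0 1)
    have hs : ∀ i j, M i j = M j i := fun i j => by exact congrFun (congrFun hM.symm i) j
    have e0 := congrFun h 0
    have e1 := congrFun h 1
    have e2 := congrFun h 2
    simp [mulVec, dotProduct, Fin.sum_univ_three] at e0 e1 e2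
    have f0 : M 0 2 = -(M 0 0 * w 0 + M 0 1 * w 1)/w 2 := by field_simp; linear_combination e0
    have f1 : M 1 2 = -(M 0 1 * w 0 + M 1 1 * w 1)/w 2 := by field_simp; rw [hs 0 1]; linear_combination e1
    have f2 : M 2 2 = -(M 0 2 * w 0 + M 1 2 * w 1)/w 2 := by field_simp; rw [hs 0 2, hs 1 2]; linear_combination e2
    refine ⟨![u0, u1, -(u0 * w 0 + u1 * w 1)/w 2], ![v0, v1, -(v0 * w 0 + v1 * w 1)/w 2], ?_⟩
    ext i j
    fin_cases i <;> fin_cases j <;> simp [vecMulVec_apply]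
    · rw [← h00]; ring
    · rw [← h01]; ring
    · rw [f0, ← h00, ← h01]; field_simp; ring
    · rw [hs, ← h01]; ring
    · rw [← h11]; ring
    · rw [f1, ← h11, ← h01]; field_simp; ring
    · rw [hs, f0, ← h00, ← h01]; field_simp; ring
    · rw [hs, f1, ← h11, ← h01]; field_simp; ring
    · rw [f2, f1, f0, ← h00, ← h11, ← h01]; field_simp; ring
  obtain ⟨w, hw, h⟩ := exists_mulVec_eq_zero_iff.mpr hd
  obtain ⟨i, hi⟩ := Function.ne_iff.mp hw
  let σ : Equiv.Perm (Fin 3) := Equiv.swap i 2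
  obtain ⟨u, v, huv⟩ := key (M.submatrix σ σ) (by rw [transpose_submatrix, hM]) (w ∘ σ) (by simpa [σ] using hi) (by
    have := submatrix_mulVec_equiv M w σ σ
    funext a
    have h3 : (M *ᵥ w) (σ a) = 0 := by rw [h]; rfl
    refine Eq.trans ?_ h3
    simp only [mulVec, dotProduct, submatrix_apply, Function.comp]
    exact Equiv.sum_comp σ (fun x => M (σ a) x * w x))
  refine ⟨u ∘ σ, v ∘ σ, ?_⟩
  ext a b
  have := congrFun (congrFun huv (σ a)) (σ b)
  simpa [σ, vecMulVec_apply] using this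
end
end Fr

namespace Fr
open StepL
section
variable {K : Type} [Field K]

def Dt {W : Type} (D : Subalgebra K (W → K)) : Subalgebra K (K × W → K) :=
  Algebra.adjoin K ({fun p => p.1} ∪ {g | ∃ h ∈ D, g = fun p => h p.2})

lemma Dt_t {W : Type} (D : Subalgebra K (W → K)) : (fun p => p.1) ∈ Dt D := Algebra.subset_adjoin (Or.inl rfl)
lemma Dt_D {W : Type} (D : Subalgebra K (W → K)) (h) (hh : h ∈ D) : (fun p => h p.2) ∈ Dt D :=
  Algebra.subset_adjoin (Or.inr ⟨h, hh, rfl⟩)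

lemma Dt_poly {W : Type} (D : Subalgebra K (W → K)) (g) (hg : g ∈ Dt D) : ∃ P : Polynomial D, ∀ t q,
    g (t, q) = ((P.eval (algebraMap K D t) : D) : W → K) q := by
  induction hg using Algebra.adjoin_induction with
  | mem f hf =>
    rcases hf with rfl | ⟨h, hh, rfl⟩
    · exact ⟨Polynomial.X, fun t q => by rw [Polynomial.eval_X]; rfl⟩
    · exact ⟨Polynomial.C ⟨h, hh⟩, fun t q => by rw [Polynomial.eval_C]⟩
  | algebraMap r => exact ⟨Polynomial.C (algebraMap K D r), fun t q => by rw [Polynomial.eval_C]; rfl⟩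
  | add x y _ _ hx hy =>
    obtain ⟨P, hP⟩ := hx
    obtain ⟨Q, hQ⟩ := hy
    exact ⟨P + Q, fun t q => by rw [Polynomial.eval_add, Pi.add_apply, hP, hQ]; rfl⟩
  | mul x y _ _ hx hy =>
    obtain ⟨P, hP⟩ := hx
    obtain ⟨Q, hQ⟩ := hy
    exact ⟨P * Q, fun t q => by rw [Polynomial.eval_mul, Pi.mul_apply, hP, hQ]; rfl⟩

variable {κ C ι : Type} [DecidableEq κ]

def oneS : SymM K := ⟨1, by change _ᵀ = _; simp⟩

def oneAt (k : κ) : κ → SymM K := Pi.single k oneS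
lemma oneAt_self (k : κ) : ((oneAt k : κ → SymM K) k).1 = 1 := by simp [oneAt, oneS]
lemma oneAt_ne (k j : κ) (h : j ≠ k) : ((oneAt k : κ → SymM K) j) = 0 := by simp [oneAt, h]

abbrev W4 (K κ C ι : Type) [Field K] := Om K (Fin 3) (SymM K) (C → Fin 3 → K) κ ι

def sh (c : K) (k : κ) (p : K × W4 K κ C ι) : W4 K κ C ι :=
  (p.2.1 + (c * p.1) • oneAt k, p.2.2.1, p.2.2.2)

lemma sh_PF (c : K) (k : κ) (f : W4 K κ C ι → K) (hf : f ∈ PF (K := K) (W4 K κ C ι)) :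
    (fun p => f (sh c k p)) ∈ Dt (PF (K := K) (W4 K κ C ι)) := by
  have : PF (K := K) (W4 K κ C ι) ≤ (Dt (PF (K := K) (W4 K κ C ι))).comap (pb (sh c k)) := by
    apply Algebra.adjoin_le
    rintro _ ⟨φ, rfl⟩
    change (fun p => φ (sh c k p)) ∈ Dt (PF (K := K) (W4 K κ C ι))
    have e : (fun p => φ (sh c k p)) = (fun p : K × W4 K κ C ι => φ p.2) + (c * φ (oneAt k, 0, 0)) • (fun p => p.1) := by
      funext p
      simp only [Pi.add_apply, Pi.smul_apply, smul_eq_mul]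
      have : sh c k p = p.2 + (c * p.1) • ((oneAt k, 0, 0) : W4 K κ C ι) := by
        simp [sh, Prod.ext_iff]
      rw [this, map_add, map_smul, smul_eq_mul]; ring
    rw [e]
    exact add_mem (Dt_D _ _ (PF_lin φ)) (Subalgebra.smul_mem _ (Dt_t _) _)
  exact this hf

lemma sh_word (c : K) (k : κ) (w : (κ → SymM K) × (C → Fin 3 → K) → Matrix (Fin 3) (Fin 3) K) (hw : w ∈ words κ (dat4 (K := K) C)) :
    (fun p : K × ((κ → SymM K) × (C → Fin 3 → K)) => w (p.2.1 + (c * p.1) • oneAt k, p.2.2)) ∈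
      Submodule.span K {M : K × ((κ → SymM K) × (C → Fin 3 → K)) → Matrix (Fin 3) (Fin 3) K | ∃ i : ℕ, ∃ w ∈ words κ (dat4 (K := K) C), M = fun p => p.1^i • w p.2} := by
  set U := Submodule.span K {M : K × ((κ → SymM K) × (C → Fin 3 → K)) → Matrix (Fin 3) (Fin 3) K | ∃ i : ℕ, ∃ w ∈ words κ (dat4 (K := K) C), M = fun p => p.1^i • w p.2} with hU
  induction hw using Submonoid.closure_induction_right with
  | one => exact Submodule.subset_span ⟨0, 1, one_mem _, by funext p; simp⟩
  | mul_right w hw l hl ih =>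
    have key1 : ∀ (M) (hM : M ∈ U) (l) (hl : l ∈ words κ (dat4 (K := K) C)), (fun p => M p * l p.2) ∈ U := by
      intro M hM l hl
      induction hM using Submodule.span_induction with
      | mem x hx =>
        obtain ⟨i, w, hw, rfl⟩ := hx
        exact Submodule.subset_span ⟨i, w * l, mul_mem hw hl, by funext p; simp⟩
      | zero => simp only [Pi.zero_apply, zero_mul]; exact zero_mem _
      | add x y _ _ hx hy => simp only [Pi.add_apply, add_mul]; exact add_mem hx hy
      | smul a x _ hx => simp only [Pi.smul_apply, smul_mul_assoc]; exact Submodule.smul_mem _ a hx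
    have key2 : ∀ (M) (hM : M ∈ U), (fun p => p.1 • M p) ∈ U := by
      intro M hM
      induction hM using Submodule.span_induction with
      | mem x hx =>
        obtain ⟨i, w, hw, rfl⟩ := hx
        exact Submodule.subset_span ⟨i+1, w, hw, by funext p; simp only [smul_smul, pow_succ']⟩
      | zero => simp only [Pi.zero_apply, smul_zero]; exact zero_mem _
      | add x y _ _ hx hy => simp only [Pi.add_apply, smul_add]; exact add_mem hx hy
      | smul a x _ hx =>
        have e : (fun p : K × ((κ → SymM K) × (C → Fin 3 → K)) => p.1 • (a • x) p) = a • fun p => p.1 • x p := by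
          funext p; simp only [Pi.smul_apply]; rw [smul_comm]
        rw [e]; exact Submodule.smul_mem _ a hx
    have hl' := hl
    rcases hl with ⟨j, rfl⟩ | ⟨b, rfl⟩
    · by_cases hj : j = k
      · subst hj
        have h3 := add_mem (key1 _ ih _ (Submonoid.subset_closure hl')) (Submodule.smul_mem _ c (key2 _ ih))
        convert h3 using 1
        funext p
        simp [dat4, mul_add, oneAt_self, smul_smul]
      · have h3 := key1 _ ih _ (Submonoid.subset_closure hl')
        convert h3 using 1
        funext p
        simp [dat4, oneAt_ne k j hj]
    · exact key1 _ ih _ (Submonoid.subset_closure hl')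

lemma sh_Chain (c : K) (k : κ) (f : W4 K κ C ι → K) (hf : f ∈ Chain (dat4 C) κ ι) :
    (fun p => f (sh c k p)) ∈ Dt (Chain (dat4 C) κ ι) := by
  have : Chain (dat4 C) κ ι ≤ (Dt (Chain (dat4 C) κ ι)).comap (pb (sh c k)) := by
    apply Algebra.adjoin_le
    have tp : ∀ i : ℕ, (fun p : K × W4 K κ C ι => p.1 ^ i) ∈ Dt (Chain (dat4 C) κ ι) := fun i => pow_mem (Dt_t _) i
    rintro _ (⟨w, hw, rfl⟩ | ⟨w, hw, a, b, rfl⟩)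
    · have h := sh_word c k w hw
      have : ∀ M, M ∈ Submodule.span K {M : K × ((κ → SymM K) × (C → Fin 3 → K)) → Matrix (Fin 3) (Fin 3) K | ∃ i : ℕ, ∃ w ∈ words κ (dat4 (K := K) C), M = fun p => p.1^i • w p.2} →
          (fun p : K × W4 K κ C ι => (M (p.1, p.2.1, p.2.2.1)).trace) ∈ Dt (Chain (dat4 C) κ ι) := by
        intro M hM
        induction hM using Submodule.span_induction with
        | mem x hx =>
          obtain ⟨i, w, hw, rfl⟩ := hx
          simp only [trace_smul, smul_eq_mul]
          exact mul_mem (tp i) (Dt_D (Chain (dat4 C) κ ι) (fun q : W4 K κ C ι => (w (q.1, q.2.1)).trace) (Algebra.subset_adjoin (Or.inl ⟨w, hw, rfl⟩)))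
        | zero => simp only [Pi.zero_apply, trace_zero]; exact zero_mem _
        | add x y _ _ hx hy => simp only [Pi.add_apply, trace_add]; exact add_mem hx hy
        | smul a x _ hx => simp only [Pi.smul_apply, trace_smul]; exact Subalgebra.smul_mem _ hx a
      have h5 := this _ h
      exact h5
    · have h := sh_word c k w hw
      have : ∀ M, M ∈ Submodule.span K {M : K × ((κ → SymM K) × (C → Fin 3 → K)) → Matrix (Fin 3) (Fin 3) K | ∃ i : ℕ, ∃ w ∈ words κ (dat4 (K := K) C), M = fun p => p.1^i • w p.2} →
          (fun p : K × W4 K κ C ι => p.2.2.2 a ⬝ᵥ (((dat4 (K := K) C).J * M (p.1, p.2.1, p.2.2.1)) *ᵥ p.2.2.2 b)) ∈ Dt (Chain (dat4 C) κ ι) := by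
        intro M hM
        simp only [show (dat4 (K := K) C).J = 1 from rfl, one_mul]
        induction hM using Submodule.span_induction with
        | mem x hx =>
          obtain ⟨i, w, hw, rfl⟩ := hx
          simp only [smul_mulVec, dotProduct_smul, smul_eq_mul]
          exact mul_mem (tp i) (Dt_D (Chain (dat4 C) κ ι) (fun q : W4 K κ C ι => q.2.2 a ⬝ᵥ (w (q.1, q.2.1) *ᵥ q.2.2 b)) (Algebra.subset_adjoin (Or.inr ⟨w, hw, a, b, by
            funext q; simp [dat4]⟩)))
        | zero => simp only [Pi.zero_apply, zero_mulVec, dotProduct_zero]; exact zero_mem _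
        | add x y _ _ hx hy => simp only [Pi.add_apply, add_mulVec, dotProduct_add]; exact add_mem hx hy
        | smul a x _ hx => simp only [Pi.smul_apply, smul_mulVec, dotProduct_smul]; exact Subalgebra.smul_mem _ hx a
      have h5 := this _ h
      exact h5
  exact this hf

lemma rot_rot {R : Type} [CommRing R] (q : Fin 4 → R) : rot q * (rot q)ᵀ = (nrm q ^ 2) • 1 := by
  ext i j; fin_cases i <;> fin_cases j <;> simp [rot, nrm, mul3] <;> ring

theorem ind4 [IsAlgClosed K] (h2 : (2:K) ≠ 0) (h3 : (3:K) ≠ 0) [Finite C] (s : Finset κ) : ∀ (ι : Type) [Finite ι]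
    (f : W4 K κ C ι → K), f ∈ PF (K := K) (W4 K κ C ι) → Inv (dat4 C) f → Dep s f → f ∈ Chain (dat4 C) κ ι := by
  have := IsAlgClosed.instInfinite (K := K)
  induction s using Finset.induction_on with
  | empty => intro ι _ f hf hi hd; exact base4 h2 ι f hf hi hd
  | insert k s hk IH =>
    intro ι _ f hf hi hd
    obtain ⟨P, hP⟩ := Dt_poly _ _ (sh_PF 1 k f hf)
    -- pointwise polynomial
    let ev : W4 K κ C ι → (PF (K := K) (W4 K κ C ι) →+* K) := fun q =>
      ((Pi.evalAlgHom K (fun _ : W4 K κ C ι => K) q).comp (PF (K := K) (W4 K κ C ι)).val : PF (K := K) (W4 K κ C ι) →ₐ[K] K)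
    let pq : W4 K κ C ι → Polynomial K := fun q => P.map (ev q)
    have hpq : ∀ q t, (pq q).eval t = f (sh 1 k (t, q)) := by
      intro q t
      have e1 := hP t q
      rw [e1]
      have : t = ev q (algebraMap K _ t) := rfl
      conv_lhs => rw [this]
      rw [Polynomial.eval_map_apply]
      rfl
    have hco : ∀ q i, (pq q).coeff i = (P.coeff i : W4 K κ C ι → K) q := by
      intro q i; rw [Polynomial.coeff_map]; rfl
    have ex : ∀ i, ∃ h ∈ Chain (dat4 C) κ ι, ∀ q, (P.coeff i : W4 K κ C ι → K) (sub (dat4 C) k q) = h (sub (dat4 C) k q) := by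
      intro i
      refine ind_step (dat4 C) h2 s k (fun ι _ f => IH ι f) ι _ (P.coeff i).2 ?_ ?_
      · intro g q
        rw [← hco, ← hco]
        congr 1
        apply Polynomial.funext
        intro t
        rw [hpq, hpq, ← hi g (sh 1 k (t, q))]
        congr 1
        simp only [sh, gact]
        refine Prod.ext ?_ rfl
        funext j
        apply Subtype.ext
        by_cases hj : j = k
        · subst hj
          simp [dat4, oneAt_self, mul_add, add_mul, rot_rot, g.2.1]
        · simp [dat4, oneAt_ne k j hj]
      · intro S S' z x h
        rw [← hco, ← hco]
        congr 1
        apply Polynomial.funext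
        intro t
        rw [hpq, hpq]
        refine hd _ _ _ _ ?_
        intro j hj
        simp [h j hj]
    choose h hh hhe using ex
    let g : K × W4 K κ C ι → K := fun p => ∑ i ∈ P.support, p.1 ^ i * h i (sh (-1) k p)
    have hg : g ∈ Dt (Chain (dat4 C) κ ι) := by
      have e : g = ∑ i ∈ P.support, (fun p : K × W4 K κ C ι => p.1)^i * (fun p => h i (sh (-1) k p)) := by
        funext p; simp [g, Finset.sum_apply]
      rw [e]
      exact sum_mem fun i _ => mul_mem (pow_mem (Dt_t _) i) (sh_Chain _ _ _ (hh i))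
    obtain ⟨Q, hQ⟩ := Dt_poly _ _ hg
    have main : ∀ q μ, (μ • 1 - (q.1 k).1).det = 0 → f q = g (μ, q) := by
      intro q μ hμ
      have hs : ((q.1 k).1 - μ • 1)ᵀ = (q.1 k).1 - μ • 1 := by
        have : (q.1 k).1ᵀ = (q.1 k).1 := (q.1 k).2
        simp [this]
      obtain ⟨u, v, huv⟩ := sym_sing h2 ((q.1 k).1 - μ • 1) hs (by
        rw [← neg_sub, det_neg, hμ, mul_zero])
      have e : sh (-1) k (μ, q) = sub (dat4 C) k (q, u, v) := by
        simp only [sh, sub]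
        refine Prod.ext ?_ rfl
        funext j
        apply Subtype.ext
        by_cases hj : j = k
        · subst hj
          simp [dat4, oneAt_self, bb4_apply, ← huv, sub_eq_add_neg]
        · simp [oneAt_ne k j hj, Function.update_of_ne hj]
      have e2 : q = sh 1 k (μ, sh (-1) k (μ, q)) := by
        refine Prod.ext ?_ rfl
        simp [sh, add_assoc, ← add_smul]
      conv_lhs => rw [e2, ← hpq]
      rw [Polynomial.eval_eq_sum_range' (n := P.natDegree + 1) (by
        have := Polynomial.natDegree_map_le (p := P) (f := ev (sh (-1) k (μ, q)))
        change (P.map (ev (sh (-1) k (μ, q)))).natDegree < _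
        omega)]
      simp only [g]
      have hsub : ∑ i ∈ P.support, μ ^ i * h i (sh (-1) k (μ, q)) =
          ∑ i ∈ Finset.range (P.natDegree + 1), μ ^ i * h i (sh (-1) k (μ, q)) := by
        apply Finset.sum_subset
        · intro i hi
          exact Finset.mem_range.mpr (Nat.lt_succ_of_le (Polynomial.le_natDegree_of_mem_supp _ hi))
        · intro i _ hi
          rw [e, ← hhe, Polynomial.notMem_support_iff.mp hi]
          simp
      rw [hsub]
      apply Finset.sum_congr rfl
      intro i _
      rw [hco, e, hhe, mul_comm]
    have fin : (3:K) • f = ∑ j ∈ Q.support, (fun q : W4 K κ C ι => ((q.1 k).1 ^ j).trace) * (Q.coeff j : W4 K κ C ι → K) := by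
      funext q
      obtain ⟨a, b, c, habc⟩ := eigen3 (q.1 k).1
      have hr : ∀ μ, g (μ, q) = ∑ j ∈ Q.support, μ^j * (Q.coeff j : W4 K κ C ι → K) q := by
        intro μ
        rw [hQ, Polynomial.eval_eq_sum, Polynomial.sum]
        simp [mul_comm]
      have ha := main q a (by rw [habc]; ring)
      have hb := main q b (by rw [habc]; ring)
      have hc := main q c (by rw [habc]; ring)
      rw [hr] at ha hb hc
      have : ((3:K) • f) q = f q + f q + f q := by simp; ring
      rw [this]
      nth_rewrite 1 [ha]; nth_rewrite 1 [hb]; nth_rewrite 1 [hc]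
      simp only [Finset.sum_apply, Pi.mul_apply, pow_sum3 h2 _ a b c habc]
      rw [← Finset.sum_add_distrib, ← Finset.sum_add_distrib]
      apply Finset.sum_congr rfl; intro j _; ring
    have : f = (3:K)⁻¹ • ((3:K) • f) := by rw [smul_smul, inv_mul_cancel₀ h3, one_smul]
    rw [this, fin]
    apply Subalgebra.smul_mem
    refine sum_mem fun j _ => mul_mem ?_ (Q.coeff j).2
    apply Algebra.subset_adjoin
    left
    let l : (κ → SymM K) × (C → Fin 3 → K) → Matrix (Fin 3) (Fin 3) K := fun p => (dat4 (K := K) C).mat (p.1 k) * (dat4 (K := K) C).J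
    have hl : l ∈ words κ (dat4 (K := K) C) := Submonoid.subset_closure (Or.inl ⟨k, rfl⟩)
    refine ⟨l^j, pow_mem hl j, ?_⟩
    funext q
    simp [l, dat4]
end
end Fr

namespace Fr
open StepL

lemma hom_scale {σ F : Type} [Field F] (f : MvPolynomial σ F) (n : ℕ) (hf : f.IsHomogeneous n) (c : F) (x : σ → F) :
    eval (fun i => c * x i) f = c ^ n * eval x f := by
  rw [eval_eq, eval_eq, Finset.mul_sum]
  apply Finset.sum_congr rfl
  intro m hm
  have : m.degree = n := by
    have := hf (mem_support_iff.mp hm)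
    rw [Finsupp.degree_eq_weight_one]; exact this
  simp only [mul_pow]
  rw [Finset.prod_mul_distrib, Finset.prod_pow_eq_pow_sum]
  rw [← this, Finsupp.degree_apply]; ring

/-- evaluation matrix -/
def xm {R : Type} {d : ℕ} (x : Fin 3 × Fin 3 × Fin d → R) (k : Fin d) : Matrix (Fin 3) (Fin 3) R := Matrix.of fun i j => x (i, j, k)

lemma rot_map {R R' : Type} [CommRing R] [CommRing R'] (φ : R →+* R') (q : Fin 4 → R) : (rot q).map φ = rot (fun i => φ (q i)) := by
  have h2 : φ 2 = 2 := map_ofNat φ 2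
  ext i j; fin_cases i <;> fin_cases j <;> simp [rot, h2]

lemma nrm_map {R R' : Type} [CommRing R] [CommRing R'] (φ : R →+* R') (q : Fin 4 → R) : φ (nrm q) = nrm (fun i => φ (q i)) := by
  simp [nrm]

lemma rot_hat {R : Type} [CommRing R] (q : Fin 4 → R) (a : Fin 3 → R) :
    rot q * hat a * (rot q)ᵀ = nrm q • hat (rot q *ᵥ a) := by
  ext i j; fin_cases i <;> fin_cases j <;> simp [rot, nrm, mul3, hat, mulVec, dotProduct, Fin.sum_univ_three] <;> ring

lemma inv_eval {F : Type} [Field F] {d : ℕ} (f : Rpoly F d) (hf : f ∈ invAlg F d) (g : Matrix (Fin 3) (Fin 3) F)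
    (hg : gᵀ * g = 1) (x : Fin 3 × Fin 3 × Fin d → F) :
    eval (fun p => (gᵀ * xm x p.2.2 * g) p.1 p.2.1) f = eval x f := by
  conv_rhs => rw [← hf g hg]
  have : (eval x : Rpoly F d →+* F).comp (actHom F d g : Rpoly F d →+* Rpoly F d) =
      eval (fun p => (gᵀ * xm x p.2.2 * g) p.1 p.2.1) := by
    apply MvPolynomial.ringHom_ext
    · intro r; simp [actHom]
    · intro p
      simp [actHom, mul3, genMat, xm]
  rw [← this]; rfl

lemma id_F {F : Type} [Field F] {d : ℕ} (f : Rpoly F d) (hf : f ∈ invAlg F d) (n : ℕ) (hn : f.IsHomogeneous n)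
    (q : Fin 4 → F) (hq : nrm q ≠ 0) (x : Fin 3 × Fin 3 × Fin d → F) :
    eval (fun p => (rot q * xm x p.2.2 * (rot q)ᵀ) p.1 p.2.1) f = (nrm q ^ 2) ^ n * eval x f := by
  have h := inv_eval f hf ((nrm q)⁻¹ • (rot q)ᵀ) (by
    simp [rot_rot, smul_smul]; field_simp; simp) x
  rw [← h, ← hom_scale f n hn]
  congr 2
  funext p
  simp [smul_smul]
  field_simp

lemma id_K {F K : Type} [Field F] [Infinite F] [Field K] [Algebra F K] {d : ℕ} (f : Rpoly F d) (hf : f ∈ invAlg F d) (n : ℕ) (hn : f.IsHomogeneous n)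
    (q : Fin 4 → K) (hq : nrm q = 1) (x : Fin 3 × Fin 3 × Fin d → K) :
    aeval (fun p => (rot q * xm x p.2.2 * (rot q)ᵀ) p.1 p.2.1) f = aeval x f := by
  let qh : Fin 4 → MvPolynomial (Fin 4 ⊕ (Fin 3 × Fin 3 × Fin d)) F := fun i => X (Sum.inl i)
  let xh : Fin 3 × Fin 3 × Fin d → MvPolynomial (Fin 4 ⊕ (Fin 3 × Fin 3 × Fin d)) F := fun i => X (Sum.inr i)
  let P1 := aeval (fun p => (rot qh * xm xh p.2.2 * (rot qh)ᵀ) p.1 p.2.1) f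
  let P2 := aeval xh f
  have key : ∀ {L : Type} [Field L] [Algebra F L] (q : Fin 4 → L) (x : Fin 3 × Fin 3 × Fin d → L),
      aeval (Sum.elim q x) P1 = aeval (fun p => (rot q * xm x p.2.2 * (rot q)ᵀ) p.1 p.2.1) f ∧
      aeval (Sum.elim q x) P2 = aeval x f ∧ aeval (Sum.elim q x) (nrm qh) = nrm q := by
    intro L _ _ q x
    refine ⟨?_, ?_, ?_⟩
    · simp only [P1]
      rw [← AlgHom.comp_apply, comp_aeval]
      congr 2
      funext p
      have e := rot_map ((aeval (Sum.elim q x) : MvPolynomial (Fin 4 ⊕ (Fin 3 × Fin 3 × Fin d)) F →ₐ[F] L) : _ →+* L) qh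
      have e' : ∀ i j, aeval (Sum.elim q x) (rot qh i j) = rot q i j := by
        intro i j
        have := congrFun (congrFun e i) j
        simp only [map_apply] at this
        erw [this]; simp [qh]
      simp [mul3, e', xm, xh]
    · simp only [P2]
      rw [← AlgHom.comp_apply, comp_aeval]
      congr 2
      funext p; simp [xh]
    · have e := nrm_map ((aeval (Sum.elim q x) : MvPolynomial (Fin 4 ⊕ (Fin 3 × Fin 3 × Fin d)) F →ₐ[F] L) : _ →+* L) qh
      erw [e]; simp [qh]
  have idn : nrm qh * P1 = nrm qh * ((nrm qh ^ 2) ^ n * P2) := by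
    apply MvPolynomial.funext
    intro y
    obtain ⟨q, x, rfl⟩ : ∃ q x, y = Sum.elim q x := ⟨_, _, (Sum.elim_comp_inl_inr y).symm⟩
    obtain ⟨k1, k2, k3⟩ := key q x
    simp only [← coe_aeval_eq_eval] at *
    simp only [RingHom.coe_coe, _root_.map_mul, _root_.map_pow, k1, k2, k3]
    by_cases h : nrm q = 0
    · simp [h]
    · congr 1
      exact id_F f hf n hn q h x
  obtain ⟨k1, k2, k3⟩ := key q x
  have := congrArg (aeval (Sum.elim q x)) idn
  simpa [k1, k2, k3, hq] using this

section
variable {F K : Type} [Field F] [Field K] [Algebra F K] {d : ℕ}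

/-- the function on pairs (S, a) -/
noncomputable def fK (K : Type) [Field K] [Algebra F K] (f : Rpoly F d) : W4 K (Fin d) (Fin d) Empty → K :=
  fun q => aeval (fun p : Fin 3 × Fin 3 × Fin d => ((q.1 p.2.2).1 + hat (q.2.1 p.2.2)) p.1 p.2.1) f

lemma hat_lin (i j : Fin 3) : ∃ φ : (Fin 3 → K) →ₗ[K] K, ∀ a, hat a i j = φ a := by
  refine ⟨{ toFun := fun a => hat a i j, map_add' := ?_, map_smul' := ?_ }, fun a => rfl⟩
  · intro a b; fin_cases i <;> fin_cases j <;> simp [hat] <;> ring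
  · intro a b; fin_cases i <;> fin_cases j <;> simp [hat]

lemma fK_PF (f : Rpoly F d) : fK K f ∈ PF (K := K) (W4 K (Fin d) (Fin d) Empty) := by
  let y : Fin 3 × Fin 3 × Fin d → W4 K (Fin d) (Fin d) Empty → K :=
    fun p q => ((q.1 p.2.2).1 + hat (q.2.1 p.2.2)) p.1 p.2.1
  have hy : ∀ p, y p ∈ PF (K := K) (W4 K (Fin d) (Fin d) Empty) := by
    intro p
    obtain ⟨φ, hφ⟩ := hat_lin (K := K) p.1 p.2.1
    exact PF_lin (V := W4 K (Fin d) (Fin d) Empty) (K := K)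
      { toFun := y p
        map_add' := by intro a b; simp [y, hφ]; ring
        map_smul' := by intro c a; simp [y, hφ]; ring }
  induction f using MvPolynomial.induction_on with
  | C a =>
    have : fK K (C a : Rpoly F d) = algebraMap K _ (algebraMap F K a) := by funext q; simp [fK]
    rw [this]; exact Subalgebra.algebraMap_mem _ _
  | add p q hp hq =>
    have : fK K (p + q) = fK K p + fK K q := by funext q; simp [fK]
    rw [this]; exact add_mem hp hq
  | mul_X p i hp =>
    have : fK K (p * X i) = fK K p * y i := by funext q; simp [fK, y]
    rw [this]; exact mul_mem hp (hy i)

lemma fK_Inv [Infinite F] (f : Rpoly F d) (hf : f ∈ invAlg F d) (n : ℕ) (hn : f.IsHomogeneous n) :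
    Inv (dat4 (Fin d)) (fK K f) := by
  intro g q
  have := id_K (K := K) f hf n hn g.1.1 g.2.1 (fun p => ((q.1 p.2.2).1 + hat (q.2.1 p.2.2)) p.1 p.2.1)
  simp only [fK]
  rw [← this]
  congr 2
  funext p
  have e : xm (fun p : Fin 3 × Fin 3 × Fin d => ((q.1 p.2.2).1 + hat (q.2.1 p.2.2)) p.1 p.2.1) p.2.2 = (q.1 p.2.2).1 + hat (q.2.1 p.2.2) := rfl
  rw [e, mul_add, add_mul, rot_hat, g.2.1, one_smul]
  rfl

theorem fK_Chain [Infinite F] [IsAlgClosed K] (h2 : (2:K) ≠ 0) (h3 : (3:K) ≠ 0) (f : Rpoly F d) (hf : f ∈ invAlg F d) (n : ℕ) (hn : f.IsHomogeneous n) :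
    fK K f ∈ Chain (dat4 (K := K) (Fin d)) (Fin d) Empty :=
  ind4 h2 h3 Finset.univ Empty _ (fK_PF f) (fK_Inv f hf n hn) (by
    intro S S' z x h
    have : S = S' := funext fun k => h k (Finset.mem_univ _)
    rw [this])

variable (F d) in
/-- letters -/
noncomputable def lets : Set (Matrix (Fin 3) (Fin 3) (Rpoly F d)) :=
  {m | ∃ k, m = genMat F d k + (genMat F d k)ᵀ ∨ m = genMat F d k - (genMat F d k)ᵀ}

variable (F d) in
noncomputable def wds : Submonoid (Matrix (Fin 3) (Fin 3) (Rpoly F d)) := Submonoid.closure (lets F d)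

variable (F d) in
noncomputable def TR : Subalgebra F (Rpoly F d) := Algebra.adjoin F {t | ∃ w ∈ wds F d, t = w.trace}

noncomputable def em (K : Type) [Field K] [Algebra F K] (x : Fin 3 × Fin 3 × Fin d → F) (m : Matrix (Fin 3) (Fin 3) (Rpoly F d)) : Matrix (Fin 3) (Fin 3) K :=
  m.map fun p => algebraMap F K (eval x p)

lemma em_mul (x : Fin 3 × Fin 3 × Fin d → F) (m m' : Matrix (Fin 3) (Fin 3) (Rpoly F d)) : em K x (m * m') = em K x m * em K x m' := by
  ext i j; simp [em, mul3]

lemma em_one (x : Fin 3 × Fin 3 × Fin d → F) : em K x (1 : Matrix (Fin 3) (Fin 3) (Rpoly F d)) = 1 := by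
  ext i j; by_cases h : i = j <;> simp [em, one_apply, h]

/-- the point of Om -/
noncomputable def sig (K : Type) [Field K] [Algebra F K] (x : Fin 3 × Fin 3 × Fin d → F) : W4 K (Fin d) (Fin d) Empty :=
  (fun k => ⟨(2:K)⁻¹ • em K x (genMat F d k + (genMat F d k)ᵀ), by
      change _ᵀ = _
      ext i j; simp [em, add_comm]⟩,
   fun k => (2:K)⁻¹ • ![em K x (genMat F d k) 2 1 - em K x (genMat F d k) 1 2,
    em K x (genMat F d k) 0 2 - em K x (genMat F d k) 2 0, em K x (genMat F d k) 1 0 - em K x (genMat F d k) 0 1],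
   fun e => e.elim)

lemma sig_hat (x : Fin 3 × Fin 3 × Fin d → F) (k) : hat ((sig K x).2.1 k) = (2:K)⁻¹ • em K x (genMat F d k - (genMat F d k)ᵀ) := by
  ext i j; fin_cases i <;> fin_cases j <;> simp [sig, hat, em] <;> ring

lemma sig_word (w) (hw : w ∈ words (Fin d) (dat4 (K := K) (Fin d))) :
    ∃ m ∈ wds F d, ∃ c : K, ∀ x, w ((sig K x).1, (sig K x).2.1) = c • em K x m := by
  induction hw using Submonoid.closure_induction with
  | mem l hl =>
    rcases hl with ⟨k, rfl⟩ | ⟨k, rfl⟩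
    · refine ⟨_, Submonoid.subset_closure ⟨k, Or.inl rfl⟩, 2⁻¹, fun x => ?_⟩
      simp [dat4, sig]
    · refine ⟨_, Submonoid.subset_closure ⟨k, Or.inr rfl⟩, 2⁻¹, fun x => ?_⟩
      simp only [dat4]
      rw [sig_hat]
  | one => exact ⟨1, one_mem _, 1, fun x => by simp [em_one]⟩
  | mul w w' _ _ h h' =>
    obtain ⟨m, hm, c, e⟩ := h
    obtain ⟨m', hm', c', e'⟩ := h'
    refine ⟨m * m', mul_mem hm hm', c * c', fun x => ?_⟩
    simp only [Pi.mul_apply, e, e', em_mul, smul_mul_assoc, mul_smul_comm, smul_smul]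
    rw [mul_comm c c']

lemma sig_f (h2 : (2:K) ≠ 0) (f : Rpoly F d) (x) : fK K f (sig K x) = algebraMap F K (eval x f) := by
  have e : ∀ k, ((sig K x).1 k).1 + hat ((sig K x).2.1 k) = em K x (genMat F d k) := by
    intro k
    rw [sig_hat]
    ext i j
    simp [sig, em]
    field_simp; ring
  simp only [fK, e]
  have : (aeval (fun p : Fin 3 × Fin 3 × Fin d => em K x (genMat F d p.2.2) p.1 p.2.1) : Rpoly F d →ₐ[F] K)
     = (Algebra.ofId F K).comp (aeval x) := by
    apply MvPolynomial.algHom_ext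
    intro p; simp [em, genMat]
  rw [this]; simp [Algebra.ofId_apply, aeval_def, eval₂_eq_eval_map]

theorem TR_of_chain [Infinite F] (h2 : (2:K) ≠ 0) (f : Rpoly F d)
    (hf : fK K f ∈ Chain (dat4 (K := K) (Fin d)) (Fin d) Empty) : f ∈ TR F d := by
  let ev : Rpoly F d → ((Fin 3 × Fin 3 × Fin d → F) → K) := fun t x => algebraMap F K (eval x t)
  let S : Set ((Fin 3 × Fin 3 × Fin d → F) → K) := {v | ∃ w ∈ wds F d, v = ev w.trace}
  have h1 : Chain (dat4 (K := K) (Fin d)) (Fin d) Empty ≤ (Algebra.adjoin K S).comap (pb (sig K)) := by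
    apply Algebra.adjoin_le
    rintro _ (⟨w, hw, rfl⟩ | ⟨w, hw, a, b, rfl⟩)
    · obtain ⟨m, hm, c, e⟩ := sig_word (F := F) w hw
      have : pb (sig K) (fun q : W4 K (Fin d) (Fin d) Empty => (w (q.1, q.2.1)).trace) = c • ev m.trace := by
        funext x
        simp only [pb_apply, e]
        simp [ev, em, trace, Finset.mul_sum]
      have hm' : c • ev m.trace ∈ Algebra.adjoin K S :=
        Subalgebra.smul_mem _ (Algebra.subset_adjoin (Set.mem_setOf.mpr ⟨m, hm, rfl⟩)) _
      rw [← this] at hm'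
      exact hm'
    · exact a.elim
  have h3 : ev f ∈ Algebra.adjoin K S := by
    have := h1 hf
    rw [Subalgebra.mem_comap] at this
    convert this using 1
    funext x; rw [pb_apply, sig_f h2]
  rw [← Subalgebra.mem_toSubmodule, Algebra.adjoin_eq_span] at h3
  have h4 : ∀ v ∈ Submonoid.closure S, ∃ t ∈ TR F d, v = ev t := by
    intro v hv
    induction hv using Submonoid.closure_induction with
    | mem v hv => obtain ⟨w, hw, rfl⟩ := hv; exact ⟨_, Algebra.subset_adjoin ⟨w, hw, rfl⟩, rfl⟩
    | one => exact ⟨1, one_mem _, by funext x; simp [ev]⟩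
    | mul v v' _ _ h h' =>
      obtain ⟨t, ht, rfl⟩ := h
      obtain ⟨t', ht', rfl⟩ := h'
      exact ⟨t * t', mul_mem ht ht', by funext x; simp [ev]⟩
  obtain ⟨r, hr⟩ := LinearMap.exists_leftInverse_of_injective (Algebra.linearMap F K)
    (LinearMap.ker_eq_bot.mpr (algebraMap F K).injective)
  have hr' : ∀ a, r (algebraMap F K a) = a := fun a => LinearMap.congr_fun hr a
  have h5 : ∀ v ∈ Submodule.span K (Submonoid.closure S : Set ((Fin 3 × Fin 3 × Fin d → F) → K)), ∀ c : K, ∃ t ∈ TR F d, ∀ x, r (c * v x) = eval x t := by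
    intro v hv
    induction hv using Submodule.span_induction with
    | mem v hv =>
      intro c
      obtain ⟨t, ht, rfl⟩ := h4 v hv
      refine ⟨r c • t, Subalgebra.smul_mem _ ht _, fun x => ?_⟩
      simp only [ev]
      rw [mul_comm, ← Algebra.smul_def, map_smul]
      simp [mul_comm]
    | zero => intro c; exact ⟨0, zero_mem _, fun x => by simp⟩
    | add v v' _ _ h h' =>
      intro c
      obtain ⟨t, ht, e⟩ := h c
      obtain ⟨t', ht', e'⟩ := h' c
      exact ⟨t + t', add_mem ht ht', fun x => by simp [mul_add, e, e']⟩
    | smul a v _ h =>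
      intro c
      obtain ⟨t, ht, e⟩ := h (c * a)
      exact ⟨t, ht, fun x => by rw [← e]; simp [mul_assoc]⟩
  obtain ⟨t, ht, e⟩ := h5 _ h3 1
  have : f = t := by
    apply MvPolynomial.funext
    intro x
    rw [← e]; simp [ev, hr']
  rwa [this]

theorem inv_TR [Infinite F] (h2 : (2:F) ≠ 0) (h3 : (3:F) ≠ 0) (f : Rpoly F d) (hf : f ∈ invAlg F d) (n : ℕ) (hn : f.IsHomogeneous n) :
    f ∈ TR F d := by
  have g2 : (2 : AlgebraicClosure F) ≠ 0 := by
    intro h; apply h2; apply (algebraMap F (AlgebraicClosure F)).injective; rw [map_ofNat, h, map_zero]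
  have g3 : (3 : AlgebraicClosure F) ≠ 0 := by
    intro h; apply h3; apply (algebraMap F (AlgebraicClosure F)).injective; rw [map_ofNat, h, map_zero]
  exact TR_of_chain g2 f (fK_Chain g2 g3 f hf n hn)
end
end Fr

namespace NH
section
variable {B : Type} [Ring B] (A : NonUnitalSubring B) (N : AddSubgroup B)
  (hl : ∀ a ∈ A, ∀ m ∈ N, a * m ∈ N) (hr : ∀ a ∈ A, ∀ m ∈ N, m * a ∈ N)
  (hc : ∀ x ∈ A, x * x * x ∈ N) (h2 : ∀ m, m + m ∈ N → m ∈ N) (h3 : ∀ m, m + m + m ∈ N → m ∈ N)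

include hc in
lemma P3 {a b c : B} (ha : a ∈ A) (hb : b ∈ A) (hcc : c ∈ A) :
    a*b*c + a*c*b + b*a*c + b*c*a + c*a*b + c*b*a ∈ N := by
  have e : a*b*c + a*c*b + b*a*c + b*c*a + c*a*b + c*b*a =
    (a+b+c)*(a+b+c)*(a+b+c) - (a+b)*(a+b)*(a+b) - (a+c)*(a+c)*(a+c) - (b+c)*(b+c)*(b+c) + a*a*a+b*b*b+c*c*c := by
    noncomm_ring
  rw [e]
  have hab := add_mem ha hb
  exact add_mem (add_mem (add_mem (sub_mem (sub_mem (sub_mem (hc _ (add_mem hab hcc)) (hc _ hab)) (hc _ (add_mem ha hcc)))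
    (hc _ (add_mem hb hcc))) (hc _ ha)) (hc _ hb)) (hc _ hcc)

include hc h2 in
lemma Q {x y : B} (hx : x ∈ A) (hy : y ∈ A) : x*x*y + x*y*x + y*x*x ∈ N := by
  apply h2
  convert P3 A N hc hx hx hy using 1
  noncomm_ring

include hl hr hc h2 h3 in
lemma Hig {x y z : B} (hx : x ∈ A) (hy : y ∈ A) (hz : z ∈ A) : x*x*z*(y*y) ∈ N := by
  apply h3
  have q0 := hr _ (mul_mem hy hy) _ (Q A N hc h2 hx hz)
  have q1 := hr _ hy _ (Q A N hc h2 hx (mul_mem hz hy))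
  have q2 := Q A N hc h2 hx (mul_mem hz (mul_mem hy hy))
  have r1 := hl _ (mul_mem hx hz) _ (Q A N hc h2 hy hx)
  have r2 := hl _ hz _ (Q A N hc h2 hy (mul_mem hx hx))
  convert sub_mem (sub_mem (add_mem (add_mem q0 q1) q2) r1) r2 using 1
  noncomm_ring

include hl hr hc h2 h3 in
lemma HigR {x y z w : B} (hx : x ∈ A) (hy : y ∈ A) (hz : z ∈ A) (hw : w ∈ A) : x*x*z*(y*w+w*y) ∈ N := by
  have := Hig A N hl hr hc h2 h3 hx (add_mem hy hw) hz
  convert sub_mem (sub_mem this (Hig A N hl hr hc h2 h3 hx hy hz)) (Hig A N hl hr hc h2 h3 hx hw hz) using 1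
  noncomm_ring

include hl hr hc h2 h3 in
lemma HigL {x y z w : B} (hx : x ∈ A) (hy : y ∈ A) (hz : z ∈ A) (hw : w ∈ A) : (y*w+w*y)*z*(x*x) ∈ N := by
  have := Hig A N hl hr hc h2 h3 (add_mem hy hw) hx hz
  convert sub_mem (sub_mem this (Hig A N hl hr hc h2 h3 hy hx hz)) (Hig A N hl hr hc h2 h3 hw hx hz) using 1
  noncomm_ring

include hl hr hc h2 h3 in
lemma S1 {x z y u w : B} (hx : x ∈ A) (hz : z ∈ A) (hy : y ∈ A) (hu : u ∈ A) (hw : w ∈ A) : x*x*z*y*u*w ∈ N := by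
  apply h2
  have a := HigR A N hl hr hc h2 h3 hx (mul_mem hy hu) hz hw
  have b := hr _ hu _ (HigR A N hl hr hc h2 h3 hx hw hz hy)
  have c := HigR A N hl hr hc h2 h3 hx hw (mul_mem hz hy) hu
  convert add_mem (sub_mem a b) c using 1
  noncomm_ring

include hl hr hc h2 h3 in
lemma S1' {x z y u w : B} (hx : x ∈ A) (hz : z ∈ A) (hy : y ∈ A) (hu : u ∈ A) (hw : w ∈ A) : w*u*y*z*x*x ∈ N := by
  apply h2
  have a := HigL A N hl hr hc h2 h3 hx (mul_mem hu hy) hz hw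
  have b := hl _ hu _ (HigL A N hl hr hc h2 h3 hx hw hz hy)
  have c := HigL A N hl hr hc h2 h3 hx hw (mul_mem hy hz) hu
  convert add_mem (sub_mem a b) c using 1
  noncomm_ring

include hl hr hc h2 h3 in
lemma A12 {a b z y u w : B} (ha : a ∈ A) (hb : b ∈ A) (hz : z ∈ A) (hy : y ∈ A) (hu : u ∈ A) (hw : w ∈ A) :
    a*b*z*y*u*w + b*a*z*y*u*w ∈ N := by
  have := S1 A N hl hr hc h2 h3 (add_mem ha hb) hz hy hu hw
  convert sub_mem (sub_mem this (S1 A N hl hr hc h2 h3 ha hz hy hu hw)) (S1 A N hl hr hc h2 h3 hb hz hy hu hw) using 1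
  noncomm_ring

include hl hr hc h2 h3 in
lemma A56 {a b z y u w : B} (ha : a ∈ A) (hb : b ∈ A) (hz : z ∈ A) (hy : y ∈ A) (hu : u ∈ A) (hw : w ∈ A) :
    w*u*y*z*a*b + w*u*y*z*b*a ∈ N := by
  have := S1' A N hl hr hc h2 h3 (add_mem ha hb) hz hy hu hw
  convert sub_mem (sub_mem this (S1' A N hl hr hc h2 h3 ha hz hy hu hw)) (S1' A N hl hr hc h2 h3 hb hz hy hu hw) using 1
  noncomm_ring

include hl hr hc h2 h3 in
lemma UVW {a b c d x : B} (ha : a ∈ A) (hb : b ∈ A) (hcc : c ∈ A) (hd : d ∈ A) (hx : x ∈ A) :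
    a*x*x*b*c*d ∈ N ∧ a*b*x*x*c*d ∈ N ∧ a*b*c*x*x*d ∈ N := by
  have hU : a*x*x*b*c*d + (a*b*x*x*c*d + a*b*x*x*c*d) ∈ N := by
    have q1 := hl _ ha _ (hr _ (mul_mem hcc hd) _ (Q A N hc h2 hx hb))
    have q2 := A12 A N hl hr hc h2 h3 ha hx hb hx hcc hd
    have q3 := hr _ (mul_mem hcc hd) _ (Q A N hc h2 hx (mul_mem ha hb))
    have q4 := S1 A N hl hr hc h2 h3 hx ha hb hcc hd
    convert sub_mem (add_mem (sub_mem q1 q2) q3) q4 using 1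
    noncomm_ring
  have hV : a*b*c*x*x*d + (a*b*x*x*c*d + a*b*x*x*c*d) ∈ N := by
    have q1 := hl _ (mul_mem ha hb) _ (hr _ hd _ (Q A N hc h2 hx hcc))
    have q2 := A56 A N hl hr hc h2 h3 hd hx hcc hx hb ha
    have q3 := hl _ (mul_mem ha hb) _ (Q A N hc h2 hx (mul_mem hcc hd))
    have q4 := S1' A N hl hr hc h2 h3 hx hd hcc hb ha
    convert sub_mem (add_mem (sub_mem q1 q2) q3) q4 using 1
    noncomm_ring
  have hUV : a*x*x*b*c*d + (a*b*c*x*x*d + a*b*c*x*x*d) ∈ N := by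
    have q1 := hl _ ha _ (hr _ hd _ (Q A N hc h2 hx (mul_mem hb hcc)))
    have q2 := A12 A N hl hr hc h2 h3 ha hx hb hcc hx hd
    have q3 := hr _ hd _ (Q A N hc h2 hx (mul_mem (mul_mem ha hb) hcc))
    have q4 := S1 A N hl hr hc h2 h3 hx ha hb hcc hd
    convert sub_mem (add_mem (sub_mem q1 q2) q3) q4 using 1
    noncomm_ring
  have hW : a*b*x*x*c*d ∈ N := by
    apply h2; apply h3
    convert sub_mem (add_mem hU (add_mem hV hV)) hUV using 1
    abel
  refine ⟨?_, hW, ?_⟩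
  · convert sub_mem hU (add_mem hW hW) using 1; abel
  · convert sub_mem hV (add_mem hW hW) using 1; abel

include hl hr hc h2 h3 in
theorem nh6 {a b c d e f : B} (ha : a ∈ A) (hb : b ∈ A) (hcc : c ∈ A) (hd : d ∈ A) (he : e ∈ A) (hf : f ∈ A) :
    a*b*c*d*e*f ∈ N := by
  have s12 : ∀ {a b c d e f : B}, a ∈ A → b ∈ A → c ∈ A → d ∈ A → e ∈ A → f ∈ A → a*b*c*d*e*f + b*a*c*d*e*f ∈ N :=
    fun ha hb hcc hd he hf => A12 A N hl hr hc h2 h3 ha hb hcc hd he hf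
  have s23 : ∀ {a b c d e f : B}, a ∈ A → b ∈ A → c ∈ A → d ∈ A → e ∈ A → f ∈ A → a*b*c*d*e*f + a*c*b*d*e*f ∈ N := by
    intro a b c d e f ha hb hcc hd he hf
    have := (UVW A N hl hr hc h2 h3 ha hd he hf (add_mem hb hcc)).1
    convert sub_mem (sub_mem this (UVW A N hl hr hc h2 h3 ha hd he hf hb).1) (UVW A N hl hr hc h2 h3 ha hd he hf hcc).1 using 1
    noncomm_ring
  have s34 : ∀ {a b c d e f : B}, a ∈ A → b ∈ A → c ∈ A → d ∈ A → e ∈ A → f ∈ A → a*b*c*d*e*f + a*b*d*c*e*f ∈ N := by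
    intro a b c d e f ha hb hcc hd he hf
    have := (UVW A N hl hr hc h2 h3 ha hb he hf (add_mem hcc hd)).2.1
    convert sub_mem (sub_mem this (UVW A N hl hr hc h2 h3 ha hb he hf hcc).2.1) (UVW A N hl hr hc h2 h3 ha hb he hf hd).2.1 using 1
    noncomm_ring
  have s45 : ∀ {a b c d e f : B}, a ∈ A → b ∈ A → c ∈ A → d ∈ A → e ∈ A → f ∈ A → a*b*c*d*e*f + a*b*c*e*d*f ∈ N := by
    intro a b c d e f ha hb hcc hd he hf
    have := (UVW A N hl hr hc h2 h3 ha hb hcc hf (add_mem hd he)).2.2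
    convert sub_mem (sub_mem this (UVW A N hl hr hc h2 h3 ha hb hcc hf hd).2.2) (UVW A N hl hr hc h2 h3 ha hb hcc hf he).2.2 using 1
    noncomm_ring
  -- block swaps
  have e1 : ∀ {a b c d e f : B}, a ∈ A → b ∈ A → c ∈ A → d ∈ A → e ∈ A → f ∈ A → a*b*e*c*d*f - a*b*c*d*e*f ∈ N := by
    intro a b c d e f ha hb hcc hd he hf
    convert sub_mem (s34 ha hb he hcc hd hf) (s45 ha hb hcc he hd hf) using 1; abel
  have e2 : ∀ {a b c d e f : B}, a ∈ A → b ∈ A → c ∈ A → d ∈ A → e ∈ A → f ∈ A → c*d*a*b*e*f - a*b*c*d*e*f ∈ N := by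
    intro a b c d e f ha hb hcc hd he hf
    convert sub_mem (add_mem (sub_mem (s23 hcc hd ha hb he hf) (s12 hcc ha hd hb he hf)) (s34 ha hcc hd hb he hf))
      (s23 ha hcc hb hd he hf) using 1; abel
  have e3 : ∀ {a b c d e f : B}, a ∈ A → b ∈ A → c ∈ A → d ∈ A → e ∈ A → f ∈ A → e*a*b*c*d*f - a*b*e*c*d*f ∈ N := by
    intro a b c d e f ha hb hcc hd he hf
    convert sub_mem (s12 he ha hb hcc hd hf) (s23 ha he hb hcc hd hf) using 1; abel
  have p := hr _ hf _ (P3 A N hc (mul_mem ha hb) (mul_mem hcc hd) he)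
  have t1 := e1 ha hb hcc hd he hf
  have t2 := e2 ha hb hcc hd he hf
  have t3 := e1 hcc hd ha hb he hf
  have t4 := e3 ha hb hcc hd he hf
  have t5 := e3 hcc hd ha hb he hf
  apply h2; apply h3
  -- P = T + T1 + cdabe + cdeab + eabcd + ecdab
  have fin := sub_mem (sub_mem (sub_mem (sub_mem (sub_mem p t1) t2) (add_mem t3 t2)) (add_mem t4 t1)) (add_mem t5 (add_mem t3 t2))
  convert fin using 1
  noncomm_ring
end
end NH

namespace Fr
section
variable {F : Type} [Field F] {d : ℕ}

lemma act_hom (g : Matrix (Fin 3) (Fin 3) F) (f : Rpoly F d) (n : ℕ) (hf : f.IsHomogeneous n) :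
    (actHom F d g f).IsHomogeneous n := by
  have := hf.aeval (n := 1) (fun p : Fin 3 × Fin 3 × Fin d =>
    ((g.map (algebraMap F (Rpoly F d)))ᵀ * genMat F d p.2.2 *
      g.map (algebraMap F (Rpoly F d))) p.1 p.2.1) (by
    intro p
    have hC : ∀ a : F, (C a : Rpoly F d).IsHomogeneous 0 := fun a => isHomogeneous_C _ a
    have hX : ∀ i, (X i : Rpoly F d).IsHomogeneous 1 := fun i => isHomogeneous_X _ i
    have h1 : ∀ (a b : F) i, (C a * X i * C b : Rpoly F d).IsHomogeneous 1 := by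
      intro a b i
      exact ((hC a).mul (hX i)).mul (hC b)
    simp only [mul3, transpose_apply, map_apply, genMat, of_apply, algebraMap_eq, add_mul]
    exact ((((h1 _ _ _).add (h1 _ _ _)).add (h1 _ _ _)).add
      (((h1 _ _ _).add (h1 _ _ _)).add (h1 _ _ _))).add (((h1 _ _ _).add (h1 _ _ _)).add (h1 _ _ _)))
  rwa [one_mul] at this

lemma act_comp (g : Matrix (Fin 3) (Fin 3) F) (f : Rpoly F d) (n : ℕ) :
    homogeneousComponent n (actHom F d g f) = actHom F d g (homogeneousComponent n f) := by
  conv_lhs => rw [← sum_homogeneousComponent f, map_sum, map_sum]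
  have : ∀ i, homogeneousComponent n (actHom F d g (homogeneousComponent i f)) =
      if i = n then actHom F d g (homogeneousComponent n f) else 0 := by
    intro i
    have h := act_hom g _ i (homogeneousComponent_isHomogeneous i f)
    rw [homogeneousComponent_of_mem h]
    by_cases e : i = n
    · subst e; simp
    · simp [e, Ne.symm e]
  simp only [this, Finset.sum_ite_eq', Finset.mem_range]
  split_ifs with h
  · rfl
  · rw [homogeneousComponent_eq_zero _ _ (by omega), map_zero]

lemma comp_inv (f : Rpoly F d) (hf : f ∈ invAlg F d) (n : ℕ) : homogeneousComponent n f ∈ invAlg F d := by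
  intro g hg
  rw [← act_comp, hf g hg]

lemma mem_plus (f : invAlg F d) (h0 : constantCoeff f.1 = 0) : f ∈ plusIdeal F d := by
  have e : f = ∑ i ∈ Finset.range (f.1.totalDegree + 1), (⟨homogeneousComponent i f.1, comp_inv f.1 f.2 i⟩ : invAlg F d) := by
    apply Subtype.ext
    rw [AddSubmonoidClass.coe_finsetSum]
    exact (sum_homogeneousComponent f.1).symm
  rw [e]
  apply sum_mem
  intro i _
  rcases Nat.eq_zero_or_pos i with rfl | hi
  · have : (⟨homogeneousComponent 0 f.1, comp_inv f.1 f.2 0⟩ : invAlg F d) = 0 := by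
      apply Subtype.ext
      simp only [homogeneousComponent_zero]
      rw [← constantCoeff_eq, h0, C_0]; rfl
    rw [this]; exact zero_mem _
  · exact Ideal.subset_span ⟨i, hi, homogeneousComponent_isHomogeneous _ _⟩

variable (F d) in
/-- positive equivariant matrices -/
def Apos : NonUnitalSubring (Matrix (Fin 3) (Fin 3) (Rpoly F d)) where
  carrier := {m | (∀ g : Matrix (Fin 3) (Fin 3) F, gᵀ * g = 1 → m.map (actHom F d g) =
    (g.map C)ᵀ * m * g.map C) ∧ ∀ i j, constantCoeff (m i j) = 0}
  add_mem' := by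
    rintro a b ⟨ha, ha'⟩ ⟨hb, hb'⟩
    refine ⟨fun g hg => ?_, fun i j => by simp [ha', hb']⟩
    rw [mul_add, add_mul, ← ha g hg, ← hb g hg]
    ext i j; simp
  zero_mem' := ⟨fun g hg => by ext i j; simp, fun i j => by simp⟩
  neg_mem' := by
    rintro a ⟨ha, ha'⟩
    refine ⟨fun g hg => ?_, fun i j => by simp [ha']⟩
    rw [mul_neg, neg_mul, ← ha g hg]
    ext i j; simp
  mul_mem' := by
    rintro a b ⟨ha, ha'⟩ ⟨hb, hb'⟩
    refine ⟨fun g hg => ?_, fun i j => by simp [mul3, ha', hb']⟩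
    have h1 : (a * b).map (actHom F d g) = a.map (actHom F d g) * b.map (actHom F d g) := by
      ext i j; simp [mul3]
    have h2 : g.map C * (g.map C)ᵀ = (1 : Matrix (Fin 3) (Fin 3) (Rpoly F d)) := by
      have h3 := mul_eq_one_comm.mp hg
      have := congrArg (fun m : Matrix (Fin 3) (Fin 3) F => m.map (C : F →+* Rpoly F d)) h3
      have h1 : (1 : Matrix (Fin 3) (Fin 3) F).map (C : F →+* Rpoly F d) = 1 := Matrix.map_one _ C_0 C_1
      simpa [Matrix.map_mul, transpose_map, h1] using this
    rw [h1, ha g hg, hb g hg]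
    calc _ = (g.map C)ᵀ * a * (g.map C * (g.map C)ᵀ) * b * g.map C := by simp only [mul_assoc]
      _ = _ := by rw [h2, mul_one]; simp only [mul_assoc]

lemma gCC (g : Matrix (Fin 3) (Fin 3) F) (hg : gᵀ * g = 1) : g.map C * (g.map C)ᵀ = (1 : Matrix (Fin 3) (Fin 3) (Rpoly F d)) := by
  have h3 := mul_eq_one_comm.mp hg
  have := congrArg (fun m : Matrix (Fin 3) (Fin 3) F => m.map (C : F →+* Rpoly F d)) h3
  have h1 : (1 : Matrix (Fin 3) (Fin 3) F).map (C : F →+* Rpoly F d) = 1 := Matrix.map_one _ C_0 C_1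
  simpa [Matrix.map_mul, transpose_map, h1] using this

lemma tr_inv (m) (hm : m ∈ Apos F d) : m.trace ∈ invAlg F d := by
  intro g hg
  have : actHom F d g m.trace = (m.map (actHom F d g)).trace := by simp [trace]
  rw [this, hm.1 g hg, mul_assoc, trace_mul_comm, mul_assoc, gCC g hg, mul_one]

lemma det_inv (m) (hm : m ∈ Apos F d) : m.det ∈ invAlg F d := by
  intro g hg
  have : actHom F d g m.det = (m.map (actHom F d g)).det := by
    rw [AlgHom.map_det]; rfl
  rw [this, hm.1 g hg, mul_assoc, det_mul_comm, mul_assoc, gCC g hg, mul_one]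

lemma E2_inv (h2 : (2:F) ≠ 0) (m) (hm : m ∈ Apos F d) : E2 m ∈ invAlg F d := by
  have e : E2 m = C (2:F)⁻¹ * (m.trace ^ 2 - (m * m).trace) := by
    rw [E2_eq]
    have : (C (2:F)⁻¹ : Rpoly F d) * 2 = 1 := by
      rw [show (2 : Rpoly F d) = C (2:F) from (map_ofNat C 2).symm, ← C_mul, inv_mul_cancel₀ h2, C_1]
    linear_combination (-E2 m) * this
  rw [e]
  exact mul_mem (Subalgebra.algebraMap_mem _ _) (sub_mem (pow_mem (tr_inv m hm) 2) (tr_inv _ (mul_mem hm hm)))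

lemma tr_0 (m) (hm : m ∈ Apos F d) : constantCoeff m.trace = 0 := by
  simp [trace, hm.2]
lemma E2_0 (m) (hm : m ∈ Apos F d) : constantCoeff (E2 m) = 0 := by
  simp [E2, hm.2]
lemma det_0 (m) (hm : m ∈ Apos F d) : constantCoeff m.det = 0 := by
  simp [det_fin_three, hm.2]

variable (F d) in
noncomputable def DecG : AddSubgroup (Rpoly F d) :=
  ((plusIdeal F d ^ 2 : Ideal (invAlg F d)).toAddSubgroup).map (invAlg F d).subtype.toAddMonoidHom

lemma mem_DecG (p : Rpoly F d) : p ∈ DecG F d ↔ p ∈ decompSet F d := by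
  rfl

lemma dec_mul (p q : Rpoly F d) (hp : p ∈ invAlg F d) (hq : q ∈ invAlg F d) (hp0 : constantCoeff p = 0)
    (hq0 : constantCoeff q = 0) : p * q ∈ DecG F d := by
  refine ⟨⟨p, hp⟩ * ⟨q, hq⟩, ?_, rfl⟩
  change _ ∈ plusIdeal F d ^ 2
  rw [pow_two]
  exact Ideal.mul_mem_mul (mem_plus _ hp0) (mem_plus _ hq0)

lemma dec_smul (p q : Rpoly F d) (hp : p ∈ invAlg F d) (hq : q ∈ DecG F d) : p * q ∈ DecG F d := by
  obtain ⟨q', hq', rfl⟩ := hq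
  exact ⟨⟨p, hp⟩ * q', Ideal.mul_mem_left (plusIdeal F d ^ 2) _ hq', rfl⟩

lemma dec_div (c : ℕ) (hc : (c:F) ≠ 0) (p : Rpoly F d) (h : (c : Rpoly F d) * p ∈ DecG F d) : p ∈ DecG F d := by
  have := dec_smul (C (c:F)⁻¹) _ (Subalgebra.algebraMap_mem _ _) h
  rwa [← mul_assoc, show ((c : ℕ) : Rpoly F d) = C (c:F) from (map_natCast C c).symm, ← C_mul, inv_mul_cancel₀ hc, C_1, one_mul] at this

variable (F d) in
noncomputable def NN : AddSubgroup (Matrix (Fin 3) (Fin 3) (Rpoly F d)) where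
  carrier := {m | ∀ a ∈ Apos F d, (m * a).trace ∈ DecG F d}
  add_mem' := by
    intro x y hx hy a ha
    rw [add_mul, trace_add]; exact add_mem (hx a ha) (hy a ha)
  zero_mem' := by intro a ha; simp [zero_mem]
  neg_mem' := by
    intro x hx a ha
    rw [neg_mul, trace_neg]; exact neg_mem (hx a ha)

lemma six (h2 : (2:F) ≠ 0) (h3 : (3:F) ≠ 0) {a b c e f g m : Matrix (Fin 3) (Fin 3) (Rpoly F d)} (ha : a ∈ Apos F d) (hb : b ∈ Apos F d)
    (hc : c ∈ Apos F d) (he : e ∈ Apos F d) (hf : f ∈ Apos F d) (hg : g ∈ Apos F d) (hm : m ∈ Apos F d) :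
    (a*b*c*e*f*g*m).trace ∈ DecG F d := by
  refine NH.nh6 (Apos F d) (NN F d) ?_ ?_ ?_ ?_ ?_ ha hb hc he hf hg m hm
  · intro a ha m hm b hb
    rw [mul_assoc, trace_mul_comm, mul_assoc]; exact hm _ (mul_mem hb ha)
  · intro a ha m hm b hb
    rw [mul_assoc]; exact hm _ (mul_mem ha hb)
  · intro x hx a ha
    have e : (x * x * x * a).trace = x.trace * (x * x * a).trace - E2 x * (x * a).trace + x.det * a.trace := by
      rw [CH3]; simp [add_mul, sub_mul]
    rw [e]
    have hxa := mul_mem hx ha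
    have hxxa := mul_mem (mul_mem hx hx) ha
    exact add_mem (sub_mem (dec_mul _ _ (tr_inv _ hx) (tr_inv _ hxxa) (tr_0 _ hx) (tr_0 _ hxxa))
      (dec_mul _ _ (E2_inv h2 _ hx) (tr_inv _ hxa) (E2_0 _ hx) (tr_0 _ hxa)))
      (dec_mul _ _ (det_inv _ hx) (tr_inv _ ha) (det_0 _ hx) (tr_0 _ ha))
  · intro m hm a ha
    apply dec_div 2 (by exact_mod_cast h2)
    convert hm a ha using 1
    rw [add_mul, trace_add]; push_cast; ring
  · intro m hm a ha
    apply dec_div 3 (by exact_mod_cast h3)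
    convert hm a ha using 1
    rw [add_mul, add_mul, trace_add, trace_add]; push_cast; ring

lemma let_pos (m) (hm : m ∈ lets F d) : m ∈ Apos F d := by
  have e1 : ∀ (k) (g : Matrix (Fin 3) (Fin 3) F), (genMat F d k).map (actHom F d g) = (g.map C)ᵀ * genMat F d k * g.map C := by
    intro k g
    ext1 i j
    simp only [map_apply, genMat, of_apply, actHom, aeval_X, algebraMap_eq]
  have e2 : ∀ (k) (g : Matrix (Fin 3) (Fin 3) F), (genMat F d k)ᵀ.map (actHom F d g) = (g.map C)ᵀ * (genMat F d k)ᵀ * g.map C := by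
    intro k g
    have := congrArg transpose (e1 k g)
    refine Eq.trans this ?_
    simp only [transpose_mul, transpose_transpose, mul_assoc]
  obtain ⟨k, rfl | rfl⟩ := hm
  · refine ⟨fun g hg => ?_, fun i j => by simp [genMat]⟩
    rw [mul_add, add_mul, ← e1, ← e2]; ext i j; simp
  · refine ⟨fun g hg => ?_, fun i j => by simp [genMat]⟩
    rw [mul_sub, sub_mul, ← e1, ← e2]; ext i j; simp

lemma let_hom (m) (hm : m ∈ lets F d) (i j) : (m i j).IsHomogeneous 1 := by
  obtain ⟨k, rfl | rfl⟩ := hm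
  · exact (isHomogeneous_X _ _).add (isHomogeneous_X _ _)
  · exact (isHomogeneous_X _ _).sub (isHomogeneous_X _ _)

lemma list_hom (l : List (Matrix (Fin 3) (Fin 3) (Rpoly F d))) (hl : ∀ m ∈ l, m ∈ lets F d) (i j) :
    (l.prod i j).IsHomogeneous l.length := by
  induction l generalizing i j with
  | nil =>
    by_cases h : i = j
    · simp [h, isHomogeneous_one]
    · simp [h, isHomogeneous_zero]
  | cons a t ih =>
    have h1 := let_hom a (hl a (by simp))
    have h2 := ih (fun m hm => hl m (by simp [hm]))
    have h3 : ∀ k, (a i k * t.prod k j).IsHomogeneous (t.length + 1) := fun k => by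
      rw [add_comm]; exact (h1 _ _).mul (h2 _ _)
    rw [List.prod_cons, mul3, List.length_cons]
    exact ((h3 _).add (h3 _)).add (h3 _)

lemma list_pos (l : List (Matrix (Fin 3) (Fin 3) (Rpoly F d))) (hl : ∀ m ∈ l, m ∈ lets F d) (h0 : l ≠ []) :
    l.prod ∈ Apos F d := by
  induction l with
  | nil => exact absurd rfl h0
  | cons a t ih =>
    have ha := let_pos a (hl a (by simp))
    rcases t with _ | ⟨b, t⟩
    · simpa using ha
    · rw [List.prod_cons]
      exact mul_mem ha (ih (fun m hm => hl m (by simp [hm])) (by simp))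

lemma list_dec (h2 : (2:F) ≠ 0) (h3 : (3:F) ≠ 0) (l : List (Matrix (Fin 3) (Fin 3) (Rpoly F d))) (hl : ∀ m ∈ l, m ∈ lets F d) (h0 : 7 ≤ l.length) :
    l.prod.trace ∈ DecG F d := by
  match l, hl, h0 with
  | a::b::c::e::f::g::h::t, hl, _ =>
    have hp := fun m hm => let_pos m (hl m hm)
    have := six h2 h3 (hp a (by simp)) (hp b (by simp)) (hp c (by simp)) (hp e (by simp)) (hp f (by simp)) (hp g (by simp))
      (list_pos (h::t) (fun m hm => hl m (by simp only [List.mem_cons] at hm ⊢; tauto)) (by simp))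
    simpa only [List.prod_cons, mul_assoc] using this

lemma mono_dec (h2 : (2:F) ≠ 0) (h3 : (3:F) ≠ 0) (p : Rpoly F d) (hp : p ∈ Submonoid.closure {t | ∃ w ∈ wds F d, t = w.trace}) :
    ∃ n, p.IsHomogeneous n ∧ p ∈ invAlg F d ∧ (7 ≤ n → p ∈ DecG F d) := by
  induction hp using Submonoid.closure_induction with
  | mem p hp =>
    obtain ⟨w, hw, rfl⟩ := hp
    obtain ⟨l, hl, rfl⟩ := Submonoid.exists_list_of_mem_closure hw
    refine ⟨l.length, ?_, ?_, list_dec h2 h3 l hl⟩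
    · rw [trace]; exact IsHomogeneous.sum _ _ _ fun i _ => list_hom l hl i i
    · by_cases h : l = []
      · subst h; simp only [List.prod_nil, trace_one]
        exact natCast_mem _ _
      · exact tr_inv _ (list_pos l hl h)
  | one => exact ⟨0, isHomogeneous_one _ _, one_mem _, by omega⟩
  | mul p q _ _ ihp ihq =>
    obtain ⟨n, h1, h2, h3⟩ := ihp
    obtain ⟨n', h1', h2', h3'⟩ := ihq
    refine ⟨n + n', h1.mul h1', mul_mem h2 h2', fun h => ?_⟩
    have cc : ∀ {n : ℕ} {p : Rpoly F d}, p.IsHomogeneous n → n ≠ 0 → constantCoeff p = 0 := by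
      intro n p hp hn
      rw [constantCoeff_eq]
      apply hp.coeff_eq_zero
      simpa using hn.symm
    by_cases hn : n = 0
    · exact dec_smul _ _ h2 (h3' (by omega))
    · by_cases hn' : n' = 0
      · rw [mul_comm]; exact dec_smul _ _ h2' (h3 (by omega))
      · exact dec_mul _ _ h2 h2' (cc h1 hn) (cc h1' hn')

theorem upper [Infinite F] (h2 : (2:F) ≠ 0) (h3 : (3:F) ≠ 0) (f : Rpoly F d) (hf : f ∈ invAlg F d) (n : ℕ)
    (hn : f.IsHomogeneous n) (h7 : 7 ≤ n) : f ∈ decompSet F d := by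
  have h := inv_TR h2 h3 f hf n hn
  rw [TR, ← Subalgebra.mem_toSubmodule, Algebra.adjoin_eq_span] at h
  rw [← mem_DecG]
  have : homogeneousComponent n f ∈ DecG F d := by
    clear hf hn
    induction h using Submodule.span_induction with
    | mem p hp =>
      obtain ⟨m, h1, _, h4⟩ := mono_dec h2 h3 p hp
      rw [homogeneousComponent_of_mem h1]
      split_ifs with e
      · exact h4 (by omega)
      · exact zero_mem _
    | zero => rw [map_zero]; exact zero_mem _
    | add p q _ _ hp hq => rw [map_add]; exact add_mem hp hq
    | smul c p _ hp => 
      rw [map_smul, smul_eq_C_mul]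
      exact dec_smul _ _ (Subalgebra.algebraMap_mem _ _) hp
  rwa [homogeneousComponent_of_mem hn, if_pos rfl] at this
end
end Fr

namespace Fr
section
variable {F : Type} [Field F] {d : ℕ}

variable (F d) in
noncomputable def th : Rpoly F d →ₐ[F] Rpoly F d := aeval fun p => X (p.2.1, p.1, p.2.2)

abbrev QQ (F : Type) [Field F] := MvPolynomial (Fin 3 ⊕ Fin 3) F

variable (F) in
noncomputable def YY : Matrix (Fin 3) (Fin 3) (QQ F) :=
  !![X (Sum.inl 0), -X (Sum.inr 2), X (Sum.inr 1);
     X (Sum.inr 2), X (Sum.inl 1), -X (Sum.inr 0);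
     -X (Sum.inr 1), X (Sum.inr 0), X (Sum.inl 2)]

variable (F d) in
noncomputable def ps : Rpoly F d →ₐ[F] QQ F := aeval fun p => YY F p.1 p.2.1

lemma th_act (g : Matrix (Fin 3) (Fin 3) F) : (th F d).comp (actHom F d g) = (actHom F d g).comp (th F d) := by
  apply MvPolynomial.algHom_ext
  intro p
  simp [th, actHom, mul3, genMat]
  ring

lemma th_th (p : Rpoly F d) : th F d (th F d p) = p := by
  have : (th F d).comp (th F d) = AlgHom.id F _ := by
    apply MvPolynomial.algHom_ext
    intro p; simp [th]
  exact DFunLike.congr_fun this p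

lemma th_inv (p : Rpoly F d) (hp : p ∈ invAlg F d) : th F d p ∈ invAlg F d := by
  intro g hg
  have := DFunLike.congr_fun (th_act (d := d) g) p
  simp only [AlgHom.comp_apply] at this
  rw [← this, hp g hg]

lemma th_cc (p : Rpoly F d) : constantCoeff (th F d p) = constantCoeff p := by
  have : (constantCoeff : Rpoly F d →+* F).comp (th F d : Rpoly F d →+* Rpoly F d) = constantCoeff := by
    apply MvPolynomial.ringHom_ext
    · intro r; simp [th]
    · intro p; simp [th]
  exact DFunLike.congr_fun this p

lemma ps_cc (p : Rpoly F d) : constantCoeff (ps F d p) = constantCoeff p := by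
  have : (constantCoeff : QQ F →+* F).comp (ps F d : Rpoly F d →+* QQ F) = constantCoeff := by
    apply MvPolynomial.ringHom_ext
    · intro r; simp [ps]
    · intro p
      obtain ⟨i, j, k⟩ := p
      fin_cases i <;> fin_cases j <;> simp [ps, YY]
  exact DFunLike.congr_fun this p

/-- sign hom -/
noncomputable def eta (i : Fin 3) : QQ F →ₐ[F] QQ F := aeval fun v => if v = Sum.inr i then - X v else X v

lemma coeff_eta (i : Fin 3) (h : QQ F) (m) : coeff m (eta i h) = (-1) ^ (m (Sum.inr i)) * coeff m h := by
  classical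
  induction h using MvPolynomial.induction_on generalizing m with
  | C a =>
    simp only [eta, algHom_C, algebraMap_eq, coeff_C]
    split_ifs with e
    · subst e; simp
    · simp
  | add p q hp hq => rw [map_add, coeff_add, coeff_add, hp, hq, mul_add]
  | mul_X p v hp =>
    rw [_root_.map_mul]
    have e : eta i (X v : QQ F) = if v = Sum.inr i then - X v else X v := by simp [eta]
    rw [e]
    split_ifs with hv
    · subst hv
      rw [mul_neg, coeff_neg, coeff_mul_X', coeff_mul_X']
      split_ifs with hs
      · rw [hp]
        have h1 : m (Sum.inr i) ≠ 0 := by simpa using hs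
        obtain ⟨n, hn⟩ := Nat.exists_eq_succ_of_ne_zero h1
        simp [hn, pow_succ]
      · simp
    · rw [coeff_mul_X', coeff_mul_X']
      split_ifs with hs
      · rw [hp]
        simp [Finsupp.single_apply, hv]
      · simp

noncomputable def sgm (i : Fin 3) : Matrix (Fin 3) (Fin 3) F := diagonal fun j => if j = i then -1 else 1

lemma sgm_o (i : Fin 3) : (sgm i : Matrix (Fin 3) (Fin 3) F)ᵀ * sgm i = 1 := by
  rw [sgm, diagonal_transpose, diagonal_mul_diagonal, ← diagonal_one]
  congr 1; funext j; split_ifs <;> simp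

lemma sgm_comp (i : Fin 3) : (ps F d).comp ((th F d).comp (actHom F d (sgm i))) = (eta i).comp (ps F d) := by
  apply MvPolynomial.algHom_ext
  rintro ⟨a, b, k⟩
  fin_cases i <;> fin_cases a <;> fin_cases b <;>
    simp [ps, th, actHom, mul3, genMat, YY, eta, sgm, diagonal_apply]

noncomputable def swm (i j : Fin 3) : Matrix (Fin 3) (Fin 3) F := Matrix.of fun a b => if a = Equiv.swap i j b then 1 else 0

lemma swm_o (i j : Fin 3) : (swm i j : Matrix (Fin 3) (Fin 3) F)ᵀ * swm i j = 1 := by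
  ext a b
  simp [swm, mul_apply, one_apply]
  by_cases h : a = b <;> simp [h, eq_comm]

set_option maxHeartbeats 2000000 in
lemma yy_sw (i j : Fin 3) (hij : i ≠ j) (a b : Fin 3) : YY F (Equiv.swap i j b) (Equiv.swap i j a) =
    rename (Equiv.sumCongr (Equiv.swap i j) (Equiv.swap i j)) (YY F a b) := by
  fin_cases i <;> fin_cases j <;> first | (exact absurd rfl hij) | skip
  all_goals fin_cases a <;> fin_cases b <;>
    simp [YY, Equiv.swap_apply_def]

lemma swm_conj {A : Type} [CommRing A] [Algebra F A] (i j : Fin 3) (M : Matrix (Fin 3) (Fin 3) A) (a b : Fin 3) :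
    (((swm i j : Matrix (Fin 3) (Fin 3) F).map (algebraMap F A))ᵀ * M * (swm i j : Matrix (Fin 3) (Fin 3) F).map (algebraMap F A)) a b
     = M (Equiv.swap i j a) (Equiv.swap i j b) := by
  simp [mul_apply, swm, apply_ite (algebraMap F A)]

lemma swm_comp (i j : Fin 3) (hij : i ≠ j) : (ps F d).comp ((th F d).comp (actHom F d (swm i j))) =
    (rename (Equiv.sumCongr (Equiv.swap i j) (Equiv.swap i j))).comp (ps F d) := by
  apply MvPolynomial.algHom_ext
  rintro ⟨a, b, k⟩
  have e : actHom F d (swm i j) (X (a, b, k)) = X (Equiv.swap i j a, Equiv.swap i j b, k) := by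
    rw [actHom, aeval_X]
    have := swm_conj (F := F) i j (genMat F d k) a b
    simpa [genMat] using this
  simp only [AlgHom.comp_apply]
  rw [e, th, aeval_X, ps, aeval_X, aeval_X]
  exact yy_sw i j hij a b

lemma odd_low (h2 : (2:F) ≠ 0) (p : Rpoly F d) (hp : p ∈ invAlg F d) (ho : th F d p = -p) (m) (hm : m.degree ≤ 5) :
    coeff m (ps F d p) = 0 := by
  have self0 : ∀ c : F, c = -c → c = 0 := by
    intro c hc
    have : 2 * c = 0 := by linear_combination hc
    exact (mul_eq_zero.mp this).resolve_left h2
  by_contra hne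
  have hodd : ∀ i, Odd (m (Sum.inr i)) := by
    intro i
    by_contra hev
    rw [Nat.not_odd_iff_even] at hev
    apply hne; apply self0
    have := DFunLike.congr_fun (sgm_comp (F := F) (d := d) i) p
    simp only [AlgHom.comp_apply] at this
    rw [hp _ (sgm_o i), ho, map_neg] at this
    have h := congrArg (coeff m) this
    rw [coeff_eta, hev.neg_one_pow, one_mul, coeff_neg] at h
    exact h.symm
  have hsw : ∀ i j, i ≠ j → ¬ (m (Sum.inl i) = m (Sum.inl j) ∧ m (Sum.inr i) = m (Sum.inr j)) := by
    rintro i j hij ⟨e1, e2⟩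
    apply hne; apply self0
    have := DFunLike.congr_fun (swm_comp (F := F) (d := d) i j hij) p
    simp only [AlgHom.comp_apply] at this
    rw [hp _ (swm_o i j), ho, map_neg] at this
    have h := congrArg (coeff m) this
    have em : m.mapDomain (Equiv.sumCongr (Equiv.swap i j) (Equiv.swap i j)) = m := by
      ext v
      rw [Finsupp.mapDomain_equiv_apply]
      rcases v with v | v <;> simp only [Equiv.sumCongr_symm, Equiv.symm_swap, Equiv.sumCongr_apply, Sum.map_inl, Sum.map_inr, Equiv.swap_apply_def]
      · split_ifs with h1 h2
        · rw [h1, e1]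
        · rw [h2, e1]
        · rfl
      · split_ifs with h1 h2
        · rw [h1, e2]
        · rw [h2, e2]
        · rfl
    conv_rhs at h => rw [← em]
    rw [coeff_rename_mapDomain _ (Equiv.injective _), coeff_neg] at h
    exact h.symm
  have hd : m.degree = ∑ v, m v := by
    rw [Finsupp.degree_apply]
    apply Finset.sum_subset (Finset.subset_univ _)
    intro v _ hv; simpa using hv
  rw [hd, Fintype.sum_sum_type, Fin.sum_univ_three, Fin.sum_univ_three] at hm
  obtain ⟨b0, h0⟩ := hodd 0
  obtain ⟨b1, h1⟩ := hodd 1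
  obtain ⟨b2, h22⟩ := hodd 2
  have s01 := hsw 0 1 (by decide)
  have s02 := hsw 0 2 (by decide)
  have s12 := hsw 1 2 (by decide)
  omega

def low (n : ℕ) (h : QQ F) : Prop := ∀ m : (Fin 3 ⊕ Fin 3) →₀ ℕ, m.degree ≤ n → coeff m h = 0

lemma low_add {n} {h h' : QQ F} (a : low n h) (b : low n h') : low n (h + h') := fun m hm => by
  rw [coeff_add, a m hm, b m hm, add_zero]

lemma low_mul {h h' : QQ F} (a : low 5 h) (b : constantCoeff h' = 0) : low 6 (h * h') := by
  intro m hm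
  classical
  rw [coeff_mul]
  apply Finset.sum_eq_zero
  rintro ⟨x, y⟩ hxy
  rw [Finset.HasAntidiagonal.mem_antidiagonal] at hxy
  simp only at hxy ⊢
  by_cases hy : y = 0
  · subst hy; rw [constantCoeff_eq] at b; rw [b, mul_zero]
  · rw [a x, zero_mul]
    have : y.degree ≠ 0 := by rwa [Ne, Finsupp.degree_eq_zero_iff]
    rw [← hxy, map_add] at hm
    omega

lemma plus_cc (p : invAlg F d) (hp : p ∈ plusIdeal F d) : constantCoeff p.1 = 0 := by
  have : plusIdeal F d ≤ RingHom.ker ((constantCoeff : Rpoly F d →+* F).comp ((invAlg F d).val : invAlg F d →+* Rpoly F d)) := by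
    apply Ideal.span_le.mpr
    rintro p ⟨n, hn, h⟩
    simp only [SetLike.mem_coe, RingHom.mem_ker, RingHom.comp_apply]
    change constantCoeff p.1 = 0
    rw [constantCoeff_eq]
    apply h.coeff_eq_zero
    simpa using hn.ne
  exact this hp

lemma dec_low (h2 : (2:F) ≠ 0) (p : Rpoly F d) (hp : p ∈ decompSet F d) : low 6 (ps F d (p - th F d p)) := by
  obtain ⟨p, hp, rfl⟩ := hp
  change p ∈ plusIdeal F d ^ 2 at hp
  rw [pow_two] at hp
  have main : ∀ p q : Rpoly F d, p ∈ invAlg F d → constantCoeff q = 0 → low 6 (ps F d ((p - th F d p) * q)) := by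
    intro p q hp hq
    rw [_root_.map_mul]
    apply low_mul
    · intro m hm
      refine odd_low h2 _ (sub_mem hp (th_inv p hp)) ?_ m hm
      rw [map_sub, th_th]; ring
    · rw [ps_cc, hq]
  induction hp using Submodule.mul_induction_on' with
  | mem_mul_mem p hp q hq =>
    have e : (p * q : invAlg F d).1 - th F d (p * q : invAlg F d).1 = (p.1 - th F d p.1) * q.1 + (q.1 - th F d q.1) * th F d p.1 := by
      simp; ring
    rw [e, map_add]
    exact low_add (main _ _ p.2 (plus_cc q hq)) (main _ _ q.2 (by rw [th_cc]; exact plus_cc p hp))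
  | add p _ q _ hp hq =>
    have e : (p + q : invAlg F d).1 - th F d (p + q : invAlg F d).1 = (p.1 - th F d p.1) + (q.1 - th F d q.1) := by
      simp; ring
    rw [e, map_add]
    exact low_add hp hq

noncomputable def SS8 (k : Fin d) := genMat F d k + (genMat F d k)ᵀ
noncomputable def TT8 (k : Fin d) := genMat F d k - (genMat F d k)ᵀ
noncomputable def LL8 (k : Fin d) : List (Matrix (Fin 3) (Fin 3) (Rpoly F d)) := [SS8 k, SS8 k, TT8 k, TT8 k, SS8 k, TT8 k]

lemma LL_let (k : Fin d) : ∀ m ∈ LL8 (F := F) k, m ∈ lets F d := by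
  intro m hm
  have : m = SS8 k ∨ m = TT8 k := by simp [LL8] at hm; tauto
  rcases this with rfl | rfl
  · exact ⟨k, Or.inl rfl⟩
  · exact ⟨k, Or.inr rfl⟩

lemma th_LL (k : Fin d) : th F d (LL8 k).prod.trace = -(LL8 k).prod.trace := by
  have hS : (SS8 (F := F) k).map (th F d) = SS8 k := by
    ext1 i j; simp [SS8, genMat, th, add_comm]
  have hT : (TT8 (F := F) k).map (th F d) = - TT8 k := by
    ext1 i j; simp [TT8, genMat, th]
  have hm : ∀ a b : Matrix (Fin 3) (Fin 3) (Rpoly F d), (a * b).map (th F d) = a.map (th F d) * b.map (th F d) := by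
    intro a b; ext1 i j; simp [mul3]
  have ht : ∀ a : Matrix (Fin 3) (Fin 3) (Rpoly F d), th F d a.trace = (a.map (th F d)).trace := by
    intro a; simp [trace]
  rw [ht]
  simp only [LL8, List.prod_cons, List.prod_nil, mul_one, hm, hS, hT]
  simp only [mul_neg, neg_mul, neg_neg, trace_neg]

theorem lower (h2 : (2:F) ≠ 0) (hd : 1 ≤ d) : ∃ f : Rpoly F d, f ∈ invAlg F d ∧
      MvPolynomial.IsHomogeneous f 6 ∧ f ∉ decompSet F d := by
  let k : Fin d := ⟨0, hd⟩
  have hom : (LL8 (F := F) k).prod.trace.IsHomogeneous 6 := by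
    rw [trace]; exact IsHomogeneous.sum _ _ _ fun i _ => list_hom (LL8 k) (LL_let k) i i
  refine ⟨(LL8 k).prod.trace, tr_inv _ (list_pos _ (LL_let k) (by simp [LL8])), hom, ?_⟩
  intro hdec
  have hl := dec_low h2 _ hdec
  rw [th_LL, sub_neg_eq_add, map_add] at hl
  have hz : ps F d (LL8 k).prod.trace = 0 := by
    have hh : (ps F d (LL8 k).prod.trace).IsHomogeneous (1 * 6) := by
      apply hom.aeval
      rintro ⟨i, j, k⟩
      fin_cases i <;> fin_cases j <;> simp [YY] <;> first | exact isHomogeneous_X _ _ | exact (isHomogeneous_X _ _).neg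
    ext m
    rw [coeff_zero]
    by_cases hm : m.degree = 6
    · have := hl m hm.le
      rw [coeff_add] at this
      have : 2 * coeff m (ps F d (LL8 k).prod.trace) = 0 := by linear_combination this
      exact (mul_eq_zero.mp this).resolve_left h2
    · exact hh.coeff_eq_zero (by simpa using hm)
  have he := congrArg (eval (Sum.elim ![0, 1, -1] ![1, 1, 1])) hz
  let φ : Rpoly F d →+* F := (eval (Sum.elim ![0, 1, -1] ![1, 1, 1]) : QQ F →+* F).comp (ps F d : Rpoly F d →+* QQ F)
  have hS : (SS8 (F := F) k).map φ = !![0,0,0;0,2,0;0,0,-2] := by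
    ext i j; fin_cases i <;> fin_cases j <;> simp [SS8, φ, genMat, ps, YY] <;> norm_num
  have hT : (TT8 (F := F) k).map φ = !![0,-2,2;2,0,-2;-2,2,0] := by
    ext i j; fin_cases i <;> fin_cases j <;> simp [TT8, φ, genMat, ps, YY] <;> norm_num
  have ht : φ (LL8 k).prod.trace = ((LL8 k).prod.map φ).trace := by simp [trace]
  have hm : ∀ a b : Matrix (Fin 3) (Fin 3) (Rpoly F d), (a * b).map φ = a.map φ * b.map φ := by
    intro a b; exact Matrix.map_mul
  change φ (LL8 k).prod.trace = _ at he
  rw [ht] at he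
  simp only [LL8, List.prod_cons, List.prod_nil, mul_one, hm, hS, hT] at he
  have h7 : (2:F) ^ 7 = 0 := by
    simp [trace, Fin.sum_univ_three, mul3] at he
    norm_num at he ⊢
    linear_combination he
  exact h2 (pow_eq_zero_iff (by norm_num) |>.mp h7)
end
end Fr

/-- if `char F ≠ 2, 3` and `d ≥ 1`, then `D_max = 6`: `6` is the greatest degree of
an indecomposable homogeneous `O(3)`-invariant of `d` generic `3×3` matrices. -/
theorem stmt1 (F : Type) [Field F] [Infinite F] (h2 : ringChar F ≠ 2) (h3 : ringChar F ≠ 3)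
    (d : ℕ) (hd : 1 ≤ d) :
    IsGreatest {n : ℕ | ∃ f : Rpoly F d, f ∈ invAlg F d ∧
      MvPolynomial.IsHomogeneous f n ∧ f ∉ decompSet F d} 6 := by
  have h2' : (2:F) ≠ 0 := Ring.two_ne_zero h2
  have h3' : (3:F) ≠ 0 := by
    intro h
    have hdv : ringChar F ∣ 3 := ringChar.dvd (by exact_mod_cast h)
    rcases (Nat.dvd_prime Nat.prime_three).mp hdv with e | e
    · exact CharP.ringChar_ne_one e
    · exact h3 e
  refine ⟨Fr.lower h2' hd, ?_⟩
  rintro n ⟨f, hf, hn, hnd⟩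
  by_contra h
  exact hnd (Fr.upper h2' h3' f hf n hn (by omega))
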